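/- arXiv:2301.09942 — 2 statements merged into one kernel-verified Lean document; each statement's English description precedes it below -/
import Mathlib

section
/- Let λ := Λ(conv{[[0,-2],[1/2,0]], [[0,-1/2],[2,0]]}), define A₀ = [[0,0],[0,-1]], A₁ = [[-1,1],[-1,-1]], B₀ = [[-λ,-2],[1/2,-λ]], B₁ = [[-λ,-1/2],[2,-λ]] in M₂(ℝ), set X₀ = A₀⊗I + I⊗B₀, X₁ = A₀⊗I + I⊗B₁, X₂ = A₁⊗I in M₄(ℝ), where ⊗ is the Kronecker product and I the 2×2 identity, and let 𝖷 = conv{X₀, X₁, X₂}. Then Λ(𝖷) = 0; there exists C > 0 such that every trajectory x of the linear switching system defined by 𝖷 satisfies ‖x(t)‖ ≤ C·‖x(0)‖ for all t ≥ 0 (so the system is marginally stable); and every element of 𝖷 is a Hurwitz matrix. -/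
open MeasureTheory Filter Matrix Kronecker

/-- The Euclidean norm on `n → ℝ`. -/
noncomputable def eNorm {n : Type*} [Fintype n] (v : n → ℝ) : ℝ :=
  Real.sqrt (∑ i, (v i) ^ 2)

/-- The operator norm induced by the Euclidean norm. -/
noncomputable def opNorm {n : Type*} [Fintype n] (M : Matrix n n ℝ) : ℝ :=
  sSup ((fun v => eNorm (M.mulVec v)) '' {v | eNorm v ≤ 1})

/-- `x` is a trajectory of the linear switching system defined by `S`: it is continuous and
satisfies `x t = x 0 + ∫₀ᵗ A s ⬝ x s ds` for all `t ≥ 0`, for some measurable switching law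
`A` taking values in `S` on `[0,∞)`. -/
def IsTrajectory {n : Type*} [Fintype n] (S : Set (Matrix n n ℝ)) (x : ℝ → n → ℝ) : Prop :=
  Continuous x ∧ ∃ A : ℝ → Matrix n n ℝ,
    (∀ i j, Measurable fun s => A s i j) ∧ (∀ s, 0 ≤ s → A s ∈ S) ∧
    (∀ t, 0 ≤ t → IntervalIntegrable (fun s => (A s).mulVec (x s)) volume 0 t) ∧
    (∀ t, 0 ≤ t → x t = x 0 + ∫ s in (0:ℝ)..t, (A s).mulVec (x s))

/-- The topological top Lyapunov exponent
`Λ(S) = lim_{t→∞} sup_x (1/t) log (‖x t‖/‖x 0‖)`, the supremum being over all trajectories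
of the linear switching system defined by `S` with `x 0 ≠ 0`. -/
noncomputable def Lambda {n : Type*} [Fintype n] (S : Set (Matrix n n ℝ)) : ℝ :=
  limUnder atTop fun t : ℝ =>
    sSup {r | ∃ x : ℝ → n → ℝ, IsTrajectory S x ∧ x 0 ≠ 0 ∧
      r = (1 / t) * Real.log (eNorm (x t) / eNorm (x 0))}

/-- `N` is a norm on `n → ℝ`. -/
structure IsNorm {n : Type*} [Fintype n] (N : (n → ℝ) → ℝ) : Prop where
  eq_zero_iff : ∀ v, N v = 0 ↔ v = 0
  smul : ∀ (a : ℝ) (v), N (a • v) = |a| * N v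
  triangle : ∀ v w, N (v + w) ≤ N v + N w

/-- `N` is an extremal norm for `S`: `t ↦ e^{-tΛ(S)} N (x t)` is non-increasing on `[0,∞)`
along every trajectory. -/
def IsExtremalNorm {n : Type*} [Fintype n] (S : Set (Matrix n n ℝ)) (N : (n → ℝ) → ℝ) : Prop :=
  IsNorm N ∧ ∀ x : ℝ → n → ℝ, IsTrajectory S x → ∀ s t : ℝ, 0 ≤ s → s ≤ t →
    Real.exp (-t * Lambda S) * N (x t) ≤ Real.exp (-s * Lambda S) * N (x s)

/-- `N` is a Barabanov norm for `S`. -/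
def IsBarabanovNorm {n : Type*} [Fintype n] (S : Set (Matrix n n ℝ)) (N : (n → ℝ) → ℝ) : Prop :=
  IsExtremalNorm S N ∧ ∀ u : n → ℝ, ∃ x : ℝ → n → ℝ, IsTrajectory S x ∧ x 0 = u ∧
    ∀ t : ℝ, 0 ≤ t → Real.exp (-t * Lambda S) * N (x t) = N u

/-- `S` is irreducible: no nontrivial proper subspace is invariant under every `A ∈ S`. -/
def IrreducibleSystem {n : Type*} [Fintype n] (S : Set (Matrix n n ℝ)) : Prop :=
  ¬ ∃ V : Submodule ℝ (n → ℝ), 0 < Module.finrank ℝ V ∧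
    Module.finrank ℝ V < Fintype.card n ∧ ∀ A ∈ S, ∀ v ∈ V, A.mulVec v ∈ V

/-- A real matrix is Hurwitz if all of its complex eigenvalues have negative real part. -/
def IsHurwitz {n : Type*} [Fintype n] [DecidableEq n] (A : Matrix n n ℝ) : Prop :=
  ∀ μ ∈ spectrum ℂ (A.map (Complex.ofReal ·)), μ.re < 0


/-!
The proof has three parts.

*The planar rate.* The harmonic oscillators in the planar system rotate every vector onto every ray
in time at most `2π` (`exists_rotate`), with bounded distortion. Hence the largest expansion factor
`growth t` satisfies `growth s * growth t ≤ K * growth (s + t)` besides being submultiplicative,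
and `growth t` lies within constant factors of `e^{λt}` (`exists_rate`). The rate `λ` is
positive because alternating the two extreme matrices multiplies `(1, 0)` by `-4` in time `π`
(`reach_pow`). All this is `exists_planar_rate`.

*Marginal stability.* An element of `𝖷` is `cmat q ⊗ I + q (I ⊗ (R - λ))` with `0 ≤ q ≤ 1` and `R`
in the planar system (`exists_xmat`). Let `N v` be the supremum of `e^{-λt} ‖(I ⊗ P) v‖` over all
time-`t` transition matrices `P` of the planar system, `t ≥ 0`. By the planar rate it is equivalent
to the Euclidean norm. Flowing with `I ⊗ (R - λ)` does not increase `N`, since transition matrices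
form a semigroup (`extremal_flow_le`). Nor does flowing with `cmat q ⊗ I`: it commutes with every
`I ⊗ P`, and the symmetric part of `cmat q` is negative semidefinite (`extremal_add_ltens_le`).
So an Euler step of the full system raises `N` by `O(h²)` only (`extremal_step`), which forces `N` to
be non-increasing along trajectories (`seminorm_le_of_step`). Conversely `e₀ ⊗ ℝ²` carries the planar
system damped by `e^{-λt}`, so some trajectories do not decay (`xset_lower`), and `Λ(𝖷) = 0`.

*The Hurwitz property.* For fixed `R = rmat a b` the weights `b, a` on the second tensor factor make
`R` skew-adjoint. In the resulting energy of an eigenvector `v = (v₀, v₁)` the off-diagonal entries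
of `cmat q` cancel too, which leaves the damping `1 - q + qλ > 0` on `v₀` and `1 + qλ` on `v₁`
(`xmat_isHurwitz`).
-/

/-! ### Trajectories of linear switching systems -/

namespace Switching

variable {n : Type*} [Fintype n]

lemma isTrajectory_of_hasDerivAt {S : Set (Matrix n n ℝ)} {x : ℝ → n → ℝ} {A : Matrix n n ℝ}
    (hA : A ∈ S) (hx : ∀ t, HasDerivAt x (A *ᵥ x t) t) : IsTrajectory S x := by
  have hc : Continuous x := continuous_iff_continuousAt.2 fun t => (hx t).continuousAt
  have hc' : Continuous fun s => A *ᵥ x s := Continuous.matrix_mulVec continuous_const hc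
  refine ⟨hc, fun _ => A, fun i j => measurable_const, fun _ _ => hA,
    fun t _ => hc'.intervalIntegrable _ _, fun t _ => ?_⟩
  rw [intervalIntegral.integral_eq_sub_of_hasDerivAt (fun s _ => hx s)
    (hc'.intervalIntegrable _ _)]
  abel

lemma _root_.IsTrajectory.const_smul {S : Set (Matrix n n ℝ)} {x : ℝ → n → ℝ}
    (hx : IsTrajectory S x) (c : ℝ) : IsTrajectory S (fun t => c • x t) := by
  obtain ⟨hc, A, hm, hS, hi, he⟩ := hx
  refine ⟨hc.const_smul c, A, hm, hS, fun t ht => ?_, fun t ht => ?_⟩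
  · simp only [Matrix.mulVec_smul]
    exact (hi t ht).smul c
  · simp only [Matrix.mulVec_smul]
    rw [intervalIntegral.integral_smul, he t ht, smul_add]

lemma _root_.IsTrajectory.shift {S : Set (Matrix n n ℝ)} {x : ℝ → n → ℝ}
    (hx : IsTrajectory S x) {s : ℝ} (hs : 0 ≤ s) : IsTrajectory S (fun t => x (t + s)) := by
  obtain ⟨hc, A, hm, hS, hi, he⟩ := hx
  refine ⟨by fun_prop, fun t => A (t + s), fun i j => (hm i j).comp (measurable_add_const s),
    fun t ht => hS _ (by positivity), fun t ht => ?_, fun t ht => ?_⟩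
  · have h := ((hi s hs).symm.trans (hi (t + s) (by positivity))).comp_add_right s
    simpa using h
  · have h1 := intervalIntegral.integral_comp_add_right (a := 0) (b := t)
      (fun u => A u *ᵥ x u) s
    have h2 := intervalIntegral.integral_add_adjacent_intervals (hi s hs)
      ((hi s hs).symm.trans (hi (t + s) (by positivity)))
    simp only [zero_add] at h1 ⊢
    rw [h1, he (t + s) (by positivity), he s hs, ← h2]
    abel

lemma _root_.IsTrajectory.concat {S : Set (Matrix n n ℝ)} {x y : ℝ → n → ℝ}
    (hx : IsTrajectory S x) (hy : IsTrajectory S y) {s : ℝ} (hs : 0 ≤ s) (hxy : x s = y 0) :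
    IsTrajectory S (fun t => if t ≤ s then x t else y (t - s)) := by
  obtain ⟨hc, A, hm, hS, hi, he⟩ := hx
  obtain ⟨hc', B, hm', hS', hi', he'⟩ := hy
  set z : ℝ → n → ℝ := fun t => if t ≤ s then x t else y (t - s) with hz
  set D : ℝ → Matrix n n ℝ := fun t => if t ≤ s then A t else B (t - s) with hD
  have hlow : ∀ u, u ≤ s → D u *ᵥ z u = A u *ᵥ x u := fun u hu => by simp [hD, hz, hu]
  have hhigh : ∀ u, s < u → D u *ᵥ z u = B (u - s) *ᵥ y (u - s) := fun u hu => by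
    simp [hD, hz, not_le.2 hu]
  have hI1 : ∀ t, 0 ≤ t → t ≤ s → IntervalIntegrable (fun u => D u *ᵥ z u) volume 0 t := by
    intro t ht hts
    refine (hi t ht).congr ?_
    intro u hu
    rw [Set.uIoc_of_le ht] at hu
    exact (hlow u (hu.2.trans hts)).symm
  have hI2 : ∀ t, s ≤ t → IntervalIntegrable (fun u => D u *ᵥ z u) volume s t := by
    intro t hst
    have h := (hi' (t - s) (by linarith)).comp_sub_right s
    simp only [zero_add, sub_add_cancel] at h
    refine h.congr ?_
    intro u hu
    rw [Set.uIoc_of_le hst] at hu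
    exact (hhigh u hu.1).symm
  have hE1 : ∀ t, 0 ≤ t → t ≤ s →
      ∫ u in (0:ℝ)..t, D u *ᵥ z u = ∫ u in (0:ℝ)..t, A u *ᵥ x u := by
    intro t ht hts
    refine intervalIntegral.integral_congr fun u hu => ?_
    rw [Set.uIcc_of_le ht] at hu
    exact hlow u (hu.2.trans hts)
  have hE2 : ∀ t, s ≤ t →
      ∫ u in s..t, D u *ᵥ z u = ∫ u in (0:ℝ)..(t - s), B u *ᵥ y u := by
    intro t hst
    have h := intervalIntegral.integral_comp_sub_right (a := s) (b := t)
      (fun u => B u *ᵥ y u) s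
    rw [sub_self] at h
    rw [← h]
    refine intervalIntegral.integral_congr_ae (ae_of_all _ fun u hu => ?_)
    rw [Set.uIoc_of_le hst] at hu
    exact hhigh u hu.1
  refine ⟨?_, D, fun i j => ?_, fun t ht => ?_, fun t ht => ?_, fun t ht => ?_⟩
  · refine Continuous.if_le hc (by fun_prop) continuous_id continuous_const ?_
    rintro t rfl
    simpa using hxy
  · have : (fun t => D t i j) = fun t => if t ≤ s then A t i j else B (t - s) i j := by
      funext t
      simp only [hD]
      split_ifs <;> rfl
    rw [this]
    exact Measurable.ite measurableSet_Iic (hm i j)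
      ((hm' i j).comp (measurable_sub_const s))
  · simp only [hD]
    split_ifs with h
    · exact hS t ht
    · exact hS' _ (by linarith)
  · rcases le_total t s with h | h
    · exact hI1 t ht h
    · exact (hI1 s hs le_rfl).trans (hI2 t h)
  · have hz0 : z 0 = x 0 := by simp [hz, hs]
    rcases le_or_gt t s with h | h
    · rw [hz0, hE1 t ht h, ← he t ht]
      simp [hz, h]
    · rw [hz0, ← intervalIntegral.integral_add_adjacent_intervals (hI1 s hs le_rfl) (hI2 t h.le),
        hE1 s hs le_rfl, hE2 t h.le, ← add_assoc, ← he s hs, hxy, ← he' _ (by linarith)]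
      simp [hz, not_le.2 h]

lemma _root_.IsTrajectory.norm_le {S : Set (Matrix n n ℝ)} {K : ℝ} (hK0 : 0 ≤ K)
    (hK : ∀ A ∈ S, ∀ v, ‖A *ᵥ v‖ ≤ K * ‖v‖) {x : ℝ → n → ℝ} (hx : IsTrajectory S x)
    {t : ℝ} (ht : 0 ≤ t) : ‖x t‖ ≤ ‖x 0‖ * Real.exp (K * t) := by
  obtain ⟨hc, A, hm, hS, hi, he⟩ := hx
  -- Gronwall's inequality is applied to the differentiable majorant `F` of `‖x‖`.
  set F : ℝ → ℝ := fun t => ‖x 0‖ + ∫ s in (0:ℝ)..t, K * ‖x s‖ with hF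
  have hcn : Continuous fun s => K * ‖x s‖ := by fun_prop
  have hxF : ∀ s, 0 ≤ s → ‖x s‖ ≤ F s := by
    intro s hs
    rw [he s hs]
    refine (norm_add_le _ _).trans (add_le_add le_rfl ?_)
    refine intervalIntegral.norm_integral_le_of_norm_le hs ?_ (hcn.intervalIntegrable _ _)
    exact ae_of_all _ fun u hu => hK _ (hS u hu.1.le) _
  have hFd : ∀ s, HasDerivAt F (K * ‖x s‖) s := fun s =>
    (intervalIntegral.integral_hasDerivAt_right (hcn.intervalIntegrable _ _)
      (hcn.stronglyMeasurableAtFilter _ _) hcn.continuousAt).const_add _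
  have h := norm_le_gronwallBound_of_norm_deriv_right_le (f := F) (f' := fun s => K * ‖x s‖)
    (δ := ‖x 0‖) (K := K) (ε := 0) (a := 0) (b := t)
    (fun s _ => (hFd s).continuousAt.continuousWithinAt)
    (fun s _ => (hFd s).hasDerivWithinAt) (by simp [hF]) (fun s hs => by
      have h1 := hxF s hs.1
      rw [add_zero, Real.norm_of_nonneg (by positivity),
        Real.norm_of_nonneg ((norm_nonneg _).trans h1)]
      gcongr) t ⟨ht, le_rfl⟩
  rw [gronwallBound_ε0, sub_zero] at h
  exact (hxF t ht).trans ((le_abs_self _).trans h)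

/-- A discretisation principle: if one Euler step of the system increases the seminorm `N` by at
most `O(h²)`, uniformly over the matrices of `S`, then `N` is non-increasing along trajectories.
The switching law is only measurable, but `x (t + h)` is up to `O(h²)` an average of Euler steps
from `x t`, and the sublevel sets of `N` are convex. -/
lemma seminorm_le_of_step {S : Set (Matrix n n ℝ)} {K : ℝ} (hK0 : 0 ≤ K)
    (hK : ∀ A ∈ S, ∀ v, ‖A *ᵥ v‖ ≤ K * ‖v‖) (N : Seminorm ℝ (n → ℝ)) {L : ℝ} (hL0 : 0 ≤ L)
    (hL : ∀ v, N v ≤ L * ‖v‖) {K' h₀ : ℝ} (hK' : 0 ≤ K') (hh₀ : 0 < h₀)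
    (hstep : ∀ A ∈ S, ∀ v, ∀ h, 0 ≤ h → h ≤ h₀ → N (v + h • A *ᵥ v) ≤ N v + K' * h ^ 2 * ‖v‖)
    {x : ℝ → n → ℝ} (hx : IsTrajectory S x) {T : ℝ} (hT : 0 ≤ T) : N (x T) ≤ N (x 0) := by
  have hgrow := fun t ht => hx.norm_le hK0 hK (t := t) ht
  obtain ⟨hc, A, hm, hS, hi, he⟩ := hx
  set M : ℝ := ‖x 0‖ * Real.exp (K * T) with hM
  have hM0 : 0 ≤ M := by positivity
  have hxM : ∀ t, 0 ≤ t → t ≤ T → ‖x t‖ ≤ M := fun t ht htT =>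
    (hgrow t ht).trans (by rw [hM]; gcongr)
  have hNc : Continuous N := by
    refine Seminorm.continuous_of_continuousAt_zero ?_
    have h0 : Tendsto (fun v : n → ℝ => L * ‖v‖) (nhds 0) (nhds 0) := by
      have : Continuous fun v : n → ℝ => L * ‖v‖ := by fun_prop
      simpa using this.tendsto 0
    rw [ContinuousAt, map_zero]
    exact squeeze_zero (fun v => apply_nonneg N v) hL h0
  set c : ℝ := K' * M + L * K * K * M with hcdef
  have hc0 : 0 ≤ c := by positivity
  have hint : ∀ s t, 0 ≤ s → s ≤ t → IntervalIntegrable (fun u => A u *ᵥ x u) volume s t :=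
    fun s t hs hst => (hi s hs).symm.trans (hi t (hs.trans hst))
  have hdiff : ∀ s t, 0 ≤ s → s ≤ t → x t = x s + ∫ u in s..t, A u *ᵥ x u := by
    intro s t hs hst
    rw [he t (hs.trans hst), he s hs, ← intervalIntegral.integral_add_adjacent_intervals
      (hi s hs) (hint s t hs hst), add_assoc]
  have hstep' : ∀ t h, 0 ≤ t → 0 < h → h ≤ h₀ → t + h ≤ T →
      N (x (t + h)) ≤ N (x t) + c * h ^ 2 := by
    intro t h ht hh hhh hT'
    have hlip : ∀ s, t ≤ s → s ≤ t + h → ‖x s - x t‖ ≤ K * M * h := by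
      intro s hts hsh
      rw [hdiff t s ht hts, add_sub_cancel_left]
      have := intervalIntegral.norm_integral_le_of_norm_le_const (a := t) (b := s)
        (f := fun u => A u *ᵥ x u) (C := K * M) (by
          intro u hu
          rw [Set.uIoc_of_le hts] at hu
          refine (hK _ (hS u (ht.trans hu.1.le)) _).trans ?_
          gcongr
          exact hxM u (ht.trans hu.1.le) (hu.2.trans (hsh.trans hT')))
      refine this.trans ?_
      rw [abs_of_nonneg (by linarith)]
      gcongr
      linarith
    have hpt : ∀ s ∈ Set.Ioc t (t + h),
        x t + h • A s *ᵥ x s ∈ {v | N v ≤ N (x t) + c * h ^ 2} := by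
      intro s hs
      have hs0 : 0 ≤ s := ht.trans hs.1.le
      have e : x t + h • A s *ᵥ x s
          = (x t + h • A s *ᵥ x t) + h • A s *ᵥ (x s - x t) := by
        rw [Matrix.mulVec_sub, smul_sub]; abel
      have h1 := hstep _ (hS s hs0) (x t) h hh.le hhh
      have h2 : N (h • A s *ᵥ (x s - x t)) ≤ L * K * K * M * h ^ 2 := by
        rw [map_smul_eq_mul, Real.norm_of_nonneg hh.le]
        have h3 := (hL (A s *ᵥ (x s - x t))).trans
          (mul_le_mul_of_nonneg_left (hK _ (hS s hs0) _) hL0)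
        have h4 := hlip s hs.1.le hs.2
        calc h * N (A s *ᵥ (x s - x t)) ≤ h * (L * (K * ‖x s - x t‖)) := by gcongr
          _ ≤ h * (L * (K * (K * M * h))) := by gcongr
          _ = _ := by ring
      have h5 : K' * h ^ 2 * ‖x t‖ ≤ K' * h ^ 2 * M := by
        gcongr
        exact hxM t ht (by linarith)
      have h6 := map_add_le_add N (x t + h • A s *ᵥ x t) (h • A s *ᵥ (x s - x t))
      rw [Set.mem_ofPred_eq, e, hcdef]
      linarith
    have hconv : Convex ℝ {v | N v ≤ N (x t) + c * h ^ 2} := by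
      have := N.convexOn.convex_le (N (x t) + c * h ^ 2)
      simpa using this
    have hvol : volume (Set.Ioc t (t + h)) = ENNReal.ofReal h := by simp
    have hi' := hint t (t + h) ht (by linarith)
    have hif : IntegrableOn (fun s => x t + h • A s *ᵥ x s) (Set.Ioc t (t + h)) volume := by
      refine Integrable.add (integrableOn_const (by simp)) ?_
      exact (((intervalIntegrable_iff_integrableOn_Ioc_of_le (by linarith)).1 hi').smul h)
    have hmem := hconv.set_average_mem (isClosed_le hNc continuous_const)
      (μ := volume) (t := Set.Ioc t (t + h)) (by simp [hh]) (by simp)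
      ((ae_restrict_iff' measurableSet_Ioc).2 (ae_of_all _ hpt)) hif
    have hsm : IntervalIntegrable (fun s => h • A s *ᵥ x s) volume t (t + h) := hi'.smul h
    have hav : ⨍ s in Set.Ioc t (t + h), (x t + h • A s *ᵥ x s) = x (t + h) := by
      rw [hdiff t (t + h) ht (by linarith), setAverage_eq,
        ← intervalIntegral.integral_of_le (by linarith),
        intervalIntegral.integral_add intervalIntegrable_const hsm, intervalIntegral.integral_smul,
        intervalIntegral.integral_const]
      simp only [Measure.real, hvol, ENNReal.toReal_ofReal hh.le, add_sub_cancel_left]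
      rw [smul_add, smul_smul, smul_smul, inv_mul_cancel₀ hh.ne', one_smul, one_smul]
    rw [hav] at hmem
    exact hmem
  rcases hT.eq_or_lt with rfl | hTpos
  · exact le_rfl
  -- Subdividing `[0, T]` into `k` steps, the total error is `O(1/k)`.
  have hk : ∀ k : ℕ, 0 < k → T / k ≤ h₀ → N (x T) ≤ N (x 0) + c * T ^ 2 / k := by
    intro k hk hkh
    have hkr : (0:ℝ) < k := by exact_mod_cast hk
    have hind : ∀ j : ℕ, j ≤ k → N (x (j * (T / k))) ≤ N (x 0) + j * (c * (T / k) ^ 2) := by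
      intro j
      induction j with
      | zero => intro _; simp
      | succ j ih =>
        intro hj
        have hjr : (j:ℝ) + 1 ≤ k := by exact_mod_cast hj
        have hTk : 0 < T / k := by positivity
        have h1 := hstep' (j * (T / k)) (T / k) (by positivity) hTk hkh (by
          calc (j:ℝ) * (T / k) + T / k = (j + 1) * (T / k) := by ring
            _ ≤ k * (T / k) := by gcongr
            _ = T := by field_simp)
        have h2 := ih (by omega)
        push_cast
        rw [add_mul, one_mul]
        linarith
    have h := hind k le_rfl
    rw [show (k:ℝ) * (T / k) = T by field_simp] at h
    refine h.trans (le_of_eq ?_)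
    field_simp
  have hlim : Tendsto (fun k : ℕ => N (x 0) + c * T ^ 2 / k) atTop (nhds (N (x 0) + 0)) :=
    tendsto_const_nhds.add (tendsto_const_div_atTop_nhds_zero_nat _)
  rw [add_zero] at hlim
  refine ge_of_tendsto hlim ?_
  have h1 := (tendsto_const_div_atTop_nhds_zero_nat T).eventually (ge_mem_nhds hh₀)
  filter_upwards [h1, eventually_gt_atTop 0] with k h2 h3
  exact hk k h3 h2

end Switching

/-! ### The Euclidean norm, reachability, and planar rotations -/

namespace Switching

section eNorm
variable {n : Type*} [Fintype n]

lemma eNorm_eq_norm (v : n → ℝ) : eNorm v = ‖(WithLp.toLp 2 v : EuclideanSpace ℝ n)‖ := by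
  simp [eNorm, EuclideanSpace.norm_eq]

lemma eNorm_nonneg (v : n → ℝ) : 0 ≤ eNorm v := Real.sqrt_nonneg _

lemma eNorm_sq (v : n → ℝ) : eNorm v ^ 2 = ∑ i, v i ^ 2 :=
  Real.sq_sqrt (Finset.sum_nonneg fun _ _ => sq_nonneg _)

lemma eNorm_add_le (v w : n → ℝ) : eNorm (v + w) ≤ eNorm v + eNorm w := by
  simpa only [eNorm_eq_norm, WithLp.toLp_add] using norm_add_le _ _

lemma eNorm_smul (c : ℝ) (v : n → ℝ) : eNorm (c • v) = |c| * eNorm v := by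
  simp only [eNorm_eq_norm, WithLp.toLp_smul, norm_smul, Real.norm_eq_abs]

lemma eNorm_eq_zero {v : n → ℝ} : eNorm v = 0 ↔ v = 0 := by
  rw [eNorm_eq_norm, norm_eq_zero]
  exact WithLp.toLp_eq_zero 2

lemma eNorm_pos {v : n → ℝ} (hv : v ≠ 0) : 0 < eNorm v :=
  (eNorm_nonneg v).lt_of_ne' fun h => hv (eNorm_eq_zero.1 h)

lemma norm_le_eNorm (v : n → ℝ) : ‖v‖ ≤ eNorm v := by
  refine (pi_norm_le_iff_of_nonneg (eNorm_nonneg v)).2 fun i => ?_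
  rw [Real.norm_eq_abs]
  refine abs_le_of_sq_le_sq ?_ (eNorm_nonneg v)
  rw [eNorm_sq]
  exact Finset.single_le_sum (f := fun i => v i ^ 2) (fun _ _ => sq_nonneg _) (Finset.mem_univ i)

lemma eNorm_le_of_sq_le {v : n → ℝ} {c : ℝ} (hc : 0 ≤ c) (h : ∑ i, v i ^ 2 ≤ c ^ 2) :
    eNorm v ≤ c :=
  (abs_le_of_sq_le_sq' (by rwa [eNorm_sq]) hc).2

lemma eNorm_le_card (v : n → ℝ) : eNorm v ≤ Fintype.card n * ‖v‖ := by
  refine eNorm_le_of_sq_le (by positivity) ?_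
  calc ∑ i, v i ^ 2 ≤ ∑ _i : n, ‖v‖ ^ 2 := by
        refine Finset.sum_le_sum fun i _ => ?_
        rw [← sq_abs, ← Real.norm_eq_abs]
        gcongr
        exact norm_le_pi_norm v i
    _ = Fintype.card n * ‖v‖ ^ 2 := by simp
    _ ≤ (Fintype.card n * ‖v‖) ^ 2 := by
        rw [mul_pow]
        gcongr
        rw [← Nat.cast_pow]
        exact_mod_cast Nat.le_self_pow two_ne_zero _

end eNorm

/-- `Reach S t v w` says that some trajectory of the system `S` is at `v` at time `0` and at `w`
at time `t`. -/
def Reach {n : Type*} [Fintype n] (S : Set (Matrix n n ℝ)) (t : ℝ) (v w : n → ℝ) : Prop :=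
  ∃ x, IsTrajectory S x ∧ x 0 = v ∧ x t = w

section Reach
variable {n : Type*} [Fintype n] {S : Set (Matrix n n ℝ)}

lemma Reach.trans {s t : ℝ} (hs : 0 ≤ s) (ht : 0 ≤ t) {u v w : n → ℝ} (h : Reach S s u v)
    (h' : Reach S t v w) : Reach S (s + t) u w := by
  obtain ⟨x, hx, rfl, rfl⟩ := h
  obtain ⟨y, hy, hxy, rfl⟩ := h'
  refine ⟨_, hx.concat hy hs hxy.symm, by simp [hs], ?_⟩
  rcases ht.eq_or_lt with rfl | ht
  · simp [hxy]
  · simp [ht]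

lemma Reach.smul {t : ℝ} {v w : n → ℝ} (h : Reach S t v w) (c : ℝ) :
    Reach S t (c • v) (c • w) := by
  obtain ⟨x, hx, rfl, rfl⟩ := h
  exact ⟨_, hx.const_smul c, rfl, rfl⟩

lemma Reach.split {s t : ℝ} (hs : 0 ≤ s) {u w : n → ℝ} (h : Reach S (s + t) u w) :
    ∃ v, Reach S s u v ∧ Reach S t v w := by
  obtain ⟨x, hx, rfl, rfl⟩ := h
  exact ⟨x s, ⟨x, hx, rfl, rfl⟩, _, hx.shift hs, by simp, by simp [add_comm]⟩

end Reach

/-- The matrix `[[0, -a], [b, 0]]`; the planar system consists of those with `a + b = 5/2` and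
`1/2 ≤ a ≤ 2`. -/
def rmat (a b : ℝ) : Matrix (Fin 2) (Fin 2) ℝ := !![0, -a; b, 0]

/-- The planar switching system whose exponent is `λ`. -/
abbrev Rset : Set (Matrix (Fin 2) (Fin 2) ℝ) :=
  convexHull ℝ {!![0, -2; 1/2, 0], !![0, -1/2; 2, 0]}

/-- The flow `exp (t • rmat a b)`, written with `ω ^ 2 = a * b`. -/
noncomputable def flowMat (a b ω t : ℝ) : Matrix (Fin 2) (Fin 2) ℝ :=
  Real.cos (ω * t) • 1 + (Real.sin (ω * t) / ω) • rmat a b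

lemma rmat_mem {a b : ℝ} (hab : a + b = 5 / 2) (ha : 1 / 2 ≤ a) (hb : 1 / 2 ≤ b) :
    rmat a b ∈ Rset := by
  rw [Rset, convexHull_pair]
  refine ⟨(a - 1 / 2) / (3 / 2), (b - 1 / 2) / (3 / 2), by linarith, by linarith, by linarith, ?_⟩
  ext i j
  fin_cases i <;> fin_cases j <;> simp [rmat] <;> linarith

lemma rmat_mulVec_zero (a b : ℝ) (v : Fin 2 → ℝ) : (rmat a b *ᵥ v) 0 = -a * v 1 := by
  simp [rmat, Matrix.mulVec, dotProduct, Fin.sum_univ_two]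

lemma rmat_mulVec_one (a b : ℝ) (v : Fin 2 → ℝ) : (rmat a b *ᵥ v) 1 = b * v 0 := by
  simp [rmat, Matrix.mulVec, dotProduct, Fin.sum_univ_two]

lemma flowMat_mulVec_zero (a b ω t : ℝ) (v : Fin 2 → ℝ) :
    (flowMat a b ω t *ᵥ v) 0 = Real.cos (ω * t) * v 0 - Real.sin (ω * t) / ω * a * v 1 := by
  simp [flowMat, rmat, Matrix.mulVec, dotProduct, Fin.sum_univ_two]
  ring

lemma flowMat_mulVec_one (a b ω t : ℝ) (v : Fin 2 → ℝ) :
    (flowMat a b ω t *ᵥ v) 1 = Real.cos (ω * t) * v 1 + Real.sin (ω * t) / ω * b * v 0 := by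
  simp [flowMat, rmat, Matrix.mulVec, dotProduct, Fin.sum_univ_two]
  ring

lemma reach_flowMat {S : Set (Matrix (Fin 2) (Fin 2) ℝ)} {a b ω : ℝ} (hS : rmat a b ∈ S)
    (hω : 0 < ω) (hab : ω ^ 2 = a * b) (t : ℝ) (v : Fin 2 → ℝ) :
    Reach S t v (flowMat a b ω t *ᵥ v) := by
  refine ⟨fun t => flowMat a b ω t *ᵥ v, isTrajectory_of_hasDerivAt hS fun s => ?_, ?_, rfl⟩
  · have h1 : HasDerivAt (fun s => Real.cos (ω * s)) (-Real.sin (ω * s) * ω) s := by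
      simpa using ((hasDerivAt_id s).const_mul ω).cos
    have h2 : HasDerivAt (fun s => Real.sin (ω * s)) (Real.cos (ω * s) * ω) s := by
      simpa using ((hasDerivAt_id s).const_mul ω).sin
    rw [hasDerivAt_pi]
    intro i
    fin_cases i
    · simp only [Fin.zero_eta, flowMat_mulVec_zero, rmat_mulVec_zero, flowMat_mulVec_one]
      convert! (h1.mul_const (v 0)).sub (((h2.div_const ω).mul_const a).mul_const (v 1)) using 1
      field_simp
      linear_combination Real.sin (ω * s) * v 0 * hab
    · simp only [Fin.mk_one, flowMat_mulVec_zero, rmat_mulVec_one, flowMat_mulVec_one]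
      convert! (h1.mul_const (v 1)).add (((h2.div_const ω).mul_const b).mul_const (v 0)) using 1
      field_simp
      linear_combination Real.sin (ω * s) * v 1 * hab
  · ext i
    fin_cases i <;> simp [flowMat_mulVec_zero, flowMat_mulVec_one]

lemma rset_norm_le : ∀ A ∈ Rset, ∀ v, ‖A *ᵥ v‖ ≤ 2 * ‖v‖ := by
  intro A hA
  have hconv : Convex ℝ {A : Matrix (Fin 2) (Fin 2) ℝ | ∀ v, ‖A *ᵥ v‖ ≤ 2 * ‖v‖} := by
    intro A hA B hB p q hp hq hpq v
    rw [Matrix.add_mulVec, Matrix.smul_mulVec, Matrix.smul_mulVec]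
    refine (norm_add_le _ _).trans ?_
    rw [norm_smul, norm_smul, Real.norm_of_nonneg hp, Real.norm_of_nonneg hq]
    have := mul_le_mul_of_nonneg_left (hA v) hp
    have := mul_le_mul_of_nonneg_left (hB v) hq
    have : (p + q) * (2 * ‖v‖) = 2 * ‖v‖ := by rw [hpq, one_mul]
    linarith
  refine convexHull_min ?_ hconv hA
  have key : ∀ a b : ℝ, |a| ≤ 2 → |b| ≤ 2 → ∀ v : Fin 2 → ℝ,
      ‖!![0, a; b, 0] *ᵥ v‖ ≤ 2 * ‖v‖ := by
    intro a b ha hb v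
    refine (pi_norm_le_iff_of_nonneg (by positivity)).2 fun i => ?_
    have h0 := norm_le_pi_norm v 0
    have h1 := norm_le_pi_norm v 1
    rw [Real.norm_eq_abs] at h0 h1
    fin_cases i <;> simp [Matrix.mulVec, dotProduct, Fin.sum_univ_two] <;> gcongr
  rintro A (rfl | rfl)
  · exact key _ _ (by norm_num) (by norm_num [abs_le])
  · exact key _ _ (by norm_num [abs_le]) (by norm_num)

lemma rset_reach_le {t : ℝ} (ht : 0 ≤ t) {v w : Fin 2 → ℝ} (h : Reach Rset t v w) :
    eNorm w ≤ 2 * Real.exp (2 * t) * eNorm v := by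
  obtain ⟨x, hx, rfl, rfl⟩ := h
  have h1 := hx.norm_le zero_le_two rset_norm_le ht
  have h2 := eNorm_le_card (x t)
  have h3 := norm_le_eNorm (x 0)
  simp only [Fintype.card_fin, Nat.cast_ofNat] at h2
  calc eNorm (x t) ≤ 2 * (‖x 0‖ * Real.exp (2 * t)) := h2.trans (by gcongr)
    _ ≤ 2 * (eNorm (x 0) * Real.exp (2 * t)) := by gcongr
    _ = _ := by ring

/-- A trajectory of the single matrix `[[0, -2], [1/2, 0]]` turns once around the origin in time
`2π`, so it passes through every half-line; and on its elliptic orbit the norm changes by a factor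
at most `2`. -/
lemma exists_rotate (w v : Fin 2 → ℝ) (hv : v ≠ 0) :
    ∃ τ c : ℝ, 0 ≤ τ ∧ τ ≤ 2 * Real.pi ∧ 0 ≤ c ∧ Reach Rset τ w (c • v) ∧
      eNorm w ≤ 2 * (c * eNorm v) := by
  -- With `z = w₀ + 2 i w₁` the flow is multiplication by `exp (i τ)`.
  set z : ℂ := ⟨w 0, 2 * w 1⟩ with hz
  set z' : ℂ := ⟨v 0, 2 * v 1⟩ with hz'
  have hz'0 : z' ≠ 0 := by
    intro h
    apply hv
    have h0 := congrArg Complex.re h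
    have h1 := congrArg Complex.im h
    simp [hz'] at h0 h1
    ext i
    fin_cases i <;> simp [h0, h1]
  have hz'n : 0 < ‖z'‖ := norm_pos_iff.2 hz'0
  obtain ⟨τ, h0, h2, hτ⟩ : ∃ τ : ℝ, 0 ≤ τ ∧ τ ≤ 2 * Real.pi ∧
      Complex.exp (τ * Complex.I) * z = ((‖z‖ / ‖z'‖ : ℝ) : ℂ) * z' := by
    rcases eq_or_ne z 0 with h | h
    · exact ⟨0, le_rfl, by positivity, by simp [h]⟩
    have hpol := Complex.norm_mul_exp_arg_mul_I (z' / z)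
    have hzn : (‖z‖ : ℂ) ≠ 0 := by simpa using h
    have hz'c : (‖z'‖ : ℂ) ≠ 0 := by simpa using hz'0
    have hmain : Complex.exp ((z' / z).arg * Complex.I) * z
        = ((‖z‖ / ‖z'‖ : ℝ) : ℂ) * z' := by
      rw [norm_div] at hpol
      push_cast at hpol ⊢
      field_simp at hpol ⊢
      linear_combination hpol
    have hpi := Real.pi_pos
    rcases le_or_gt 0 (z' / z).arg with h' | h'
    · exact ⟨_, h', by linarith [Complex.arg_le_pi (z' / z)], hmain⟩
    · refine ⟨(z' / z).arg + 2 * Real.pi, by linarith [Complex.neg_pi_lt_arg (z' / z)],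
        by linarith, ?_⟩
      rw [← hmain]
      push_cast
      rw [add_mul, Complex.exp_add, Complex.exp_two_pi_mul_I, mul_one]
  have hre : Real.cos τ * w 0 - Real.sin τ * (2 * w 1) = ‖z‖ / ‖z'‖ * v 0 := by
    have := congrArg Complex.re hτ
    rw [Complex.re_ofReal_mul, Complex.mul_re, Complex.exp_ofReal_mul_I_re,
      Complex.exp_ofReal_mul_I_im] at this
    exact this
  have him : Real.cos τ * (2 * w 1) + Real.sin τ * w 0 = ‖z‖ / ‖z'‖ * (2 * v 1) := by
    have := congrArg Complex.im hτ
    rw [Complex.im_ofReal_mul, Complex.mul_im, Complex.exp_ofReal_mul_I_re,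
      Complex.exp_ofReal_mul_I_im] at this
    exact this
  refine ⟨τ, ‖z‖ / ‖z'‖, h0, h2, by positivity, ?_, ?_⟩
  · have h := reach_flowMat (S := Rset) (a := 2) (b := 1 / 2) (ω := 1)
      (rmat_mem (by norm_num) (by norm_num) (by norm_num)) one_pos (by norm_num) τ w
    convert h using 1
    ext i
    fin_cases i
    · simp [flowMat_mulVec_zero]
      linarith
    · simp [flowMat_mulVec_one]
      linarith
  · have hw : eNorm w ≤ ‖z‖ := by
      refine eNorm_le_of_sq_le (norm_nonneg _) ?_
      rw [Complex.sq_norm, Complex.normSq_apply, Fin.sum_univ_two]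
      simp only [hz]
      nlinarith [sq_nonneg (w 1)]
    have hz'le : ‖z'‖ ≤ 2 * eNorm v := by
      refine (abs_le_of_sq_le_sq' ?_ (by have := eNorm_nonneg v; positivity)).2
      rw [Complex.sq_norm, Complex.normSq_apply, mul_pow, eNorm_sq, Fin.sum_univ_two]
      simp only [hz']
      nlinarith [sq_nonneg (v 0)]
    calc eNorm w ≤ ‖z‖ := hw
      _ = ‖z‖ / ‖z'‖ * ‖z'‖ := by field_simp
      _ ≤ ‖z‖ / ‖z'‖ * (2 * eNorm v) := by gcongr
      _ = _ := by ring

end Switching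

/-! ### The growth rate of the planar system -/

namespace Switching

/-- A function on `[0, ∞)` that is additive up to a bounded error and of at most linear growth
stays within bounded distance of a linear function. -/
lemma exists_rate {f : ℝ → ℝ} {K K₁ K₂ : ℝ} (hK₂ : 0 ≤ K₂) (h0 : ∀ t, 0 ≤ t → 0 ≤ f t)
    (hsub : ∀ s t, 0 ≤ s → 0 ≤ t → f (s + t) ≤ f s + f t)
    (hsup : ∀ s t, 0 ≤ s → 0 ≤ t → f s + f t ≤ f (s + t) + K)
    (hb : ∀ t, 0 ≤ t → f t ≤ K₁ + K₂ * t) :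
    ∃ l : ℝ, ∀ t, 0 ≤ t → l * t ≤ f t ∧ f t ≤ l * t + K := by
  have hup : ∀ (m : ℕ) s r, 0 ≤ s → 0 ≤ r → f (m * s + r) ≤ m * f s + f r := by
    intro m s r hs hr
    induction m with
    | zero => simp
    | succ m ih =>
      have := hsub s (m * s + r) hs (by positivity)
      push_cast
      rw [show ((m:ℝ) + 1) * s + r = s + (m * s + r) by ring]
      linarith
  have hlow : ∀ (m : ℕ) t, 0 ≤ t → m * (f t - K) ≤ f (m * t) := by
    intro m t ht
    induction m with
    | zero => simpa using h0 0 le_rfl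
    | succ m ih =>
      have := hsup (m * t) t (by positivity) ht
      push_cast
      rw [show ((m:ℝ) + 1) * t = m * t + t by ring]
      linarith
  have hcmp : ∀ s t, 0 < s → 0 < t → (f t - K) / t ≤ f s / s := by
    intro s t hs ht
    set c := K₁ + K₂ * s with hc
    -- `n * t` is divided by `s` with remainder.
    have hn : ∀ n : ℕ, 0 < n → f t - K ≤ t / s * f s + c / n := by
      intro n hn
      have hnr : (0:ℝ) < n := by exact_mod_cast hn
      set m := ⌊n * t / s⌋₊ with hm
      have hm1 : (m:ℝ) ≤ n * t / s := Nat.floor_le (by positivity)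
      have hm2 : n * t / s < m + 1 := Nat.lt_floor_add_one _
      have hr0 : 0 ≤ n * t - m * s := by
        rw [le_div_iff₀ hs] at hm1
        linarith
      have hrs : n * t - m * s ≤ s := by
        rw [div_lt_iff₀ hs] at hm2
        linarith
      have h1 := hlow n t ht.le
      have h2 := hup m s (n * t - m * s) hs.le hr0
      rw [add_sub_cancel] at h2
      have h3 := hb _ hr0
      have h4 : K₂ * (n * t - m * s) ≤ K₂ * s := by gcongr
      have h5 : (m:ℝ) * f s ≤ n * t / s * f s := by
        have := h0 s hs.le
        gcongr
      have h6 : n * (f t - K) ≤ n * (t / s * f s + c / n) := by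
        rw [mul_add, mul_div_cancel₀ _ hnr.ne', ← mul_assoc, ← mul_div_assoc]
        linarith
      exact le_of_mul_le_mul_left h6 hnr
    have hlim : Tendsto (fun n : ℕ => t / s * f s + c / n) atTop (nhds (t / s * f s + 0)) :=
      tendsto_const_nhds.add (tendsto_const_div_atTop_nhds_zero_nat _)
    have h := ge_of_tendsto hlim ((eventually_gt_atTop 0).mono hn)
    rw [add_zero] at h
    rw [div_le_iff₀ ht]
    calc f t - K ≤ t / s * f s := h
      _ = f s / s * t := by ring
  set R : Set ℝ := (fun s => f s / s) '' Set.Ioi 0 with hR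
  have hRne : R.Nonempty := ⟨_, 1, Set.mem_Ioi.2 one_pos, rfl⟩
  have hRb : BddBelow R := by
    refine ⟨0, ?_⟩
    rintro _ ⟨s, hs, rfl⟩
    exact div_nonneg (h0 s (le_of_lt hs)) (le_of_lt hs)
  refine ⟨sInf R, fun t ht => ?_⟩
  rcases ht.eq_or_lt with rfl | ht
  · have h1 := hsup 0 0 le_rfl le_rfl
    have h2 := h0 0 le_rfl
    simp only [add_zero] at h1
    constructor <;> linarith
  constructor
  · rw [← le_div_iff₀ ht]
    exact csInf_le hRb ⟨t, ht, rfl⟩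
  · have : (f t - K) / t ≤ sInf R := by
      refine le_csInf hRne ?_
      rintro _ ⟨s, hs, rfl⟩
      exact hcmp s t hs ht
    rw [div_le_iff₀ ht] at this
    linarith

/-- The norms of the states reachable in time `t` from the unit circle by the planar system. -/
def growthSet (t : ℝ) : Set ℝ :=
  {r | ∃ v w : Fin 2 → ℝ, eNorm v = 1 ∧ Reach Rset t v w ∧ r = eNorm w}

/-- The largest factor by which the planar system can expand in time `t`. -/
noncomputable def growth (t : ℝ) : ℝ := sSup (growthSet t)

lemma growthSet_le {t : ℝ} (ht : 0 ≤ t) : ∀ r ∈ growthSet t, r ≤ 2 * Real.exp (2 * t) := by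
  rintro _ ⟨v, w, hv, h, rfl⟩
  simpa [hv] using rset_reach_le ht h

lemma growthSet_bddAbove {t : ℝ} (ht : 0 ≤ t) : BddAbove (growthSet t) :=
  ⟨_, growthSet_le ht⟩

lemma exists_growthSet (t : ℝ) : ∃ r ∈ growthSet t, 1 ≤ r := by
  -- On the ellipse `x₀² + 4 x₁² = 4` the point `(0, 1)` is closest to the origin.
  refine ⟨_, ⟨![0, 1], _, by simp [eNorm, Fin.sum_univ_two],
    reach_flowMat (a := 2) (b := 1 / 2) (ω := 1)
      (rmat_mem (by norm_num) (by norm_num) (by norm_num)) one_pos (by norm_num) t _, rfl⟩, ?_⟩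
  refine (abs_le_of_sq_le_sq' ?_ (eNorm_nonneg _)).2
  rw [eNorm_sq, Fin.sum_univ_two, flowMat_mulVec_zero, flowMat_mulVec_one]
  simp
  nlinarith [Real.sin_sq_add_cos_sq t, sq_nonneg (Real.sin t)]

lemma one_le_growth {t : ℝ} (ht : 0 ≤ t) : 1 ≤ growth t := by
  obtain ⟨r, hr, h⟩ := exists_growthSet t
  exact h.trans (le_csSup (growthSet_bddAbove ht) hr)

lemma growth_le {t : ℝ} (ht : 0 ≤ t) : growth t ≤ 2 * Real.exp (2 * t) :=
  csSup_le (let ⟨r, hr, _⟩ := exists_growthSet t; ⟨r, hr⟩) (growthSet_le ht)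

lemma reach_le_growth {t : ℝ} (ht : 0 ≤ t) {v w : Fin 2 → ℝ} (h : Reach Rset t v w) :
    eNorm w ≤ growth t * eNorm v := by
  rcases eq_or_ne v 0 with rfl | hv
  · have h0 : eNorm (0 : Fin 2 → ℝ) = 0 := eNorm_eq_zero.2 rfl
    have := rset_reach_le ht h
    rw [h0, mul_zero] at this ⊢
    exact this
  · have hvp := eNorm_pos hv
    have h1 : (eNorm v)⁻¹ * eNorm w ≤ growth t := by
      refine le_csSup (growthSet_bddAbove ht) ⟨_, _, ?_, h.smul (eNorm v)⁻¹, ?_⟩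
      · rw [eNorm_smul, abs_of_pos (by positivity), inv_mul_cancel₀ hvp.ne']
      · rw [eNorm_smul, abs_of_pos (by positivity)]
    rwa [inv_mul_le_iff₀ hvp, mul_comm] at h1

lemma growth_add_le {s t : ℝ} (hs : 0 ≤ s) (ht : 0 ≤ t) :
    growth (s + t) ≤ growth s * growth t := by
  refine csSup_le (let ⟨r, hr, _⟩ := exists_growthSet (s + t); ⟨r, hr⟩) ?_
  rintro _ ⟨u, w, hu, h, rfl⟩
  obtain ⟨v, h1, h2⟩ := h.split hs
  have h3 := reach_le_growth hs h1
  have h4 := reach_le_growth ht h2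
  rw [hu, mul_one] at h3
  have := one_le_growth ht
  calc eNorm w ≤ growth t * eNorm v := h4
    _ ≤ growth t * growth s := by gcongr
    _ = _ := mul_comm _ _

/-- Near-optimal trajectories can be concatenated after a rotation of bounded duration, so the
growth factor is supermultiplicative up to a constant. -/
lemma growth_mul_le {s t : ℝ} (hs : 0 ≤ s) (ht : 0 ≤ t) :
    growth s * growth t ≤ 4 * Real.exp (4 * Real.pi) * growth (s + t) := by
  set D := 4 * Real.exp (4 * Real.pi) * growth (s + t) with hD
  have hne : ∀ u, (growthSet u).Nonempty := fun u =>
    let ⟨r, hr, _⟩ := exists_growthSet u; ⟨r, hr⟩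
  have hpair : ∀ r ∈ growthSet s, ∀ r' ∈ growthSet t, r * r' ≤ D := by
    rintro _ ⟨v, w, hv, h, rfl⟩ _ ⟨v', w', hv', h', rfl⟩
    have hv'0 : v' ≠ 0 := by
      rintro rfl
      rw [eNorm_eq_zero.2 rfl] at hv'
      exact zero_ne_one hv'
    obtain ⟨τ, c, hτ0, hτ, hc, hrot, hle⟩ := exists_rotate w v' hv'0
    rw [hv', mul_one] at hle
    have hall : Reach Rset ((s + t) + τ) v (c • w') := by
      have := (h.trans hs hτ0 hrot).trans (by positivity) ht (h'.smul c)
      rwa [add_right_comm] at this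
    obtain ⟨y, h1, h2⟩ := hall.split (by positivity)
    have h3 := reach_le_growth (by positivity) h1
    have h4 := rset_reach_le hτ0 h2
    rw [hv, mul_one] at h3
    rw [eNorm_smul, abs_of_nonneg hc] at h4
    have h5 : Real.exp (2 * τ) ≤ Real.exp (4 * Real.pi) := Real.exp_le_exp.2 (by linarith)
    have h6 := eNorm_nonneg w'
    have h7 := eNorm_nonneg y
    calc eNorm w * eNorm w' ≤ 2 * c * eNorm w' := by gcongr
      _ = 2 * (c * eNorm w') := by ring
      _ ≤ 2 * (2 * Real.exp (2 * τ) * eNorm y) := by gcongr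
      _ ≤ 2 * (2 * Real.exp (4 * Real.pi) * growth (s + t)) := by gcongr
      _ = D := by rw [hD]; ring
  have hgt : 0 < growth t := one_pos.trans_le (one_le_growth ht)
  rw [← le_div_iff₀ hgt]
  refine csSup_le (hne s) fun r hr => ?_
  rw [le_div_iff₀ hgt]
  have hr0 : 0 ≤ r := by
    obtain ⟨_, w, _, _, rfl⟩ := hr
    exact eNorm_nonneg w
  rcases hr0.eq_or_lt with rfl | hr0
  · have := one_le_growth (add_nonneg hs ht)
    rw [zero_mul, hD]
    positivity
  rw [mul_comm, ← le_div_iff₀ hr0]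
  refine csSup_le (hne t) fun r' hr' => ?_
  rw [le_div_iff₀ hr0, mul_comm]
  exact hpair r hr r' hr'

/-- Following `[[0, -1/2], [2, 0]]` and then `[[0, -2], [1/2, 0]]`, for a quarter turn each,
multiplies the first basis vector by `-4` in time `π`. -/
lemma reach_pow (k : ℕ) : Reach Rset (k * Real.pi) ![1, 0] ((-4 : ℝ) ^ k • ![1, 0]) := by
  induction k with
  | zero =>
    have h := reach_flowMat (a := 2) (b := 1 / 2) (ω := 1) (S := Rset)
      (rmat_mem (by norm_num) (by norm_num) (by norm_num)) one_pos (by norm_num) 0 ![1, 0]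
    simpa [flowMat] using h
  | succ k ih =>
    have hpi := Real.pi_pos
    have h1 := reach_flowMat (a := 1 / 2) (b := 2) (ω := 1) (S := Rset)
      (rmat_mem (by norm_num) (by norm_num) (by norm_num)) one_pos (by norm_num)
      (Real.pi / 2) ![1, 0]
    have e1 : flowMat (1 / 2) 2 1 (Real.pi / 2) *ᵥ ![1, 0] = ![0, 2] := by
      ext i
      fin_cases i <;> simp [flowMat_mulVec_zero, flowMat_mulVec_one]
    have h2 := reach_flowMat (a := 2) (b := 1 / 2) (ω := 1) (S := Rset)
      (rmat_mem (by norm_num) (by norm_num) (by norm_num)) one_pos (by norm_num)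
      (Real.pi / 2) ![0, 2]
    have e2 : flowMat 2 (1 / 2) 1 (Real.pi / 2) *ᵥ ![0, 2] = (-4 : ℝ) • ![1, 0] := by
      ext i
      fin_cases i <;> simp [flowMat_mulVec_zero, flowMat_mulVec_one]
      norm_num
    rw [e1] at h1
    rw [e2] at h2
    have h3 := (h1.trans (by positivity) (by positivity) h2).smul ((-4 : ℝ) ^ k)
    have h4 := ih.trans (by positivity) (by positivity) h3
    rw [smul_smul, ← pow_succ, add_halves] at h4
    push_cast
    rwa [add_mul, one_mul]

/-- The growth factor of the planar system is `exp (l * t)` up to multiplicative constants, for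
some rate `l > 0`. -/
lemma exists_planar_rate : ∃ l C : ℝ, 0 < l ∧ 1 ≤ C ∧
    (∀ t, 0 ≤ t → ∀ v w, Reach Rset t v w → eNorm w ≤ C * Real.exp (l * t) * eNorm v) ∧
    (∀ t, 0 ≤ t → ∃ v w, v ≠ 0 ∧ Reach Rset t v w ∧
      1 / 2 * Real.exp (l * t) * eNorm v ≤ eNorm w) := by
  have hpos : ∀ t, 0 ≤ t → 0 < growth t := fun t ht => one_pos.trans_le (one_le_growth ht)
  obtain ⟨l, hl⟩ := exists_rate (f := fun t => Real.log (growth t))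
    (K := Real.log (4 * Real.exp (4 * Real.pi))) (K₁ := Real.log 2) (K₂ := 2) zero_le_two
    (fun t ht => Real.log_nonneg (one_le_growth ht))
    (fun s t hs ht => by
      rw [← Real.log_mul (hpos s hs).ne' (hpos t ht).ne']
      exact Real.log_le_log (hpos _ (by positivity)) (growth_add_le hs ht))
    (fun s t hs ht => by
      rw [← Real.log_mul (hpos s hs).ne' (hpos t ht).ne',
        ← Real.log_mul (hpos _ (by positivity)).ne' (by positivity), mul_comm (growth (s + t))]
      exact Real.log_le_log (mul_pos (hpos s hs) (hpos t ht)) (growth_mul_le hs ht))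
    (fun t ht => by
      rw [← Real.log_exp (2 * t), ← Real.log_mul two_ne_zero (Real.exp_pos _).ne']
      exact Real.log_le_log (hpos t ht) (growth_le ht))
  set C := 4 * Real.exp (4 * Real.pi) with hC
  have hCpos : 0 < C := by positivity
  have hC1 : 1 ≤ C := by
    have := Real.add_one_le_exp (4 * Real.pi)
    have := Real.pi_pos
    linarith
  have hlow : ∀ t, 0 ≤ t → Real.exp (l * t) ≤ growth t := fun t ht => by
    rw [← Real.le_log_iff_exp_le (hpos t ht)]
    exact (hl t ht).1
  have hup : ∀ t, 0 ≤ t → growth t ≤ C * Real.exp (l * t) := fun t ht => by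
    have h := (Real.log_le_iff_le_exp (hpos t ht)).1 (hl t ht).2
    rwa [Real.exp_add, Real.exp_log hCpos, mul_comm] at h
  refine ⟨l, C, ?_, hC1, fun t ht v w h => ?_, fun t ht => ?_⟩
  · by_contra hl0
    push Not at hl0
    have hbd : ∀ k : ℕ, (4:ℝ) ^ k ≤ C := by
      intro k
      have hk : 0 ≤ k * Real.pi := by positivity
      have h1 := reach_le_growth hk (reach_pow k)
      have h2 : eNorm (![1, 0] : Fin 2 → ℝ) = 1 := by simp [eNorm, Fin.sum_univ_two]
      rw [eNorm_smul, h2, mul_one, mul_one, abs_pow, abs_neg, abs_of_pos (by norm_num)] at h1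
      have h3 : Real.exp (l * (k * Real.pi)) ≤ 1 :=
        Real.exp_le_one_iff.2 (mul_nonpos_of_nonpos_of_nonneg hl0 hk)
      calc (4:ℝ) ^ k ≤ C * Real.exp (l * (k * Real.pi)) := h1.trans (hup _ hk)
        _ ≤ C * 1 := by gcongr
        _ = C := mul_one C
    obtain ⟨k, hk⟩ := pow_unbounded_of_one_lt C (by norm_num : (1:ℝ) < 4)
    exact absurd (hbd k) (not_le.2 hk)
  · have := eNorm_nonneg v
    exact (reach_le_growth ht h).trans (by gcongr; exact hup t ht)
  · obtain ⟨_, ⟨v, w, hv, h, rfl⟩, hlt⟩ := exists_lt_of_lt_csSup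
      (let ⟨r, hr, _⟩ := exists_growthSet t; ⟨r, hr⟩ : (growthSet t).Nonempty)
      (show 1 / 2 * growth t < growth t by linarith [hpos t ht])
    refine ⟨v, w, ?_, h, ?_⟩
    · rintro rfl
      rw [eNorm_eq_zero.2 rfl] at hv
      exact zero_ne_one hv
    · rw [hv, mul_one]
      linarith [hlow t ht]

end Switching

/-! ### Lyapunov exponents from two-sided bounds; the tensor structure of the system -/

namespace Switching

/-- Exponential growth at rate `l ≥ 0` up to multiplicative constants determines `Lambda`. -/
lemma Lambda_eq {n : Type*} [Fintype n] {S : Set (Matrix n n ℝ)} {l C c : ℝ} (hl : 0 ≤ l)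
    (hC : 1 ≤ C) (hc : 0 < c)
    (hup : ∀ t, 0 ≤ t → ∀ v w, Reach S t v w → eNorm w ≤ C * Real.exp (l * t) * eNorm v)
    (hlow : ∀ t, 0 ≤ t → ∃ v w, v ≠ 0 ∧ Reach S t v w ∧
      c * Real.exp (l * t) * eNorm v ≤ eNorm w) : Lambda S = l := by
  have hCpos : 0 < C := one_pos.trans_le hC
  have hlogC : 0 ≤ Real.log C := Real.log_nonneg hC
  have hub : ∀ t, 0 < t → ∀ r ∈ {r | ∃ x : ℝ → n → ℝ, IsTrajectory S x ∧ x 0 ≠ 0 ∧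
      r = (1 / t) * Real.log (eNorm (x t) / eNorm (x 0))}, r ≤ l + Real.log C / t := by
    rintro t ht _ ⟨x, hx, hx0, rfl⟩
    have h0 := eNorm_pos hx0
    have h1 := hup t ht.le _ _ ⟨x, hx, rfl, rfl⟩
    have h2 : Real.log (eNorm (x t) / eNorm (x 0)) ≤ Real.log C + l * t := by
      rcases (eNorm_nonneg (x t)).eq_or_lt with h | h
      · rw [← h, zero_div, Real.log_zero]
        positivity
      · rw [← Real.log_exp (l * t), ← Real.log_mul hCpos.ne' (Real.exp_pos _).ne']
        exact Real.log_le_log (by positivity) ((div_le_iff₀ h0).2 h1)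
    calc (1 / t) * Real.log (eNorm (x t) / eNorm (x 0))
        ≤ (1 / t) * (Real.log C + l * t) := by gcongr
      _ = l + Real.log C / t := by field_simp; ring
  have hlb : ∀ t, 0 < t → ∃ r ∈ {r | ∃ x : ℝ → n → ℝ, IsTrajectory S x ∧ x 0 ≠ 0 ∧
      r = (1 / t) * Real.log (eNorm (x t) / eNorm (x 0))}, l + Real.log c / t ≤ r := by
    intro t ht
    obtain ⟨_, _, hv, ⟨x, hx, rfl, rfl⟩, h1⟩ := hlow t ht.le
    refine ⟨_, ⟨x, hx, hv, rfl⟩, ?_⟩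
    have h0 := eNorm_pos hv
    have h2 : Real.log c + l * t ≤ Real.log (eNorm (x t) / eNorm (x 0)) := by
      rw [← Real.log_exp (l * t), ← Real.log_mul hc.ne' (Real.exp_pos _).ne']
      exact Real.log_le_log (by positivity) ((le_div_iff₀ h0).2 h1)
    calc l + Real.log c / t = (1 / t) * (Real.log c + l * t) := by field_simp; ring
      _ ≤ _ := by gcongr
  refine Tendsto.limUnder_eq ?_
  have hlim : ∀ d : ℝ, Tendsto (fun t : ℝ => l + d / t) atTop (nhds l) := fun d => by
    simpa using (tendsto_const_nhds (x := l)).add (tendsto_const_nhds.div_atTop tendsto_id)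
  refine tendsto_of_tendsto_of_tendsto_of_le_of_le' (hlim (Real.log c)) (hlim (Real.log C)) ?_ ?_
  · filter_upwards [eventually_gt_atTop 0] with t ht
    obtain ⟨r, hr, h⟩ := hlb t ht
    exact h.trans (le_csSup ⟨_, hub t ht⟩ hr)
  · filter_upwards [eventually_gt_atTop 0] with t ht
    obtain ⟨r, hr, -⟩ := hlb t ht
    exact csSup_le ⟨r, hr⟩ (hub t ht)

/-- The left tensor factor `q A₀ + (1 - q) A₁`. -/
def cmat (q : ℝ) : Matrix (Fin 2) (Fin 2) ℝ := !![-(1 - q), 1 - q; -(1 - q), -1]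

/-- `cmat q ⊗ I`. -/
abbrev ltens (q : ℝ) : Matrix (Fin 2 × Fin 2) (Fin 2 × Fin 2) ℝ :=
  cmat q ⊗ₖ (1 : Matrix (Fin 2) (Fin 2) ℝ)

/-- `I ⊗ P`. -/
abbrev rtens (P : Matrix (Fin 2) (Fin 2) ℝ) : Matrix (Fin 2 × Fin 2) (Fin 2 × Fin 2) ℝ :=
  (1 : Matrix (Fin 2) (Fin 2) ℝ) ⊗ₖ P

/-- The general element of `conv {X₀, X₁, X₂}`: `q` is the total weight of `X₀` and `X₁`. -/
def xmat (l q a b : ℝ) : Matrix (Fin 2 × Fin 2) (Fin 2 × Fin 2) ℝ :=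
  ltens q + q • rtens (rmat a b - l • 1)

/-- The four-dimensional system `conv {X₀, X₁, X₂}`. -/
abbrev Xset (l : ℝ) : Set (Matrix (Fin 2 × Fin 2) (Fin 2 × Fin 2) ℝ) :=
  convexHull ℝ {!![0, 0; 0, -1] ⊗ₖ (1 : Matrix (Fin 2) (Fin 2) ℝ) +
      (1 : Matrix (Fin 2) (Fin 2) ℝ) ⊗ₖ !![-l, -2; 1/2, -l],
    !![0, 0; 0, -1] ⊗ₖ (1 : Matrix (Fin 2) (Fin 2) ℝ) +
      (1 : Matrix (Fin 2) (Fin 2) ℝ) ⊗ₖ !![-l, -1/2; 2, -l],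
    !![-1, 1; -1, -1] ⊗ₖ (1 : Matrix (Fin 2) (Fin 2) ℝ)}

lemma exists_xmat {l : ℝ} {M : Matrix (Fin 2 × Fin 2) (Fin 2 × Fin 2) ℝ} (hM : M ∈ Xset l) :
    ∃ q a b : ℝ, 0 ≤ q ∧ q ≤ 1 ∧ a + b = 5 / 2 ∧ 1 / 2 ≤ a ∧ 1 / 2 ≤ b ∧ M = xmat l q a b := by
  rw [Xset, convexHull_insert (by simp), convexHull_pair, mem_convexJoin] at hM
  obtain ⟨X, rfl, Y, ⟨γ, δ, hγ, hδ, hγδ, rfl⟩, α, β, hα, hβ, hαβ, rfl⟩ := hM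
  have hβγ : 0 ≤ β * γ := by positivity
  have hβδ : 0 ≤ β * δ := by positivity
  have hsum : β * γ + β * δ = β := by rw [← mul_add, hγδ, mul_one]
  obtain ⟨a, b, hab, ha, hb, hqa, hqb⟩ : ∃ a b : ℝ, a + b = 5 / 2 ∧ 1 / 2 ≤ a ∧ 1 / 2 ≤ b ∧
      (α + β * γ) * a = 2 * α + β * γ / 2 ∧ (α + β * γ) * b = α / 2 + 2 * (β * γ) := by
    rcases (add_nonneg hα hβγ).eq_or_lt with h | h
    · have h1 : α = 0 := by linarith
      have h2 : β * γ = 0 := by linarith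
      exact ⟨2, 1 / 2, by norm_num, by norm_num, by norm_num, by rw [h1, h2]; norm_num,
        by rw [h1, h2]; norm_num⟩
    · refine ⟨(2 * α + β * γ / 2) / (α + β * γ), (α / 2 + 2 * (β * γ)) / (α + β * γ), ?_, ?_, ?_,
        mul_div_cancel₀ _ h.ne', mul_div_cancel₀ _ h.ne'⟩
      · field_simp
        ring
      · rw [le_div_iff₀ h]
        linarith
      · rw [le_div_iff₀ h]
        linarith
  refine ⟨α + β * γ, a, b, by positivity, by linarith, hab, ha, hb, ?_⟩
  ext ⟨i, j⟩ ⟨i', j'⟩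
  fin_cases i <;> fin_cases j <;> fin_cases i' <;> fin_cases j' <;>
    simp [xmat, cmat, rmat, Matrix.kroneckerMap_apply] <;> linarith

lemma mem_Xset {l : ℝ} {R : Matrix (Fin 2) (Fin 2) ℝ} (hR : R ∈ Rset) :
    ltens 1 + rtens (R - l • 1) ∈ Xset l := by
  have hconv : Convex ℝ {R : Matrix (Fin 2) (Fin 2) ℝ | ltens 1 + rtens (R - l • 1) ∈ Xset l} := by
    intro R hR R' hR' p q hp hq hpq
    have h := convex_convexHull ℝ _ hR hR' hp hq hpq
    rw [Set.mem_ofPred_eq]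
    convert h using 1
    ext ⟨i, j⟩ ⟨i', j'⟩
    simp only [Matrix.add_apply, Matrix.smul_apply, Matrix.kroneckerMap_apply, Matrix.sub_apply,
      smul_eq_mul]
    obtain rfl : q = 1 - p := by linarith
    ring
  refine convexHull_min ?_ hconv hR
  rintro R (rfl | rfl)
  · refine subset_convexHull ℝ _ (Or.inl ?_)
    ext ⟨i, j⟩ ⟨i', j'⟩
    fin_cases i <;> fin_cases j <;> fin_cases i' <;> fin_cases j' <;>
      simp [cmat, Matrix.kroneckerMap_apply]
  · refine subset_convexHull ℝ _ (Or.inr (Or.inl ?_))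
    ext ⟨i, j⟩ ⟨i', j'⟩
    fin_cases i <;> fin_cases j <;> fin_cases i' <;> fin_cases j' <;>
      simp [cmat, Matrix.kroneckerMap_apply]

lemma rtens_mulVec (P : Matrix (Fin 2) (Fin 2) ℝ) (v : Fin 2 × Fin 2 → ℝ) (i j : Fin 2) :
    (rtens P *ᵥ v) (i, j) = (P *ᵥ fun k => v (i, k)) j := by
  fin_cases i <;>
    simp [Matrix.mulVec, dotProduct, Fintype.sum_prod_type, Matrix.kroneckerMap_apply]

lemma ltens_mulVec (q : ℝ) (v : Fin 2 × Fin 2 → ℝ) (i j : Fin 2) :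
    (ltens q *ᵥ v) (i, j) = (cmat q *ᵥ fun k => v (k, j)) i := by
  fin_cases j <;>
    simp [Matrix.mulVec, dotProduct, Fintype.sum_prod_type, Matrix.kroneckerMap_apply]

lemma eNorm_rtens_le {P : Matrix (Fin 2) (Fin 2) ℝ} {D : ℝ} (hD : 0 ≤ D)
    (hP : ∀ u, eNorm (P *ᵥ u) ≤ D * eNorm u) (v : Fin 2 × Fin 2 → ℝ) :
    eNorm (rtens P *ᵥ v) ≤ D * eNorm v := by
  have h0 := eNorm_nonneg v
  refine eNorm_le_of_sq_le (by positivity) ?_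
  rw [mul_pow, eNorm_sq v, Fintype.sum_prod_type, Fintype.sum_prod_type, Finset.mul_sum]
  refine Finset.sum_le_sum fun i _ => ?_
  have h := pow_le_pow_left₀ (eNorm_nonneg _) (hP fun k => v (i, k)) 2
  rw [mul_pow, eNorm_sq, eNorm_sq] at h
  simpa only [rtens_mulVec] using h

lemma cmat_mulVec (q : ℝ) (u : Fin 2 → ℝ) :
    cmat q *ᵥ u = ![(1 - q) * (u 1 - u 0), -(1 - q) * u 0 - u 1] := by
  ext i
  fin_cases i <;> simp [cmat, Matrix.mulVec, dotProduct, Fin.sum_univ_two] <;> ring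

lemma eNorm_ltens_le {q : ℝ} (hq0 : 0 ≤ q) (hq1 : q ≤ 1) (v : Fin 2 × Fin 2 → ℝ) :
    eNorm (ltens q *ᵥ v) ≤ 2 * eNorm v := by
  have h0 := eNorm_nonneg v
  refine eNorm_le_of_sq_le (by positivity) ?_
  rw [mul_pow, eNorm_sq v, Fintype.sum_prod_type, Fintype.sum_prod_type]
  simp only [ltens_mulVec, cmat_mulVec, Fin.sum_univ_two]
  simp only [Matrix.cons_val_zero, Matrix.cons_val_one]
  have key : ∀ y z : ℝ,
      ((1 - q) * (z - y)) ^ 2 + (-(1 - q) * y - z) ^ 2 ≤ 4 * (y ^ 2 + z ^ 2) := by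
    intro y z
    have hp : (1 - q) ^ 2 ≤ 1 := by nlinarith
    nlinarith [sq_nonneg (z + y), sq_nonneg ((1 - q) * y - z), sq_nonneg y, sq_nonneg z,
      mul_nonneg (sub_nonneg.2 hp) (sq_nonneg y), mul_nonneg (sub_nonneg.2 hp) (sq_nonneg (z - y))]
  have h1 := key (v (0, 0)) (v (1, 0))
  have h2 := key (v (0, 1)) (v (1, 1))
  linarith

/-- The symmetric part of `cmat q` is negative semidefinite, so an Euler step with `cmat q ⊗ I`
expands the Euclidean norm by `1 + O(h²)` only. -/
lemma eNorm_add_ltens_le {q : ℝ} (hq0 : 0 ≤ q) (hq1 : q ≤ 1) {h : ℝ} (hh : 0 ≤ h)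
    (v : Fin 2 × Fin 2 → ℝ) : eNorm (v + h • ltens q *ᵥ v) ≤ (1 + 2 * h ^ 2) * eNorm v := by
  have h0 := eNorm_nonneg v
  refine eNorm_le_of_sq_le (by positivity) ?_
  have h1 := pow_le_pow_left₀ (eNorm_nonneg _) (eNorm_ltens_le hq0 hq1 v) 2
  have hcross : ∑ p, v p * (ltens q *ᵥ v) p ≤ 0 := by
    rw [Fintype.sum_prod_type]
    simp only [ltens_mulVec, cmat_mulVec, Fin.sum_univ_two]
    simp only [Matrix.cons_val_zero, Matrix.cons_val_one]
    nlinarith [mul_nonneg (sub_nonneg.2 hq1) (sq_nonneg (v (0, 0))),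
      mul_nonneg (sub_nonneg.2 hq1) (sq_nonneg (v (0, 1))), sq_nonneg (v (1, 0)),
      sq_nonneg (v (1, 1))]
  have hexp : ∑ p, (v + h • ltens q *ᵥ v) p ^ 2
      = eNorm v ^ 2 + 2 * h * ∑ p, v p * (ltens q *ᵥ v) p + h ^ 2 * eNorm (ltens q *ᵥ v) ^ 2 := by
    rw [eNorm_sq, eNorm_sq, Finset.mul_sum, Finset.mul_sum, ← Finset.sum_add_distrib,
      ← Finset.sum_add_distrib]
    refine Finset.sum_congr rfl fun p _ => ?_
    simp only [Pi.add_apply, Pi.smul_apply, smul_eq_mul]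
    ring
  rw [hexp]
  have h2 : 2 * h * ∑ p, v p * (ltens q *ᵥ v) p ≤ 0 :=
    mul_nonpos_of_nonneg_of_nonpos (by positivity) hcross
  have h3 : h ^ 2 * eNorm (ltens q *ᵥ v) ^ 2 ≤ h ^ 2 * (2 * eNorm v) ^ 2 := by gcongr
  nlinarith [sq_nonneg (h ^ 2 * eNorm v)]

end Switching

/-! ### The extremal seminorm -/

namespace Switching

/-- The planar system expands the Euclidean norm by at most `C e^{lt}` in time `t`. -/
def PlanarBound (l C : ℝ) : Prop :=
  ∀ t, 0 ≤ t → ∀ v w, Reach Rset t v w → eNorm w ≤ C * Real.exp (l * t) * eNorm v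

/-- Pairs `(t, P)` where `P` is a time-`t` transition matrix of the planar system, i.e. every
`v` can be steered to `P v` in time `t`. -/
abbrev Transition : Type :=
  {p : ℝ × Matrix (Fin 2) (Fin 2) ℝ // 0 ≤ p.1 ∧ ∀ v, Reach Rset p.1 v (p.2 *ᵥ v)}

lemma flowMat_zero (a b ω : ℝ) : flowMat a b ω 0 = 1 := by
  simp [flowMat]

/-- The identity, as a transition matrix in time `0`. -/
noncomputable instance : Inhabited Transition :=
  ⟨(0, 1), le_rfl, by
    have h := reach_flowMat (rmat_mem (a := 2) (b := 1 / 2) (by norm_num) (by norm_num) le_rfl)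
      one_pos (by norm_num) 0
    rwa [flowMat_zero] at h⟩

/-- The summands of `extremal`. -/
noncomputable def weighted (l : ℝ) (p : Transition) (v : Fin 2 × Fin 2 → ℝ) : ℝ :=
  Real.exp (-l * p.1.1) * eNorm (rtens p.1.2 *ᵥ v)

lemma weighted_le {l C : ℝ} (hC : 0 ≤ C) (h : PlanarBound l C) (p : Transition)
    (v : Fin 2 × Fin 2 → ℝ) : weighted l p v ≤ C * eNorm v := by
  have h1 : eNorm (rtens p.1.2 *ᵥ v) ≤ C * Real.exp (l * p.1.1) * eNorm v :=
    eNorm_rtens_le (by positivity) (fun u => h _ p.2.1 _ _ (p.2.2 u)) v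
  have h2 : Real.exp (-l * p.1.1) * Real.exp (l * p.1.1) = 1 := by
    rw [← Real.exp_add]
    simp
  calc weighted l p v ≤ Real.exp (-l * p.1.1) * (C * Real.exp (l * p.1.1) * eNorm v) := by
        unfold weighted
        gcongr
    _ = (Real.exp (-l * p.1.1) * Real.exp (l * p.1.1)) * (C * eNorm v) := by ring
    _ = C * eNorm v := by rw [h2, one_mul]

lemma bddAbove_weighted {l C : ℝ} (hC : 0 ≤ C) (h : PlanarBound l C) (v : Fin 2 × Fin 2 → ℝ) :
    BddAbove (Set.range fun p => weighted l p v) :=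
  ⟨C * eNorm v, by rintro _ ⟨p, rfl⟩; exact weighted_le hC h p v⟩

/-- The supremum of `e^{-lt} ‖(I ⊗ P) v‖` over all transition matrices `P` of the planar
system. -/
noncomputable def extremal {l C : ℝ} (hC : 0 ≤ C) (h : PlanarBound l C) :
    Seminorm ℝ (Fin 2 × Fin 2 → ℝ) :=
  Seminorm.of (fun v => ⨆ p, weighted l p v)
    (fun v w => ciSup_le fun p => by
      have h1 := le_ciSup (bddAbove_weighted hC h v) p
      have h2 := le_ciSup (bddAbove_weighted hC h w) p
      refine le_trans ?_ (add_le_add h1 h2)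
      simp only [weighted]
      rw [← mul_add, Matrix.mulVec_add]
      gcongr
      exact eNorm_add_le _ _)
    (fun c v => by
      rw [Real.norm_eq_abs, Real.mul_iSup_of_nonneg (abs_nonneg c)]
      refine iSup_congr fun p => ?_
      simp only [weighted]
      rw [Matrix.mulVec_smul, eNorm_smul]
      ring)

section extremal
variable {l C : ℝ} (hC : 0 ≤ C) (h : PlanarBound l C)

lemma weighted_le_extremal (p : Transition) (v : Fin 2 × Fin 2 → ℝ) :
    weighted l p v ≤ extremal hC h v :=
  le_ciSup (bddAbove_weighted hC h v) p

lemma extremal_le_iff {v : Fin 2 × Fin 2 → ℝ} {K : ℝ} :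
    extremal hC h v ≤ K ↔ ∀ p, weighted l p v ≤ K :=
  ciSup_le_iff (bddAbove_weighted hC h v)

lemma eNorm_le_extremal (v : Fin 2 × Fin 2 → ℝ) : eNorm v ≤ extremal hC h v := by
  have h1 := weighted_le_extremal hC h default v
  have h2 : (default : Transition).1 = (0, 1) := rfl
  simpa [weighted, h2] using h1

lemma extremal_le (v : Fin 2 × Fin 2 → ℝ) : extremal hC h v ≤ C * eNorm v :=
  (extremal_le_iff hC h).2 fun p => weighted_le hC h p v

/-- The semigroup property of transition matrices makes `extremal` non-increasing along the
shifted planar flows. -/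
lemma extremal_flow_le {a b ω : ℝ} (hS : rmat a b ∈ Rset) (hω : 0 < ω) (hab : ω ^ 2 = a * b)
    {t : ℝ} (ht : 0 ≤ t) (v : Fin 2 × Fin 2 → ℝ) :
    extremal hC h (rtens (Real.exp (-l * t) • flowMat a b ω t) *ᵥ v) ≤ extremal hC h v := by
  rw [extremal_le_iff]
  intro p
  let r : Transition := ⟨(t + p.1.1, p.1.2 * flowMat a b ω t), add_nonneg ht p.2.1, fun u => by
    rw [← Matrix.mulVec_mulVec]
    exact (reach_flowMat hS hω hab t u).trans ht p.2.1 (p.2.2 _)⟩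
  refine le_trans (le_of_eq ?_) (weighted_le_extremal hC h r v)
  have hr : rtens (p.1.2 * flowMat a b ω t) = rtens p.1.2 * rtens (flowMat a b ω t) := by
    simp [rtens, ← Matrix.mul_kronecker_mul]
  simp only [weighted, r]
  have hs : rtens (Real.exp (-l * t) • flowMat a b ω t)
      = Real.exp (-l * t) • rtens (flowMat a b ω t) := Matrix.kronecker_smul _ _ _
  rw [hr, hs, Matrix.smul_mulVec, Matrix.mulVec_smul, eNorm_smul,
    abs_of_pos (Real.exp_pos _), Matrix.mulVec_mulVec, ← mul_assoc, ← Real.exp_add]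
  ring_nf

/-- `ltens` commutes with all `rtens`, so an Euler step with `ltens q` is harmless for
`extremal` as well. -/
lemma extremal_add_ltens_le {q s : ℝ} (hq0 : 0 ≤ q) (hq1 : q ≤ 1) (hs : 0 ≤ s)
    (v : Fin 2 × Fin 2 → ℝ) :
    extremal hC h (v + s • ltens q *ᵥ v) ≤ (1 + 2 * s ^ 2) * extremal hC h v := by
  rw [extremal_le_iff]
  intro p
  have hcomm : rtens p.1.2 * ltens q = ltens q * rtens p.1.2 := by
    simp [rtens, ltens, ← Matrix.mul_kronecker_mul]
  have h1 : rtens p.1.2 *ᵥ (v + s • ltens q *ᵥ v)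
      = rtens p.1.2 *ᵥ v + s • ltens q *ᵥ (rtens p.1.2 *ᵥ v) := by
    rw [Matrix.mulVec_add, Matrix.mulVec_smul, Matrix.mulVec_mulVec, Matrix.mulVec_mulVec, hcomm]
  calc weighted l p (v + s • ltens q *ᵥ v)
      ≤ Real.exp (-l * p.1.1) * ((1 + 2 * s ^ 2) * eNorm (rtens p.1.2 *ᵥ v)) := by
        rw [weighted, h1]
        gcongr
        exact eNorm_add_ltens_le hq0 hq1 hs _
    _ = (1 + 2 * s ^ 2) * weighted l p v := by
        rw [weighted]
        ring
    _ ≤ _ := by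
        gcongr
        exact weighted_le_extremal hC h p v

end extremal

lemma eNorm_smul_one_add_rmat_le {a b : ℝ} (hab : a + b = 5 / 2) (ha : 1 / 2 ≤ a) (hb : 1 / 2 ≤ b)
    (α β : ℝ) (u : Fin 2 → ℝ) :
    eNorm ((α • 1 + β • rmat a b : Matrix (Fin 2) (Fin 2) ℝ) *ᵥ u) ≤ (|α| + 2 * |β|) * eNorm u := by
  have h1 : eNorm (rmat a b *ᵥ u) ≤ 2 * eNorm u := by
    have h0 := eNorm_nonneg u
    refine eNorm_le_of_sq_le (by positivity) ?_
    rw [mul_pow, eNorm_sq, Fin.sum_univ_two, Fin.sum_univ_two, rmat_mulVec_zero, rmat_mulVec_one]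
    have ha2 : a ^ 2 ≤ 4 := by nlinarith
    have hb2 : b ^ 2 ≤ 4 := by nlinarith
    nlinarith [mul_le_mul_of_nonneg_right ha2 (sq_nonneg (u 1)),
      mul_le_mul_of_nonneg_right hb2 (sq_nonneg (u 0))]
  rw [Matrix.add_mulVec, Matrix.smul_mulVec, Matrix.smul_mulVec, Matrix.one_mulVec]
  refine (eNorm_add_le _ _).trans ?_
  rw [eNorm_smul, eNorm_smul]
  nlinarith [mul_le_mul_of_nonneg_left h1 (abs_nonneg β)]

/-- Second-order accuracy of the Euler step `1 + u B`, `B = rmat a b - l`, for the flow of `B`. -/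
lemma eNorm_flow_sub_le {l a b ω u : ℝ} (hl : 0 ≤ l) (hab : a + b = 5 / 2) (ha : 1 / 2 ≤ a)
    (hb : 1 / 2 ≤ b) (hω : 0 < ω) (hω2 : ω ≤ 2) (hu : 0 ≤ u) (hu2 : u ≤ 1 / 2)
    (hlu : l * u ≤ 1) (w : Fin 2 → ℝ) :
    eNorm ((1 + u • (rmat a b - l • 1) - Real.exp (-l * u) • flowMat a b ω u) *ᵥ w)
      ≤ (l ^ 2 + 2 * l + 4) * u ^ 2 * eNorm w := by
  have hlu0 : 0 ≤ l * u := by positivity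
  set e := Real.exp (-l * u) with he
  have he0 : 0 < e := Real.exp_pos _
  have he1 : e ≤ 1 := Real.exp_le_one_iff.2 (by linarith)
  have he2 : 1 - l * u ≤ e := by linarith [Real.add_one_le_exp (-l * u)]
  have he3 : e ≤ 1 - l * u + (l * u) ^ 2 := by
    have h := Real.abs_exp_sub_one_sub_id_le (x := -l * u)
      (by rw [abs_le]; constructor <;> linarith)
    have h' := (abs_le.1 h).2
    nlinarith
  have hωu0 : 0 ≤ ω * u := by positivity
  have hωu1 : ω * u ≤ 1 := by nlinarith
  have hωu2 : (ω * u) ^ 2 ≤ 4 * u ^ 2 := by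
    rw [mul_pow]
    exact mul_le_mul_of_nonneg_right (by nlinarith) (sq_nonneg u)
  have hc1 := Real.cos_le_one (ω * u)
  have hc2 := Real.one_sub_sq_div_two_le_cos (x := ω * u)
  set c := Real.cos (ω * u) with hc
  set s := Real.sin (ω * u) / ω with hs
  have hs1 : s ≤ u := by
    rw [hs, div_le_iff₀ hω]
    linarith [Real.sin_le hωu0]
  have hs2 : u - u ^ 2 / 2 ≤ s := by
    rw [hs, le_div_iff₀ hω]
    have h3 : ω * u - (ω * u) ^ 3 / 6 ≤ Real.sin (ω * u) := by
      rcases hωu0.eq_or_lt with h | h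
      · simp [← h]
      · exact (Real.sin_gt_sub_cube h).le
    have h4 : (ω * u) ^ 3 ≤ 2 * u ^ 2 * ω := by
      calc (ω * u) ^ 3 = (ω * u) ^ 2 * u * ω := by ring
        _ ≤ 4 * u ^ 2 * (1 / 2) * ω := by gcongr
        _ = 2 * u ^ 2 * ω := by ring
    nlinarith [mul_nonneg (sq_nonneg u) hω.le]
  have heq : 1 + u • (rmat a b - l • 1) - e • flowMat a b ω u
      = (1 - l * u - e * c) • (1 : Matrix (Fin 2) (Fin 2) ℝ) + (u - e * s) • rmat a b := by
    rw [flowMat, ← hc, ← hs]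
    module
  rw [heq]
  refine (eNorm_smul_one_add_rmat_le hab ha hb _ _ w).trans ?_
  have hf1 : |1 - l * u - e * c| ≤ (l ^ 2 + 2) * u ^ 2 := by
    rw [abs_le]
    constructor <;> nlinarith [sq_nonneg u, mul_le_mul_of_nonneg_left hc1 he0.le,
      mul_nonneg (sub_nonneg.2 he1) (sub_nonneg.2 hc1)]
  have hf2 : |u - e * s| ≤ (l + 1) * u ^ 2 := by
    rw [abs_le]
    constructor
    · nlinarith [mul_le_mul_of_nonneg_left hs1 he0.le, mul_le_mul_of_nonneg_right he1 hu,
        mul_nonneg hlu0 hu, sq_nonneg u]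
    · nlinarith [mul_le_mul_of_nonneg_left hs2 he0.le, mul_le_mul_of_nonneg_right he2 hu,
        mul_nonneg (sub_nonneg.2 he1) (sq_nonneg u), sq_nonneg u]
  refine mul_le_mul_of_nonneg_right ?_ (eNorm_nonneg w)
  linarith

/-- One Euler step of the four-dimensional system increases `extremal` by `O(h²)` only. -/
lemma extremal_step {l C : ℝ} (hl : 0 ≤ l) (hC : 0 ≤ C) (hP : PlanarBound l C) :
    ∃ K', 0 ≤ K' ∧ ∀ M ∈ Xset l, ∀ v, ∀ h, 0 ≤ h → h ≤ 1 / (2 + l) →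
      extremal hC hP (v + h • M *ᵥ v) ≤ extremal hC hP v + K' * h ^ 2 * ‖v‖ := by
  set D := l ^ 2 + 2 * l + 4 with hD
  have hD0 : 0 ≤ D := by positivity
  refine ⟨(2 * C + C * (D + 2 * (D + (l + 2)))) * 4, by positivity, ?_⟩
  intro M hM v h hh0 hh
  obtain ⟨q, a, b, hq0, hq1, hab, ha, hb, rfl⟩ := exists_xmat hM
  set u := q * h with hu
  have hu0 : 0 ≤ u := by positivity
  have huh : u ≤ h := by nlinarith
  rw [le_div_iff₀ (by positivity)] at hh
  have hh2 : h ≤ 1 / 2 := by nlinarith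
  have hlu : l * u ≤ 1 := by nlinarith
  have hab0 : 0 < a * b := by positivity
  set ω := √(a * b) with hω
  have hω0 : 0 < ω := Real.sqrt_pos.2 hab0
  have hωab : ω ^ 2 = a * b := Real.sq_sqrt hab0.le
  have hω2 : ω ≤ 2 := by nlinarith [sq_nonneg (a - b)]
  set B : Matrix (Fin 2) (Fin 2) ℝ := rmat a b - l • 1 with hB
  set E : Matrix (Fin 2) (Fin 2) ℝ := Real.exp (-l * u) • flowMat a b ω u with hE
  set F : Matrix (Fin 2) (Fin 2) ℝ := 1 + u • B - E with hF
  have hFle : ∀ w, eNorm (F *ᵥ w) ≤ D * u ^ 2 * eNorm w :=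
    eNorm_flow_sub_le hl hab ha hb hω0 hω2 hu0 (huh.trans hh2) hlu
  have hu2 : u ^ 2 ≤ h ^ 2 := by gcongr
  have huu : u ^ 2 ≤ h := by nlinarith
  have h1E : ∀ w, eNorm ((1 - E) *ᵥ w) ≤ (D + (l + 2)) * h * eNorm w := by
    intro w
    have h1 : 1 - E = F + u • (l • 1 + (-1 : ℝ) • rmat a b) := by
      rw [hF, hB]
      module
    have h2 := eNorm_smul_one_add_rmat_le hab ha hb l (-1) w
    rw [abs_neg, abs_of_nonneg hl, abs_one, mul_one] at h2
    rw [h1, Matrix.add_mulVec, Matrix.smul_mulVec]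
    refine (eNorm_add_le _ _).trans ?_
    rw [eNorm_smul, abs_of_nonneg hu0]
    have hw := eNorm_nonneg w
    calc _ ≤ D * u ^ 2 * eNorm w + u * ((l + 2) * eNorm w) := by
          gcongr
          exact hFle w
      _ ≤ D * h * eNorm w + h * ((l + 2) * eNorm w) := by gcongr
      _ = _ := by ring
  set y := rtens E *ᵥ v with hy
  set err := rtens F *ᵥ v + h • ltens q *ᵥ (rtens (1 - E) *ᵥ v) with herr
  have hsplit : v + h • xmat l q a b *ᵥ v = (y + h • ltens q *ᵥ y) + err := by
    have h1 : rtens F = 1 + u • rtens B - rtens E := by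
      ext ⟨i, j⟩ ⟨i', j'⟩
      by_cases hi : i = i' <;> by_cases hj : j = j' <;>
        simp [hF, hi, hj, Matrix.kroneckerMap_apply]
    have h2 : rtens (1 - E) = 1 - rtens E := by
      ext ⟨i, j⟩ ⟨i', j'⟩
      by_cases hi : i = i' <;> by_cases hj : j = j' <;>
        simp [hi, hj, Matrix.kroneckerMap_apply]
    rw [herr, hy, h1, h2, xmat, ← hB]
    simp only [Matrix.add_mulVec, Matrix.sub_mulVec, Matrix.smul_mulVec, Matrix.one_mulVec,
      Matrix.mulVec_sub, hu]
    module
  have hv := eNorm_nonneg v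
  have herrle : eNorm err ≤ (D + 2 * (D + (l + 2))) * h ^ 2 * eNorm v := by
    refine (eNorm_add_le _ _).trans ?_
    rw [eNorm_smul, abs_of_nonneg hh0]
    calc _ ≤ D * u ^ 2 * eNorm v + h * (2 * ((D + (l + 2)) * h * eNorm v)) := by
          gcongr
          · exact eNorm_rtens_le (by positivity) hFle v
          · refine (eNorm_ltens_le hq0 hq1 _).trans ?_
            gcongr
            exact eNorm_rtens_le (by positivity) h1E v
      _ ≤ D * h ^ 2 * eNorm v + h * (2 * ((D + (l + 2)) * h * eNorm v)) := by gcongr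
      _ = _ := by ring
  have hvn : eNorm v ≤ 4 * ‖v‖ := by simpa using eNorm_le_card v
  rw [hsplit]
  calc _ ≤ extremal hC hP (y + h • ltens q *ᵥ y) + extremal hC hP err := map_add_le_add _ _ _
    _ ≤ (1 + 2 * h ^ 2) * extremal hC hP y + C * eNorm err :=
        add_le_add (extremal_add_ltens_le hC hP hq0 hq1 hh0 y) (extremal_le hC hP err)
    _ ≤ (1 + 2 * h ^ 2) * extremal hC hP v
          + C * ((D + 2 * (D + (l + 2))) * h ^ 2 * eNorm v) := by
        gcongr
        exact extremal_flow_le hC hP (rmat_mem hab ha hb) hω0 hωab hu0 v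
    _ = extremal hC hP v + 2 * h ^ 2 * extremal hC hP v
          + C * ((D + 2 * (D + (l + 2))) * h ^ 2 * eNorm v) := by ring
    _ ≤ extremal hC hP v + 2 * h ^ 2 * (C * (4 * ‖v‖))
          + C * ((D + 2 * (D + (l + 2))) * h ^ 2 * (4 * ‖v‖)) := by
        gcongr
        exact (extremal_le hC hP v).trans (by gcongr)
    _ = _ := by ring

lemma xset_norm_le {l : ℝ} (hl : 0 ≤ l) :
    ∀ M ∈ Xset l, ∀ v, ‖M *ᵥ v‖ ≤ (4 * (l + 4)) * ‖v‖ := by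
  intro M hM v
  obtain ⟨q, a, b, hq0, hq1, hab, ha, hb, rfl⟩ := exists_xmat hM
  have hv := eNorm_nonneg v
  have hvn : eNorm v ≤ 4 * ‖v‖ := by simpa using eNorm_le_card v
  have hB : eNorm (rtens (rmat a b - l • 1) *ᵥ v) ≤ (l + 2) * eNorm v := by
    refine eNorm_rtens_le (by positivity) (fun w => ?_) v
    have h1 : rmat a b - l • 1 = (-l) • 1 + (1 : ℝ) • rmat a b := by module
    have h2 := eNorm_smul_one_add_rmat_le hab ha hb (-l) 1 w
    rwa [abs_neg, abs_of_nonneg hl, abs_one, mul_one, ← h1] at h2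
  calc ‖xmat l q a b *ᵥ v‖ ≤ eNorm (xmat l q a b *ᵥ v) := norm_le_eNorm _
    _ ≤ eNorm (ltens q *ᵥ v) + q * eNorm (rtens (rmat a b - l • 1) *ᵥ v) := by
        rw [xmat, Matrix.add_mulVec, Matrix.smul_mulVec]
        refine (eNorm_add_le _ _).trans ?_
        rw [eNorm_smul, abs_of_nonneg hq0]
    _ ≤ 2 * eNorm v + 1 * ((l + 2) * eNorm v) := by
        exact add_le_add (eNorm_ltens_le hq0 hq1 v)
          (mul_le_mul hq1 hB (eNorm_nonneg _) zero_le_one)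
    _ = (l + 4) * eNorm v := by ring
    _ ≤ (l + 4) * (4 * ‖v‖) := by gcongr
    _ = _ := by ring

/-- Marginal stability of the four-dimensional system. -/
lemma xset_bounded {l C : ℝ} (hl : 0 ≤ l) (hC : 0 ≤ C) (hP : PlanarBound l C)
    {x : ℝ → Fin 2 × Fin 2 → ℝ} (hx : IsTrajectory (Xset l) x) {t : ℝ} (ht : 0 ≤ t) :
    eNorm (x t) ≤ C * eNorm (x 0) := by
  obtain ⟨K', hK', hstep⟩ := extremal_step hl hC hP
  have hL : ∀ v, extremal hC hP v ≤ (C * 4) * ‖v‖ := fun v => by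
    have hvn : eNorm v ≤ 4 * ‖v‖ := by simpa using eNorm_le_card v
    calc _ ≤ C * eNorm v := extremal_le hC hP v
      _ ≤ C * (4 * ‖v‖) := by gcongr
      _ = _ := by ring
  have h := seminorm_le_of_step (by positivity) (xset_norm_le hl) (extremal hC hP) (by positivity)
    hL hK' (by positivity) hstep hx ht
  exact (eNorm_le_extremal hC hP _).trans (h.trans (extremal_le hC hP _))

end Switching

/-! ### The lower bound and the Hurwitz property -/

namespace Switching

/-- The product rule for `e^{-lt} g t` when `g` is only an indefinite integral. -/
lemma exp_mul_eq_integral {f g : ℝ → ℝ} (l : ℝ) {t : ℝ} (ht : 0 ≤ t)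
    (hf : IntervalIntegrable f volume 0 t)
    (hg : ∀ s, 0 ≤ s → g s = g 0 + ∫ u in (0:ℝ)..s, f u) :
    Real.exp (-l * t) * g t
      = g 0 + ∫ s in (0:ℝ)..t, Real.exp (-l * s) * (f s - l * g s) := by
  set G : ℝ → ℝ := fun s => g 0 + ∫ u in (0:ℝ)..s, f u with hG
  have hGac : AbsolutelyContinuousOnInterval G 0 t := by
    have h1 : AbsolutelyContinuousOnInterval (fun _ : ℝ => g 0) 0 t :=
      (contDiff_const (n := 1)).contDiffOn.absolutelyContinuousOnInterval
    exact h1.fun_add (hf.absolutelyContinuousOnInterval_intervalIntegral Set.left_mem_uIcc)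
  have hE : ∀ s, HasDerivAt (fun s => Real.exp (-l * s)) (Real.exp (-l * s) * -l) s := fun s => by
    simpa using ((hasDerivAt_id s).const_mul (-l)).exp
  have hEac : AbsolutelyContinuousOnInterval (fun s => Real.exp (-l * s)) 0 t := by
    refine ContDiffOn.absolutelyContinuousOnInterval (ContDiff.contDiffOn ?_)
    fun_prop
  have h := hEac.integral_deriv_mul_eq_sub hGac
  have hG0 : G 0 = g 0 := by simp [hG]
  have hGt : G t = g t := (hg t ht).symm
  rw [hG0, hGt, mul_zero, Real.exp_zero, one_mul] at h
  rw [← sub_eq_iff_eq_add', ← h]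
  refine intervalIntegral.integral_congr_ae ?_
  filter_upwards [hf.ae_hasDerivAt_integral] with s hs hst
  have hs0 : 0 ≤ s := by
    rw [Set.uIoc_of_le ht] at hst
    exact hst.1.le
  have h1 : HasDerivAt G (f s) s :=
    (hs (Set.uIoc_subset_uIcc hst) 0 Set.left_mem_uIcc).const_add _
  have hgs : G s = g s := (hg s hs0).symm
  rw [(hE s).deriv, h1.deriv, hgs]
  ring

section pi
variable {m : Type*} [Fintype m]

lemma intervalIntegrable_pi_iff {f : ℝ → m → ℝ} {a b : ℝ} :
    IntervalIntegrable f volume a b ↔ ∀ i, IntervalIntegrable (fun s => f s i) volume a b := by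
  simp only [intervalIntegrable_iff, IntegrableOn]
  exact integrable_pi_iff

lemma intervalIntegral_apply {f : ℝ → m → ℝ} {a b : ℝ} (hf : IntervalIntegrable f volume a b)
    (i : m) : (∫ s in a..b, f s) i = ∫ s in a..b, f s i :=
  ((ContinuousLinearMap.proj (R := ℝ) (φ := fun _ : m => ℝ) i).intervalIntegral_comp_comm hf).symm

end pi

/-- The plane `e₀ ⊗ ℝ²` is invariant under `X₀` and `X₁`, which act on it as the planar system
damped by `e^{-lt}`. -/
lemma isTrajectory_embed (l : ℝ) {y : ℝ → Fin 2 → ℝ} (hy : IsTrajectory Rset y) :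
    IsTrajectory (Xset l) (fun t p => (![1, 0] : Fin 2 → ℝ) p.1 * (Real.exp (-l * t) * y t p.2)) := by
  obtain ⟨hc, A, hm, hS, hi, he⟩ := hy
  set z : ℝ → Fin 2 × Fin 2 → ℝ :=
    fun t p => (![1, 0] : Fin 2 → ℝ) p.1 * (Real.exp (-l * t) * y t p.2) with hz
  have hcj : ∀ j, Continuous fun t => y t j := fun j => (continuous_apply j).comp hc
  have hval : ∀ s p, ((ltens 1 + rtens (A s - l • 1)) *ᵥ z s) p
      = (![1, 0] : Fin 2 → ℝ) p.1 * (Real.exp (-l * s) * ((A s *ᵥ y s) p.2 - l * y s p.2)) := by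
    rintro s ⟨i, j⟩
    rw [Matrix.add_mulVec, Pi.add_apply, ltens_mulVec, rtens_mulVec, cmat_mulVec]
    fin_cases i <;> fin_cases j <;>
      simp [hz, Matrix.mulVec, dotProduct, Fin.sum_univ_two] <;> ring
  have hfi : ∀ t, 0 ≤ t → ∀ j, IntervalIntegrable (fun s => (A s *ᵥ y s) j) volume 0 t :=
    fun t ht j => intervalIntegrable_pi_iff.1 (hi t ht) j
  have hint : ∀ t, 0 ≤ t → IntervalIntegrable
      (fun s => (ltens 1 + rtens (A s - l • 1)) *ᵥ z s) volume 0 t := by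
    intro t ht
    rw [intervalIntegrable_pi_iff]
    intro p
    simp only [hval]
    have hcont : Continuous fun s => l * y s p.2 := (hcj p.2).const_mul l
    exact (((hfi t ht p.2).sub (hcont.intervalIntegrable _ _)).continuousOn_mul
      (by fun_prop)).const_mul _
  refine ⟨?_, fun s => ltens 1 + rtens (A s - l • 1), fun p p' => ?_,
    fun s hs => mem_Xset (hS s hs), hint, fun t ht => ?_⟩
  · refine continuous_pi fun p => ?_
    have := hcj p.2
    fun_prop
  · simp only [Matrix.add_apply, Matrix.kroneckerMap_apply, Matrix.sub_apply]
    have := hm p.2 p'.2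
    fun_prop
  · ext p
    rw [Pi.add_apply, intervalIntegral_apply (hint t ht)]
    simp only [hval]
    rw [intervalIntegral.integral_const_mul, hz]
    simp only
    rw [exp_mul_eq_integral (f := fun s => (A s *ᵥ y s) p.2) (g := fun s => y s p.2) l ht (hfi t ht p.2)]
    · simp [mul_add]
    · intro s hs
      have h := congrFun (he s hs) p.2
      rwa [Pi.add_apply, intervalIntegral_apply (hi s hs)] at h

/-- Trajectories on the invariant plane do not decay, uniformly in time. -/
lemma xset_lower {l c : ℝ}
    (hlow : ∀ t, 0 ≤ t → ∃ v w, v ≠ 0 ∧ Reach Rset t v w ∧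
      c * Real.exp (l * t) * eNorm v ≤ eNorm w) :
    ∀ t, 0 ≤ t → ∃ v w, v ≠ 0 ∧ Reach (Xset l) t v w ∧
      c * Real.exp (0 * t) * eNorm v ≤ eNorm w := by
  intro t ht
  obtain ⟨_, _, hv, ⟨y, hy, rfl, rfl⟩, h⟩ := hlow t ht
  have hn : ∀ s, eNorm (fun p : Fin 2 × Fin 2 =>
      (![1, 0] : Fin 2 → ℝ) p.1 * (Real.exp (-l * s) * y s p.2))
      = Real.exp (-l * s) * eNorm (y s) := by
    intro s
    rw [← abs_of_pos (Real.exp_pos (-l * s)), ← eNorm_smul]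
    simp [eNorm, Fintype.sum_prod_type]
  refine ⟨_, _, ?_, ⟨_, isTrajectory_embed l hy, rfl, rfl⟩, ?_⟩
  · intro h0
    have h1 := hn 0
    rw [h0, eNorm_eq_zero.2 rfl, mul_zero, Real.exp_zero, one_mul] at h1
    exact hv (eNorm_eq_zero.1 h1.symm)
  · rw [hn, hn, zero_mul, mul_zero, Real.exp_zero, mul_one, one_mul]
    calc c * eNorm (y 0) = Real.exp (-l * t) * (c * Real.exp (l * t) * eNorm (y 0)) := by
          have h2 : Real.exp (-l * t) * Real.exp (l * t) = 1 := by
            rw [← Real.exp_add]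
            simp
          linear_combination (-(c * eNorm (y 0))) * h2
      _ ≤ _ := by gcongr

/-- With the weights `b, a` on the second tensor factor, `rmat a b` becomes skew-adjoint, so the
energy of an eigenvector of `xmat l q a b` determines the real part of its eigenvalue. -/
lemma xmat_isHurwitz {l q a b : ℝ} (hl : 0 < l) (hq0 : 0 ≤ q) (hq1 : q ≤ 1) (ha : 0 < a)
    (hb : 0 < b) : IsHurwitz (xmat l q a b) := by
  intro μ hμ
  rw [spectrum.mem_iff, Matrix.isUnit_iff_isUnit_det, isUnit_iff_ne_zero, not_not,
    ← Matrix.exists_mulVec_eq_zero_iff] at hμ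
  obtain ⟨v, hv, hmv⟩ := hμ
  rw [Matrix.sub_mulVec, sub_eq_zero, Matrix.algebraMap_eq_diagonal] at hmv
  have hE : ∀ p, μ * v p = ((xmat l q a b).map (Complex.ofReal ·) *ᵥ v) p := fun p => by
    rw [← hmv]
    simp [Matrix.mulVec_diagonal]
  have e00 : μ * v (0, 0) = -(1 - q + q * l) * v (0, 0) - q * a * v (0, 1)
      + (1 - q) * v (1, 0) := by
    rw [hE]
    simp [xmat, cmat, rmat, Matrix.mulVec, dotProduct, Fintype.sum_prod_type,
      Matrix.kroneckerMap_apply]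
    ring
  have e01 : μ * v (0, 1) = q * b * v (0, 0) - (1 - q + q * l) * v (0, 1)
      + (1 - q) * v (1, 1) := by
    rw [hE]
    simp [xmat, cmat, rmat, Matrix.mulVec, dotProduct, Fintype.sum_prod_type,
      Matrix.kroneckerMap_apply]
    ring
  have e10 : μ * v (1, 0) = -(1 - q) * v (0, 0) - (1 + q * l) * v (1, 0)
      - q * a * v (1, 1) := by
    rw [hE]
    simp [xmat, cmat, rmat, Matrix.mulVec, dotProduct, Fintype.sum_prod_type,
      Matrix.kroneckerMap_apply]
    ring
  have e11 : μ * v (1, 1) = -(1 - q) * v (0, 1) + q * b * v (1, 0)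
      - (1 + q * l) * v (1, 1) := by
    rw [hE]
    simp [xmat, cmat, rmat, Matrix.mulVec, dotProduct, Fintype.sum_prod_type,
      Matrix.kroneckerMap_apply]
    ring
  set S : Fin 2 → ℝ := fun i => b * Complex.normSq (v (i, 0)) + a * Complex.normSq (v (i, 1))
    with hS
  have hS0 : ∀ i, 0 ≤ S i := fun i => by
    have h0 := Complex.normSq_nonneg (v (i, 0))
    have h1 := Complex.normSq_nonneg (v (i, 1))
    simp only [hS]
    positivity
  have hSpos : 0 < S 0 + S 1 := by
    refine (add_nonneg (hS0 0) (hS0 1)).lt_of_ne' fun h => hv ?_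
    have hz : ∀ i, S i = 0 := by
      have h0 := hS0 0
      have h1 := hS0 1
      intro i
      fin_cases i <;> simp only [Fin.zero_eta, Fin.mk_one] <;> linarith
    funext ⟨i, j⟩
    have h0 := Complex.normSq_nonneg (v (i, 0))
    have h1 := Complex.normSq_nonneg (v (i, 1))
    have h2 := (add_eq_zero_iff_of_nonneg (by positivity) (by positivity)).1 (hz i)
    refine Complex.normSq_eq_zero.1 ?_
    fin_cases j
    · exact (mul_eq_zero.1 h2.1).resolve_left hb.ne'
    · exact (mul_eq_zero.1 h2.2).resolve_left ha.ne'
  have henergy : μ.re * (S 0 + S 1) = -((1 - q + q * l) * S 0 + (1 + q * l) * S 1) := by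
    have r00 := congrArg Complex.re e00
    have r01 := congrArg Complex.re e01
    have r10 := congrArg Complex.re e10
    have r11 := congrArg Complex.re e11
    have i00 := congrArg Complex.im e00
    have i01 := congrArg Complex.im e01
    have i10 := congrArg Complex.im e10
    have i11 := congrArg Complex.im e11
    simp at r00 r01 r10 r11 i00 i01 i10 i11
    simp only [hS, Complex.normSq_apply]
    linear_combination b * ((v (0, 0)).re * r00 + (v (0, 0)).im * i00)
      + a * ((v (0, 1)).re * r01 + (v (0, 1)).im * i01)
      + b * ((v (1, 0)).re * r10 + (v (1, 0)).im * i10)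
      + a * ((v (1, 1)).re * r11 + (v (1, 1)).im * i11)
  have hdamp : 0 < 1 - q + q * l := by
    rcases hq0.eq_or_lt with rfl | h
    · norm_num
    · nlinarith [mul_pos h hl]
  have hql : 0 ≤ q * l := by positivity
  have hneg : 0 < (1 - q + q * l) * (S 0 + S 1) := mul_pos hdamp hSpos
  have hlt : μ.re * (S 0 + S 1) < 0 := by
    rw [henergy]
    nlinarith [mul_nonneg hq0 (hS0 1)]
  exact neg_of_mul_neg_left hlt hSpos.le

end Switching

/-! ### The theorem -/

theorem stmt_17 (lam : ℝ)
    (hlam : lam = Lambda (convexHull ℝ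
      ({!![0, -2; 1/2, 0], !![0, -1/2; 2, 0]} : Set (Matrix (Fin 2) (Fin 2) ℝ))))
    (A₀ A₁ B₀ B₁ : Matrix (Fin 2) (Fin 2) ℝ)
    (hA₀ : A₀ = !![0, 0; 0, -1]) (hA₁ : A₁ = !![-1, 1; -1, -1])
    (hB₀ : B₀ = !![-lam, -2; 1/2, -lam]) (hB₁ : B₁ = !![-lam, -1/2; 2, -lam])
    (X₀ X₁ X₂ : Matrix (Fin 2 × Fin 2) (Fin 2 × Fin 2) ℝ)
    (hX₀ : X₀ = A₀ ⊗ₖ (1 : Matrix (Fin 2) (Fin 2) ℝ) + (1 : Matrix (Fin 2) (Fin 2) ℝ) ⊗ₖ B₀)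
    (hX₁ : X₁ = A₀ ⊗ₖ (1 : Matrix (Fin 2) (Fin 2) ℝ) + (1 : Matrix (Fin 2) (Fin 2) ℝ) ⊗ₖ B₁)
    (hX₂ : X₂ = A₁ ⊗ₖ (1 : Matrix (Fin 2) (Fin 2) ℝ)) :
    Lambda (convexHull ℝ {X₀, X₁, X₂}) = 0 ∧
      (∃ C > (0:ℝ), ∀ x : ℝ → Fin 2 × Fin 2 → ℝ,
        IsTrajectory (convexHull ℝ {X₀, X₁, X₂}) x →
        ∀ t : ℝ, 0 ≤ t → eNorm (x t) ≤ C * eNorm (x 0)) ∧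
      ∀ M ∈ convexHull ℝ ({X₀, X₁, X₂} : Set (Matrix (Fin 2 × Fin 2) (Fin 2 × Fin 2) ℝ)),
        IsHurwitz M := by
  obtain ⟨l, C, hl, hC, hup, hlow⟩ := Switching.exists_planar_rate
  have hlam' : lam = l := hlam.trans (Switching.Lambda_eq hl.le hC (by norm_num) hup hlow)
  subst hlam' hA₀ hA₁ hB₀ hB₁ hX₀ hX₁ hX₂
  have hC0 : 0 < C := one_pos.trans_le hC
  have hbdd : ∀ x : ℝ → Fin 2 × Fin 2 → ℝ, IsTrajectory (Switching.Xset lam) x →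
      ∀ t : ℝ, 0 ≤ t → eNorm (x t) ≤ C * eNorm (x 0) :=
    fun x hx t ht => Switching.xset_bounded hl.le hC0.le hup hx ht
  refine ⟨Switching.Lambda_eq le_rfl hC (c := 1 / 2) (by norm_num) ?_
    (Switching.xset_lower hlow), ⟨C, hC0, hbdd⟩, fun M hM => ?_⟩
  · rintro t ht _ _ ⟨x, hx, rfl, rfl⟩
    simpa using hbdd x hx t ht
  · obtain ⟨q, a, b, hq0, hq1, -, ha, hb, rfl⟩ := Switching.exists_xmat hM
    exact Switching.xmat_isHurwitz hl hq0 hq1 (by linarith) (by linarith)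
end

section
/- Let λ := Λ(conv{[[0,-2],[1/2,0]], [[0,-1/2],[2,0]]}), define A₀ = [[0,0],[0,-1]], A₁ = [[-1,1],[-1,-1]], B₀ = [[-λ,-2],[1/2,-λ]], B₁ = [[-λ,-1/2],[2,-λ]] in M₂(ℝ), set X₀ = A₀⊗I + I⊗B₀, X₁ = A₀⊗I + I⊗B₁, X₂ = A₁⊗I in M₄(ℝ), where ⊗ is the Kronecker product and I the 2×2 identity, and let 𝖷 = conv{X₀, X₁, X₂}. If N₁ and N₂ are both Barabanov norms for 𝖷, then there exists c > 0 such that N₁(v) = c·N₂(v) for all v ∈ ℝ⁴; that is, the Barabanov norm for 𝖷 is unique up to scalar multiplication. -/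
/-!
Write a vector of `ℝ² ⊗ ℝ²` as `e₀ ⊗ y + e₁ ⊗ z`, let `μ = Λ(𝖷)`, and let `n` be the restriction of
an extremal norm `N` to the plane `e₀ ⊗ ℝ²`. On that plane `X₀` and `X₁` act as the two elliptic
planar fields shifted by `-λ`, so the extremality of `N` bounds the growth of `n` along the planar
system by `λ + μ` (`grows_of_extremal`); as no norm grows more slowly than the planar exponent
(`Lambda_planeSys_le`), `0 ≤ μ`.

The heart of the proof is the norm `discNorm n (y, z) = sup {n (c y + s z) | c² + s² ≤ 1}`. The
first two generators only shrink the coefficient `s` besides moving the plane, and the third one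
rotates the coefficients and contracts them at unit rate. Hence `discNorm n` grows at rate at most
`μ - q`, where `q` is the weight of the third generator (`IsNorm.upperDer_discNorm`). Along a
trajectory on which `N` grows at the maximal rate, `exp (-μ t) * discNorm n` is bounded below, so
`∫ q < ∞`. This has two consequences. The block `z` decays at the extra rate `1` up to an
integrable forcing, so it becomes negligible against `y` (`exists_asymptotics`). The direction of
`y` turns at speed at least `1/2 - (3/2) q`, so it meets every line through the origin at
arbitrarily late times (`BlockFlow.exists_det_zero`).

Now let `N₁ ≤ c N₂` with equality at some nonzero vector, `c` being the maximum of `N₁ / N₂`. Since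
`N₂` is extremal, equality persists along a trajectory from that vector on which the Barabanov norm
`N₁` is maximal. This trajectory approaches `e₀ ⊗ ℝ²` in every direction, so `N₁ = c N₂` on that
plane (`eq_on_first_block`). By symmetry `N₂ = c' N₁` there, with `c'` the maximum of `N₂ / N₁`.
Therefore `c c' = 1`, and `N₁ ≤ c N₂ ≤ c c' N₁ = N₁` everywhere.
-/

open MeasureTheory Filter Matrix Kronecker

section

open Set Topology
open scoped NNReal

/-! ### One-sided derivatives along absolutely continuous curves -/

/-- `UpperDer N u g r`: the function `N` has upper right derivative at most `r` at `u` in the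
direction `g`, with a quadratic error term. Since the error is explicit, such bounds are stable
under convex combinations of directions when `N` is convex. -/
def UpperDer {E : Type*} [AddCommGroup E] [Module ℝ E] (N : E → ℝ) (u g : E) (r : ℝ) : Prop :=
  ∃ K δ : ℝ, 0 < δ ∧ ∀ h, 0 ≤ h → h ≤ δ → N (u + h • g) ≤ N u + h * r + K * h ^ 2

lemma UpperDer.deriv_le {E : Type*} [NormedAddCommGroup E] [NormedSpace ℝ E] {N : E → ℝ} {L : ℝ}
    (hL : ∀ u v, |N u - N v| ≤ L * ‖u - v‖) {x : ℝ → E} {g : E} {s d r : ℝ}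
    (hx : HasDerivAt x g s) (hd : HasDerivAt (fun t => N (x t)) d s)
    (hU : UpperDer N (x s) g r) : d ≤ r := by
  obtain ⟨K, δ, hδ, hK⟩ := hU
  have h1 := hd.tendsto_slope_zero_right
  have h2 : Tendsto (fun h : ℝ => r + K * h + L * ‖h⁻¹ • (x (s + h) - x s) - g‖) (𝓝[>] 0)
      (𝓝 (r + K * 0 + L * ‖g - g‖)) := by
    refine ((tendsto_const_nhds.add ((tendsto_const_nhds (x := K)).mul
      (tendsto_id.mono_left nhdsWithin_le_nhds))).add
      ((tendsto_const_nhds (x := L)).mul ?_))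
    exact (hx.tendsto_slope_zero_right.sub tendsto_const_nhds).norm
  simp only [mul_zero, sub_self, norm_zero, add_zero] at h2
  refine le_of_tendsto_of_tendsto h1 h2 ?_
  have hev : ∀ᶠ h in 𝓝[>] (0 : ℝ), h ∈ Ioc 0 δ := Ioc_mem_nhdsGT hδ
  filter_upwards [hev] with h hh
  have hpos : 0 < h := hh.1
  have e1 := hK h hh.1.le hh.2
  have e2 := (abs_le.1 (hL (x (s + h)) (x s + h • g))).2
  have e3 : ‖x (s + h) - (x s + h • g)‖ = h * ‖h⁻¹ • (x (s + h) - x s) - g‖ := by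
    rw [← abs_of_pos hpos, ← Real.norm_eq_abs, ← norm_smul, Real.norm_eq_abs, abs_of_pos hpos,
      smul_sub, smul_inv_smul₀ hpos.ne', sub_sub]
  rw [e3] at e2
  simp only [smul_eq_mul]
  rw [inv_mul_le_iff₀ hpos]
  nlinarith

lemma sub_le_integral_of_deriv_le {f R : ℝ → ℝ} {a b : ℝ} (hab : a ≤ b)
    (hf : AbsolutelyContinuousOnInterval f a b) (hR : IntervalIntegrable R volume a b)
    (h : ∀ᵐ s, a < s → s < b → ∀ d, HasDerivAt f d s → d ≤ R s) :
    f b - f a ≤ ∫ s in a..b, R s := by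
  rw [← hf.integral_deriv_eq_sub]
  refine intervalIntegral.integral_mono_ae_restrict hab hf.intervalIntegrable_deriv hR ?_
  have hb : ∀ᵐ x : ℝ, x ≠ b := by simp [ae_iff, measure_singleton]
  have ha : ∀ᵐ x : ℝ, x ≠ a := by simp [ae_iff, measure_singleton]
  rw [EventuallyLE, ae_restrict_iff' measurableSet_Icc]
  filter_upwards [h, hb, ha, hf.ae_differentiableAt] with s h1 h2 h2' h3 h4
  exact h1 (lt_of_le_of_ne h4.1 (Ne.symm h2')) (lt_of_le_of_ne h4.2 h2) _
    (h3 (by rwa [uIcc_of_le hab])).hasDerivAt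

/-- The comparison principle used throughout: a pointwise bound on the upper derivative of a
Lipschitz function `N` along an absolutely continuous curve integrates, after multiplication by
an exponential weight. -/
lemma weighted_flow_le {E : Type*} [NormedAddCommGroup E] [NormedSpace ℝ E] {N : E → ℝ} {L : ℝ}
    (hL : ∀ u v, |N u - N v| ≤ L * ‖u - v‖) {x : ℝ → E} {R : ℝ → ℝ} {a b κ : ℝ} (hab : a ≤ b)
    (hx : ∃ C : ℝ≥0, LipschitzOnWith C x (Icc a b)) (hR : IntervalIntegrable R volume a b)
    (h : ∀ᵐ s, a < s → s < b → ∃ g ρ, HasDerivAt x g s ∧ UpperDer N (x s) g ρ ∧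
      Real.exp (κ * s) * (κ * N (x s) + ρ) ≤ R s) :
    Real.exp (κ * b) * N (x b) - Real.exp (κ * a) * N (x a) ≤ ∫ s in a..b, R s := by
  obtain ⟨C, hC⟩ := hx
  have hN : LipschitzWith (Real.toNNReal L) N := by
    refine LipschitzWith.of_dist_le_mul fun u v => ?_
    rw [Real.dist_eq, dist_eq_norm]
    exact (hL u v).trans (mul_le_mul_of_nonneg_right (Real.le_coe_toNNReal L) (norm_nonneg _))
  have hNx : AbsolutelyContinuousOnInterval (fun t => N (x t)) a b := by
    refine LipschitzOnWith.absolutelyContinuousOnInterval (K := Real.toNNReal L * C) ?_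
    rw [uIcc_of_le hab]
    exact (hN.lipschitzOnWith (s := univ)).comp hC (mapsTo_univ _ _)
  have hexp : AbsolutelyContinuousOnInterval (fun t => Real.exp (κ * t)) a b :=
    ContDiffOn.absolutelyContinuousOnInterval (by fun_prop)
  refine sub_le_integral_of_deriv_le hab (hexp.mul hNx) hR ?_
  filter_upwards [h, hNx.ae_differentiableAt] with s h1 h2 has hsb d hd
  obtain ⟨g, ρ, hg, hU, hle⟩ := h1 has hsb
  have h3 := (h2 (by rw [uIcc_of_le hab]; exact ⟨has.le, hsb.le⟩)).hasDerivAt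
  have h4 := hU.deriv_le hL hg h3
  have h5 : HasDerivAt (fun t => Real.exp (κ * t)) (Real.exp (κ * s) * κ) s := by
    simpa using ((hasDerivAt_id s).const_mul κ).exp
  have h6 := hd.unique (h5.mul h3)
  rw [h6]
  refine le_trans ?_ hle
  nlinarith [Real.exp_pos (κ * s)]

/-! ### Trajectories -/

lemma exists_bound_hull {n : Type*} [Fintype n] {S : Set (Matrix n n ℝ)} (hS : S.Finite) :
    ∃ K : ℝ, 0 ≤ K ∧ ∀ M ∈ convexHull ℝ S, ∀ v : n → ℝ, ‖M *ᵥ v‖ ≤ K * ‖v‖ := by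
  classical
  have h1 : ∀ M : Matrix n n ℝ, ∃ K : ℝ, 0 ≤ K ∧ ∀ v : n → ℝ, ‖M *ᵥ v‖ ≤ K * ‖v‖ := fun M =>
    ⟨‖(Matrix.toLin' M).toContinuousLinearMap‖, norm_nonneg _,
      fun v => (Matrix.toLin' M).toContinuousLinearMap.le_opNorm v⟩
  choose K hK0 hK using h1
  refine ⟨∑ M ∈ hS.toFinset, K M, Finset.sum_nonneg fun M _ => hK0 M, ?_⟩
  set C := ∑ M ∈ hS.toFinset, K M
  have hsub : convexHull ℝ S ⊆ {M | ∀ v : n → ℝ, ‖M *ᵥ v‖ ≤ C * ‖v‖} := by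
    refine convexHull_min (fun M hM v => ?_) ?_
    · refine (hK M v).trans (mul_le_mul_of_nonneg_right ?_ (norm_nonneg _))
      exact Finset.single_le_sum (f := K) (fun M _ => hK0 M) (hS.mem_toFinset.2 hM)
    · intro M hM P hP a b ha hb hab v
      have e : (a • M + b • P) *ᵥ v = a • (M *ᵥ v) + b • (P *ᵥ v) := by
        rw [Matrix.add_mulVec, Matrix.smul_mulVec, Matrix.smul_mulVec]
      rw [e]
      calc _ ≤ ‖a • (M *ᵥ v)‖ + ‖b • (P *ᵥ v)‖ := norm_add_le _ _
        _ = a * ‖M *ᵥ v‖ + b * ‖P *ᵥ v‖ := by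
          rw [norm_smul, norm_smul, Real.norm_of_nonneg ha, Real.norm_of_nonneg hb]
        _ ≤ a * (C * ‖v‖) + b * (C * ‖v‖) :=
          add_le_add (mul_le_mul_of_nonneg_left (hM v) ha) (mul_le_mul_of_nonneg_left (hP v) hb)
        _ = C * ‖v‖ := by rw [← add_mul, hab, one_mul]
  exact fun M hM => hsub hM

/-- A trajectory of a bounded system is locally Lipschitz, hence solves its differential equation
almost everywhere. -/
lemma IsTrajectory.regular {n : Type*} [Fintype n] {S : Set (Matrix n n ℝ)} {K : ℝ} (hK0 : 0 ≤ K)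
    (hK : ∀ M ∈ S, ∀ v : n → ℝ, ‖M *ᵥ v‖ ≤ K * ‖v‖) {x : ℝ → n → ℝ} (hx : IsTrajectory S x) :
    ∃ A : ℝ → Matrix n n ℝ, (∀ i j, Measurable fun s => A s i j) ∧ (∀ s, 0 ≤ s → A s ∈ S) ∧
      (∀ a b, 0 ≤ a → ∃ C : ℝ≥0, LipschitzOnWith C x (Icc a b)) ∧
      ∀ᵐ s, 0 < s → HasDerivAt x (A s *ᵥ x s) s := by
  obtain ⟨hc, A, hA, hAS, hint, heq⟩ := hx
  refine ⟨A, hA, hAS, fun a b ha => ?_, ?_⟩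
  · obtain ⟨M, hM⟩ := isCompact_Icc.exists_bound_of_continuousOn (hc.continuousOn (s := Icc a b))
    refine ⟨Real.toNNReal (K * M), LipschitzOnWith.of_dist_le_mul fun s hs t ht => ?_⟩
    have h0s : 0 ≤ s := ha.trans hs.1
    have h0t : 0 ≤ t := ha.trans ht.1
    rw [dist_eq_norm, heq s h0s, heq t h0t, add_sub_add_left_eq_sub,
      intervalIntegral.integral_interval_sub_left (hint s h0s) (hint t h0t), dist_eq_norm,
      Real.norm_eq_abs]
    refine intervalIntegral.norm_integral_le_of_norm_le_const fun r hr => ?_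
    have hr' : r ∈ Icc a b := by
      have := uIoc_subset_uIcc hr
      exact (uIcc_subset_Icc ht hs) this
    refine ((hK _ (hAS r (ha.trans hr'.1)) _).trans
      (mul_le_mul_of_nonneg_left (hM r hr') hK0)).trans (Real.le_coe_toNNReal _)
  · have h1 : ∀ᵐ s, ∀ m : ℕ, s ∈ uIcc (0 : ℝ) m → ∀ c ∈ uIcc (0 : ℝ) m,
        HasDerivAt (fun t => ∫ r in c..t, A r *ᵥ x r) (A s *ᵥ x s) s :=
      ae_all_iff.2 fun m => (hint m (Nat.cast_nonneg m)).ae_hasDerivAt_integral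
    filter_upwards [h1] with s hs h0
    obtain ⟨m, hm⟩ := exists_nat_gt s
    have hm0 : (0 : ℝ) ≤ m := Nat.cast_nonneg m
    have h2 := hs m (by rw [uIcc_of_le hm0]; exact ⟨h0.le, hm.le⟩) 0 left_mem_uIcc
    refine (h2.const_add (x 0)).congr_of_eventuallyEq ?_
    filter_upwards [lt_mem_nhds h0] with t ht using heq t (le_of_lt ht)

lemma isTrajectory_of_hasDerivAt {n : Type*} [Fintype n] {S : Set (Matrix n n ℝ)}
    {M : Matrix n n ℝ} (hM : M ∈ S) {x : ℝ → n → ℝ} (hx : ∀ t, HasDerivAt x (M *ᵥ x t) t) :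
    IsTrajectory S x := by
  have hc : Continuous x := continuous_iff_continuousAt.2 fun t => (hx t).continuousAt
  have hc' : Continuous fun s => M *ᵥ x s := by fun_prop
  refine ⟨hc, fun _ => M, fun _ _ => measurable_const, fun _ _ => hM,
    fun t _ => hc'.intervalIntegrable _ _, fun t _ => ?_⟩
  rw [intervalIntegral.integral_eq_sub_of_hasDerivAt (fun s _ => hx s)
    (hc'.intervalIntegrable _ _)]
  abel

lemma IsTrajectory.shift_s18 {n : Type*} [Fintype n] {S : Set (Matrix n n ℝ)} {x : ℝ → n → ℝ}
    (hx : IsTrajectory S x) {s : ℝ} (hs : 0 ≤ s) : IsTrajectory S fun t => x (s + t) := by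
  obtain ⟨hc, A, hA, hAS, hint, heq⟩ := hx
  have hi : ∀ t, 0 ≤ t → IntervalIntegrable (fun r => A r *ᵥ x r) volume s (s + t) := fun t ht =>
    (hint s hs).symm.trans (hint (s + t) (by linarith))
  refine ⟨by fun_prop, fun r => A (s + r), fun i j => (hA i j).comp (measurable_const_add s),
    fun r hr => hAS _ (by linarith), fun t ht => ?_, fun t ht => ?_⟩
  · simpa using (hi t ht).comp_add_left s
  · rw [intervalIntegral.integral_comp_add_left (fun r => A r *ᵥ x r) s]
    simp only [add_zero]
    rw [heq (s + t) (by linarith), heq s hs, add_assoc,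
      intervalIntegral.integral_add_adjacent_intervals (hint s hs) (hi t ht)]

/-! ### Norms on `n → ℝ` -/

namespace IsNorm

variable {n : Type*} [Fintype n] {N : (n → ℝ) → ℝ}

lemma zero (hN : IsNorm N) : N 0 = 0 := (hN.eq_zero_iff 0).2 rfl

lemma neg (hN : IsNorm N) (v : n → ℝ) : N (-v) = N v := by
  have := hN.smul (-1) v
  simpa using this

lemma nonneg (hN : IsNorm N) (v : n → ℝ) : 0 ≤ N v := by
  have h1 := hN.triangle v (-v)
  rw [add_neg_cancel, hN.zero, hN.neg] at h1
  linarith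

lemma pos (hN : IsNorm N) {v : n → ℝ} (hv : v ≠ 0) : 0 < N v :=
  lt_of_le_of_ne (hN.nonneg v) fun h => hv ((hN.eq_zero_iff v).1 h.symm)

lemma smul_nonneg (hN : IsNorm N) {a : ℝ} (ha : 0 ≤ a) (v : n → ℝ) : N (a • v) = a * N v := by
  rw [hN.smul, abs_of_nonneg ha]

lemma abs_sub_le (hN : IsNorm N) (u v : n → ℝ) : |N u - N v| ≤ N (u - v) := by
  have h1 := hN.triangle (u - v) v
  have h2 := hN.triangle (v - u) u
  rw [← neg_sub u v, hN.neg] at h2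
  simp only [sub_add_cancel, neg_sub] at h1 h2
  exact abs_le.2 ⟨by linarith, by linarith⟩

lemma exists_upper (hN : IsNorm N) : ∃ L, 0 ≤ L ∧ ∀ v, N v ≤ L * ‖v‖ := by
  classical
  refine ⟨∑ i, N (Pi.single i 1), Finset.sum_nonneg fun i _ => hN.nonneg _, fun v => ?_⟩
  have hsum : ∀ s : Finset n, ∀ f : n → (n → ℝ), N (∑ i ∈ s, f i) ≤ ∑ i ∈ s, N (f i) := by
    intro s f
    induction s using Finset.induction_on with
    | empty => simp [hN.zero]
    | insert i s hi ih =>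
      rw [Finset.sum_insert hi, Finset.sum_insert hi]
      exact (hN.triangle _ _).trans (add_le_add le_rfl ih)
  have hv : v = ∑ i, v i • (Pi.single i (1 : ℝ) : n → ℝ) := by
    ext j
    simp [Finset.sum_apply, Pi.single_apply]
  calc N v = N (∑ i, v i • (Pi.single i (1 : ℝ) : n → ℝ)) := by rw [← hv]
    _ ≤ ∑ i, N (v i • (Pi.single i (1 : ℝ) : n → ℝ)) := hsum _ _
    _ ≤ ∑ i, N (Pi.single i 1) * ‖v‖ := Finset.sum_le_sum fun i _ => by
      rw [hN.smul, mul_comm]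
      exact mul_le_mul_of_nonneg_left (norm_le_pi_norm v i) (hN.nonneg _)
    _ = _ := (Finset.sum_mul ..).symm

lemma exists_lipschitz (hN : IsNorm N) : ∃ L, 0 ≤ L ∧ ∀ u v, |N u - N v| ≤ L * ‖u - v‖ := by
  obtain ⟨L, h0, hL⟩ := hN.exists_upper
  exact ⟨L, h0, fun u v => (hN.abs_sub_le u v).trans (hL _)⟩

lemma continuous (hN : IsNorm N) : Continuous N := by
  obtain ⟨L, h0, hL⟩ := hN.exists_lipschitz
  exact (LipschitzWith.of_dist_le_mul (K := L.toNNReal) fun u v => by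
    rw [Real.dist_eq, dist_eq_norm, Real.coe_toNNReal L h0]; exact hL u v).continuous

/-- Any two norms are equivalent, in the form of a ratio attaining its maximum. -/
lemma exists_max_ratio [Nonempty n] {N' : (n → ℝ) → ℝ} (hN : IsNorm N) (hN' : IsNorm N') :
    ∃ c > 0, ∃ u ≠ 0, N u = c * N' u ∧ ∀ v, N v ≤ c * N' v := by
  have hne : (Metric.sphere (0 : n → ℝ) 1).Nonempty := NormedSpace.sphere_nonempty.2 zero_le_one
  have hs0 : ∀ v ∈ Metric.sphere (0 : n → ℝ) 1, v ≠ 0 := fun v hv => by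
    rintro rfl; simp at hv
  obtain ⟨u, hu, hmax⟩ := (isCompact_sphere (0 : n → ℝ) 1).exists_isMaxOn hne
    (f := fun v => N v / N' v)
    (hN.continuous.continuousOn.div hN'.continuous.continuousOn
      fun v hv => (hN'.pos (hs0 v hv)).ne')
  have hu' := hN'.pos (hs0 u hu)
  refine ⟨N u / N' u, div_pos (hN.pos (hs0 u hu)) hu', u, hs0 u hu, by field_simp, fun v => ?_⟩
  rcases eq_or_ne v 0 with rfl | hv
  · simp [hN.zero, hN'.zero]
  have hvn : 0 < ‖v‖ := norm_pos_iff.2 hv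
  have hmem : ‖v‖⁻¹ • v ∈ Metric.sphere (0 : n → ℝ) 1 := by
    simp [norm_smul, hvn.ne']
  have h1 := hmax hmem
  simp only [mem_ofPred_eq] at h1
  rw [hN.smul_nonneg (by positivity), hN'.smul_nonneg (by positivity),
    mul_div_mul_left _ _ (inv_pos.2 hvn).ne'] at h1
  exact (div_le_iff₀ (hN'.pos hv)).1 h1

lemma norm_isNorm : IsNorm fun v : n → ℝ => ‖v‖ :=
  ⟨fun _ => norm_eq_zero, fun a v => by rw [norm_smul, Real.norm_eq_abs], norm_add_le⟩

lemma exists_lower [Nonempty n] (hN : IsNorm N) : ∃ c, 0 ≤ c ∧ ∀ v, ‖v‖ ≤ c * N v := by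
  obtain ⟨c, hc, _, _, _, h⟩ := (norm_isNorm (n := n)).exists_max_ratio hN
  exact ⟨c, hc.le, h⟩

end IsNorm

/-! ### The planar system -/

/-- The linear vector field `w ↦ (-a w₁, b w₀)`; for `a b = 1` it generates an elliptic
rotation. -/
def ellRot (a b : ℝ) (w : Fin 2 → ℝ) : Fin 2 → ℝ := ![-a * w 1, b * w 0]

/-- The planar switching system, before the shift by `-λ`. -/
def planeSys : Set (Matrix (Fin 2) (Fin 2) ℝ) :=
  convexHull ℝ {!![0, -2; 1/2, 0], !![0, -1/2; 2, 0]}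

/-- The norm `n` grows at exponential rate at most `κ` along both planar vector fields, expressed
by Euler steps with a uniform quadratic error. -/
def Grows (n : (Fin 2 → ℝ) → ℝ) (κ : ℝ) : Prop :=
  ∃ K δ : ℝ, 0 ≤ K ∧ 0 < δ ∧ ∀ w h, 0 ≤ h → h ≤ δ →
    n (w + h • ellRot 2 (1/2) w) ≤ (1 + κ * h + K * h ^ 2) * n w ∧
    n (w + h • ellRot (1/2) 2 w) ≤ (1 + κ * h + K * h ^ 2) * n w

lemma planeSys_mulVec {M : Matrix (Fin 2) (Fin 2) ℝ} (hM : M ∈ planeSys) :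
    ∃ w₀ w₁ : ℝ, 0 ≤ w₀ ∧ 0 ≤ w₁ ∧ w₀ + w₁ = 1 ∧
      ∀ y, M *ᵥ y = w₀ • ellRot 2 (1/2) y + w₁ • ellRot (1/2) 2 y := by
  rw [planeSys, convexHull_pair] at hM
  obtain ⟨a, b, ha, hb, hab, rfl⟩ := hM
  refine ⟨a, b, ha, hb, hab, fun y => ?_⟩
  ext i
  fin_cases i <;> simp [ellRot, Matrix.mulVec, dotProduct, Fin.sum_univ_two] <;> ring

lemma IsNorm.exists_bound_ellRot {n : (Fin 2 → ℝ) → ℝ} (hn : IsNorm n) :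
    ∃ C, 0 ≤ C ∧ ∀ w, n (ellRot 2 (1/2) w) ≤ C * n w ∧ n (ellRot (1/2) 2 w) ≤ C * n w := by
  obtain ⟨L, hL0, hL⟩ := hn.exists_upper
  obtain ⟨c, hc0, hc⟩ := hn.exists_lower
  have key : ∀ a b : ℝ, |a| ≤ 2 → |b| ≤ 2 → ∀ w, n (ellRot a b w) ≤ L * (2 * c) * n w := by
    intro a b ha hb w
    have h1 : ‖ellRot a b w‖ ≤ 2 * ‖w‖ := by
      rw [pi_norm_le_iff_of_nonneg (by positivity)]
      intro i
      fin_cases i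
      · simp only [ellRot, Fin.zero_eta, cons_val_zero, norm_mul, norm_neg]
        exact mul_le_mul ha (norm_le_pi_norm w 1) (norm_nonneg _) zero_le_two
      · simp only [ellRot, Fin.mk_one, cons_val_one, cons_val_fin_one, norm_mul]
        exact mul_le_mul hb (norm_le_pi_norm w 0) (norm_nonneg _) zero_le_two
    have h2 := hc w
    calc n (ellRot a b w) ≤ L * ‖ellRot a b w‖ := hL _
      _ ≤ L * (2 * (c * n w)) := by gcongr; linarith
      _ = _ := by ring
  exact ⟨L * (2 * c), by positivity, fun w =>
    ⟨key _ _ (by norm_num) (by norm_num [abs_le]) w, key _ _ (by norm_num [abs_le]) (by norm_num) w⟩⟩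

/-- Exponential growth along the explicit elliptic rotations implies infinitesimal growth. -/
lemma grows_of_rotation {n : (Fin 2 → ℝ) → ℝ} (hn : IsNorm n) {κ : ℝ}
    (h0 : ∀ w t, 0 ≤ t → n (Real.cos t • w + Real.sin t • ellRot 2 (1/2) w)
      ≤ Real.exp (κ * t) * n w)
    (h1 : ∀ w t, 0 ≤ t → n (Real.cos t • w + Real.sin t • ellRot (1/2) 2 w)
      ≤ Real.exp (κ * t) * n w) : Grows n κ := by
  obtain ⟨C, hC0, hC⟩ := hn.exists_bound_ellRot
  refine ⟨κ ^ 2 + 1 + C, min 1 (1 / (|κ| + 1)), by positivity, by positivity,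
    fun w h hh0 hh => ?_⟩
  have hh1 : h ≤ 1 := hh.trans (min_le_left _ _)
  have hh2 : h ≤ 1 / (|κ| + 1) := hh.trans (min_le_right _ _)
  rw [le_div_iff₀ (by positivity)] at hh2
  have hκ : |κ * h| ≤ 1 := by
    rw [abs_mul, abs_of_nonneg hh0]
    nlinarith [abs_nonneg κ]
  have hexp : Real.exp (κ * h) ≤ 1 + κ * h + κ ^ 2 * h ^ 2 := by
    have := (abs_le.1 (Real.abs_exp_sub_one_sub_id_le hκ)).2
    nlinarith
  have hcos1 := Real.one_sub_sq_div_two_le_cos (x := h)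
  have hcos2 := Real.cos_le_one h
  have hsin1 : Real.sin h ≤ h := Real.sin_le hh0
  have hsin2 : h - h ^ 2 ≤ Real.sin h := by
    rcases hh0.eq_or_lt with rfl | hpos
    · simp
    have := Real.sin_gt_sub_cube hpos
    nlinarith [mul_nonneg (sq_nonneg h) (sub_nonneg.2 hh1)]
  have key : ∀ r : Fin 2 → ℝ, n (Real.cos h • w + Real.sin h • r) ≤ Real.exp (κ * h) * n w →
      n r ≤ C * n w → n (w + h • r) ≤ (1 + κ * h + (κ ^ 2 + 1 + C) * h ^ 2) * n w := by
    intro r hr1 hr2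
    have e : w + h • r = (Real.cos h • w + Real.sin h • r) +
        ((1 - Real.cos h) • w + (h - Real.sin h) • r) := by module
    have hw := hn.nonneg w
    have hr := hn.nonneg r
    have t1 := hn.triangle (Real.cos h • w + Real.sin h • r)
      ((1 - Real.cos h) • w + (h - Real.sin h) • r)
    have t2 := hn.triangle ((1 - Real.cos h) • w) ((h - Real.sin h) • r)
    rw [hn.smul_nonneg (by linarith), hn.smul_nonneg (by linarith)] at t2
    rw [← e] at t1
    have t3 : (1 - Real.cos h) * n w ≤ h ^ 2 * n w :=
      mul_le_mul_of_nonneg_right (by nlinarith [sq_nonneg h]) hw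
    have t4 : (h - Real.sin h) * n r ≤ h ^ 2 * (C * n w) :=
      mul_le_mul (by linarith) hr2 hr (sq_nonneg h)
    have t5 := mul_le_mul_of_nonneg_right hexp hw
    nlinarith
  exact ⟨key _ (h0 w h hh0) (hC w).1, key _ (h1 w h hh0) (hC w).2⟩

lemma planeSys_bound : ∃ K : ℝ, 0 ≤ K ∧ ∀ M ∈ planeSys, ∀ v : Fin 2 → ℝ, ‖M *ᵥ v‖ ≤ K * ‖v‖ :=
  exists_bound_hull (by simp)

lemma Grows.le_exp {n : (Fin 2 → ℝ) → ℝ} (hn : IsNorm n) {κ : ℝ} (hg : Grows n κ)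
    {y : ℝ → Fin 2 → ℝ} (hy : IsTrajectory planeSys y) {t : ℝ} (ht : 0 ≤ t) :
    n (y t) ≤ Real.exp (κ * t) * n (y 0) := by
  obtain ⟨K, hK0, hK⟩ := planeSys_bound
  obtain ⟨A, -, hA, hlip, hder⟩ := hy.regular hK0 hK
  obtain ⟨L, -, hL⟩ := hn.exists_lipschitz
  obtain ⟨K', δ, hK', hδ, hg⟩ := hg
  have := weighted_flow_le (κ := -κ) (R := fun _ => 0) hL ht (hlip 0 t le_rfl)
    intervalIntegrable_const (by
      filter_upwards [hder] with s hs h0 _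
      obtain ⟨w₀, w₁, hw0, hw1, hw, hM⟩ := planeSys_mulVec (hA s h0.le)
      refine ⟨_, κ * n (y s), hs h0, ⟨K' * n (y s), δ, hδ, fun h hh0 hh => ?_⟩, ?_⟩
      · rw [hM]
        have e : y s + h • (w₀ • ellRot 2 (1/2) (y s) + w₁ • ellRot (1/2) 2 (y s)) =
            w₀ • (y s + h • ellRot 2 (1/2) (y s)) + w₁ • (y s + h • ellRot (1/2) 2 (y s)) := by
          obtain rfl : w₁ = 1 - w₀ := by linarith
          module
        rw [e]
        have t1 := hn.triangle (w₀ • (y s + h • ellRot 2 (1/2) (y s)))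
          (w₁ • (y s + h • ellRot (1/2) 2 (y s)))
        rw [hn.smul_nonneg hw0, hn.smul_nonneg hw1] at t1
        have t2 := mul_le_mul_of_nonneg_left (hg (y s) h hh0 hh).1 hw0
        have t3 := mul_le_mul_of_nonneg_left (hg (y s) h hh0 hh).2 hw1
        obtain rfl : w₁ = 1 - w₀ := by linarith
        nlinarith
      · simp)
  simp only [mul_zero, Real.exp_zero, one_mul, intervalIntegral.integral_zero] at this
  have h2 : Real.exp (κ * t) * (Real.exp (-κ * t) * n (y t)) = n (y t) := by
    rw [← mul_assoc, ← Real.exp_add]; simp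
  rw [← h2]
  exact mul_le_mul_of_nonneg_left (by linarith) (Real.exp_pos _).le

/-- Nonzero trajectories never vanish. -/
lemma planeSys_ne_zero {y : ℝ → Fin 2 → ℝ} (hy : IsTrajectory planeSys y) (h0 : y 0 ≠ 0)
    {t : ℝ} (ht : 0 ≤ t) : y t ≠ 0 := by
  obtain ⟨K, hK0, hK⟩ := planeSys_bound
  obtain ⟨A, -, hA, hlip, hder⟩ := hy.regular hK0 hK
  have hL : ∀ u v : Fin 2 → ℝ, |(-‖u‖) - (-‖v‖)| ≤ 1 * ‖u - v‖ := fun u v => by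
    rw [one_mul, neg_sub_neg, norm_sub_rev]
    exact abs_norm_sub_norm_le _ _
  have := weighted_flow_le (N := fun v : Fin 2 → ℝ => -‖v‖) (κ := K) (R := fun _ => 0) hL ht
    (hlip 0 t le_rfl) intervalIntegrable_const (by
      filter_upwards [hder] with s hs h0 _
      refine ⟨_, K * ‖y s‖, hs h0, ⟨0, 1, one_pos, fun h hh0 hh => ?_⟩, by simp⟩
      have t1 : ‖y s‖ ≤ ‖y s + h • A s *ᵥ y s‖ + ‖h • A s *ᵥ y s‖ := by
        have t0 := norm_sub_le (y s + h • A s *ᵥ y s) (h • A s *ᵥ y s)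
        rwa [add_sub_cancel_right] at t0
      rw [norm_smul, Real.norm_of_nonneg hh0] at t1
      have t2 := mul_le_mul_of_nonneg_left (hK _ (hA s h0.le) (y s)) hh0
      linarith)
  simp only [mul_zero, Real.exp_zero, one_mul, intervalIntegral.integral_zero] at this
  intro hz
  rw [hz, norm_zero] at this
  have := norm_pos_iff.2 h0
  linarith

/-! ### The exponent of the planar system -/

/-- Fekete's lemma in continuous time, for functions that are bounded on compact intervals. -/
lemma exists_tendsto_div_of_subadditive {g : ℝ → ℝ} {a C κ : ℝ}
    (hsub : ∀ s t, 0 ≤ s → 0 ≤ t → g (s + t) ≤ g s + g t) (hlow : ∀ t, 0 ≤ t → -a ≤ g t)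
    (hup : ∀ t, 0 ≤ t → g t ≤ C + κ * t) :
    ∃ l ≤ κ, Tendsto (fun t => g t / t) atTop (𝓝 l) := by
  have hs : Subadditive fun n : ℕ => g n := fun m n => by
    have := hsub m n (Nat.cast_nonneg m) (Nat.cast_nonneg n)
    simpa using this
  have hbdd : BddBelow (range fun n : ℕ => g n / n) := by
    refine ⟨-|a|, ?_⟩
    rintro _ ⟨n, rfl⟩
    rcases n.eq_zero_or_pos with rfl | hn
    · simp
    have h1 : (1 : ℝ) ≤ n := by exact_mod_cast hn
    have h2 := hlow n (Nat.cast_nonneg n)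
    show -|a| ≤ g n / n
    rw [le_div_iff₀ (by linarith)]
    nlinarith [abs_nonneg a, le_abs_self a]
  have hlim := hs.tendsto_lim hbdd
  set l := hs.lim
  -- On the unit interval `g` is bounded by `B`, so `g` stays close to its values at integers.
  set B := |C| + |κ|
  have hB : ∀ r, 0 ≤ r → r ≤ 1 → g r ≤ B := fun r h0 h1 => by
    have := hup r h0
    have : κ * r ≤ |κ| := by
      calc κ * r ≤ |κ * r| := le_abs_self _
        _ = |κ| * r := by rw [abs_mul, abs_of_nonneg h0]
        _ ≤ |κ| := mul_le_of_le_one_right (abs_nonneg _) h1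
    have := le_abs_self C
    linarith
  have hfl := tendsto_nat_floor_atTop (α := ℝ)
  have hratio : Tendsto (fun t : ℝ => (⌊t⌋₊ : ℝ) / t) atTop (𝓝 1) := tendsto_nat_floor_div_atTop
  have hinv : Tendsto (fun t : ℝ => B / t) atTop (𝓝 0) := tendsto_const_nhds.div_atTop tendsto_id
  have hone : Tendsto (fun t : ℝ => 1 / t) atTop (𝓝 0) := tendsto_const_nhds.div_atTop tendsto_id
  have hupper : Tendsto (fun t : ℝ => g ⌊t⌋₊ / ⌊t⌋₊ * (⌊t⌋₊ / t) + B / t) atTop (𝓝 l) := by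
    simpa using ((hlim.comp hfl).mul hratio).add hinv
  have hlower : Tendsto (fun t : ℝ =>
      g ((⌊t⌋₊ + 1 : ℕ) : ℝ) / ((⌊t⌋₊ + 1 : ℕ) : ℝ) * (⌊t⌋₊ / t + 1 / t) - B / t)
      atTop (𝓝 l) := by
    have h1 : Tendsto (fun t : ℝ => ⌊t⌋₊ + 1) atTop atTop :=
      (tendsto_add_atTop_nat 1).comp hfl
    simpa using ((hlim.comp h1).mul (hratio.add hone)).sub hinv
  have hmain : Tendsto (fun t => g t / t) atTop (𝓝 l) := by
    refine tendsto_of_tendsto_of_tendsto_of_le_of_le' hlower hupper ?_ ?_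
    · filter_upwards [eventually_ge_atTop 1] with t ht
      have h0 : 0 < t := by linarith
      have h1 := Nat.floor_le h0.le
      have h2 := Nat.lt_floor_add_one t
      have h3 := hsub t (⌊t⌋₊ + 1 - t) h0.le (by linarith)
      have h4 := hB (⌊t⌋₊ + 1 - t) (by linarith) (by linarith)
      rw [add_sub_cancel] at h3
      have hne : ((⌊t⌋₊ : ℝ) + 1) ≠ 0 := by positivity
      push_cast
      rw [← add_div, div_mul_div_cancel₀ hne, ← sub_div]
      exact div_le_div_of_nonneg_right (by linarith) h0.le
    · filter_upwards [eventually_ge_atTop 1] with t ht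
      have h0 : 0 < t := by linarith
      have h1 := Nat.floor_le h0.le
      have h2 := Nat.lt_floor_add_one t
      have h3 := hsub ⌊t⌋₊ (t - ⌊t⌋₊) (Nat.cast_nonneg _) (by linarith)
      have h4 := hB (t - ⌊t⌋₊) (by linarith) (by linarith)
      rw [add_sub_cancel] at h3
      have hne : (⌊t⌋₊ : ℝ) ≠ 0 := by
        have : 0 < ⌊t⌋₊ := Nat.floor_pos.2 ht
        positivity
      rw [div_mul_div_cancel₀ hne, ← add_div]
      exact div_le_div_of_nonneg_right (by linarith) h0.le
  refine ⟨l, ?_, hmain⟩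
  have hC : Tendsto (fun t : ℝ => C / t + κ) atTop (𝓝 κ) := by
    simpa using (tendsto_const_nhds.div_atTop tendsto_id).add_const κ
  refine le_of_tendsto_of_tendsto hmain hC ?_
  filter_upwards [eventually_gt_atTop 0] with t ht
  rw [div_add' _ _ _ ht.ne']
  exact div_le_div_of_nonneg_right (hup t ht.le) ht.le

lemma eNorm_isNorm {n : Type*} [Fintype n] : IsNorm (eNorm : (n → ℝ) → ℝ) := by
  have h : ∀ v : n → ℝ, eNorm v = ‖WithLp.toLp 2 v‖ := fun v => by
    simp [eNorm, EuclideanSpace.norm_eq]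
  refine ⟨fun v => ?_, fun a v => ?_, fun v w => ?_⟩
  · simp [h]
  · rw [h, h, WithLp.toLp_smul, norm_smul, Real.norm_eq_abs]
  · rw [h, h, h, WithLp.toLp_add]
    exact norm_add_le _ _

/-- Every norm growing at rate at most `κ` bounds the exponent of the planar system by `κ`. This
includes the existence of the limit defining the exponent. -/
lemma Lambda_planeSys_le {n : (Fin 2 → ℝ) → ℝ} (hn : IsNorm n) {κ : ℝ} (hg : Grows n κ) :
    Lambda planeSys ≤ κ := by
  set S : ℝ → Set ℝ := fun t => {r | ∃ x : ℝ → Fin 2 → ℝ, IsTrajectory planeSys x ∧ x 0 ≠ 0 ∧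
    r = Real.log (eNorm (x t) / eNorm (x 0))} with hS
  have hE := eNorm_isNorm (n := Fin 2)
  obtain ⟨c₁, hc₁, -, -, -, hc₁'⟩ := hE.exists_max_ratio hn
  obtain ⟨c₂, hc₂, -, -, -, hc₂'⟩ := hn.exists_max_ratio hE
  have hub : ∀ t, 0 ≤ t → ∀ r ∈ S t, r ≤ Real.log (c₁ * c₂) + κ * t := by
    rintro t ht _ ⟨x, hx, hx0, rfl⟩
    have h0 := hE.pos hx0
    have h1 := hE.pos (planeSys_ne_zero hx hx0 ht)
    rw [← Real.log_exp (κ * t), ← Real.log_mul (by positivity) (Real.exp_pos _).ne']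
    refine Real.log_le_log (by positivity) ((div_le_iff₀ h0).2 ?_)
    calc eNorm (x t) ≤ c₁ * n (x t) := hc₁' _
      _ ≤ c₁ * (Real.exp (κ * t) * n (x 0)) := by gcongr; exact hg.le_exp hn hx ht
      _ ≤ c₁ * (Real.exp (κ * t) * (c₂ * eNorm (x 0))) := by gcongr; exact hc₂' _
      _ = _ := by ring
  have hbdd : ∀ t, 0 ≤ t → BddAbove (S t) := fun t ht => ⟨_, hub t ht⟩
  -- The bounded trajectory `(2 cos t, sin t)` bounds the supremum from below.
  have hlow : ∀ t, ∃ r ∈ S t, -Real.log 2 ≤ r := by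
    intro t
    refine ⟨_, ⟨fun t => ![2 * Real.cos t, Real.sin t], ?_, ?_, rfl⟩, ?_⟩
    · refine isTrajectory_of_hasDerivAt (M := !![0, -2; 1/2, 0])
        (subset_convexHull ℝ _ (by simp)) fun t => ?_
      rw [hasDerivAt_pi]
      intro i
      fin_cases i
      · simpa [Matrix.mulVec, dotProduct, Fin.sum_univ_two] using (Real.hasDerivAt_cos t).const_mul 2
      · simpa [Matrix.mulVec, dotProduct, Fin.sum_univ_two] using Real.hasDerivAt_sin t
    · intro h
      simpa using congrFun h 0
    · rw [← Real.log_inv]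
      refine Real.log_le_log (by norm_num) ?_
      have h0 : eNorm ![2 * Real.cos 0, Real.sin 0] = 2 := by
        simp [eNorm, Fin.sum_univ_two]
      have h1 : 1 ≤ eNorm ![2 * Real.cos t, Real.sin t] := by
        rw [eNorm, Real.one_le_sqrt]
        simp only [Fin.sum_univ_two, cons_val_zero, cons_val_one, cons_val_fin_one]
        nlinarith [Real.sin_sq_add_cos_sq t, sq_nonneg (Real.cos t)]
      rw [h0, inv_eq_one_div]
      exact div_le_div_of_nonneg_right h1 zero_le_two
  have hne : ∀ t, (S t).Nonempty := fun t => let ⟨r, hr, _⟩ := hlow t; ⟨r, hr⟩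
  obtain ⟨l, hl, hlim⟩ := exists_tendsto_div_of_subadditive (g := fun t => sSup (S t))
    (a := Real.log 2) (C := Real.log (c₁ * c₂)) (κ := κ) (fun s t hs ht => by
      refine csSup_le (hne _) ?_
      rintro _ ⟨x, hx, hx0, rfl⟩
      have hxs := planeSys_ne_zero hx hx0 hs
      have h0 := hE.pos hx0
      have h1 := hE.pos hxs
      have h2 := hE.pos (planeSys_ne_zero hx hx0 (add_nonneg hs ht))
      have e : eNorm (x (s + t)) / eNorm (x 0) =
          (eNorm (x s) / eNorm (x 0)) * (eNorm (x (s + t)) / eNorm (x s)) := by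
        field_simp
      rw [e, Real.log_mul (by positivity) (by positivity)]
      refine add_le_add (le_csSup (hbdd s hs) ⟨x, hx, hx0, rfl⟩)
        (le_csSup (hbdd t ht) ⟨fun r => x (s + r), hx.shift_s18 hs, by simpa using hxs, by simp⟩))
    (fun t ht => let ⟨_, hr, hr'⟩ := hlow t; hr'.trans (le_csSup (hbdd t ht) hr))
    (fun t ht => csSup_le (hne t) (hub t ht))
  have hL : Lambda planeSys = l := by
    refine Tendsto.limUnder_eq (hlim.congr' ?_)
    filter_upwards [eventually_gt_atTop 0] with t ht
    have e : {r | ∃ x : ℝ → Fin 2 → ℝ, IsTrajectory planeSys x ∧ x 0 ≠ 0 ∧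
        r = (1 / t) * Real.log (eNorm (x t) / eNorm (x 0))} = (fun r => (1 / t) * r) '' S t := by
      ext r
      constructor
      · rintro ⟨x, hx, hx0, rfl⟩
        exact ⟨_, ⟨x, hx, hx0, rfl⟩, rfl⟩
      · rintro ⟨_, ⟨x, hx, hx0, rfl⟩, rfl⟩
        exact ⟨x, hx, hx0, rfl⟩
    rw [e, div_eq_inv_mul, ← one_div]
    exact (Monotone.map_csSup_of_continuousAt (f := fun r => (1 / t) * r) (by fun_prop)
      (fun _ _ h => mul_le_mul_of_nonneg_left h (by positivity)) (hne t) (hbdd t ht.le))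
  rw [hL]; exact hl

/-! ### The tensor system in block form -/

/-- The vector `e₀ ⊗ y + e₁ ⊗ z`. -/
def pair (y z : Fin 2 → ℝ) : Fin 2 × Fin 2 → ℝ := fun p => (![y, z] : Fin 2 → Fin 2 → ℝ) p.1 p.2

/-- The two blocks of a vector of `ℝ² ⊗ ℝ²`; the left inverse of `pair`. -/
def blocks (v : Fin 2 × Fin 2 → ℝ) : (Fin 2 → ℝ) × (Fin 2 → ℝ) :=
  (fun j => v (0, j), fun j => v (1, j))

lemma pair_blocks (v : Fin 2 × Fin 2 → ℝ) : pair (blocks v).1 (blocks v).2 = v := by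
  ext ⟨i, j⟩
  fin_cases i <;> rfl

lemma pair_add (y z y' z' : Fin 2 → ℝ) : pair (y + y') (z + z') = pair y z + pair y' z' := by
  ext ⟨i, j⟩
  fin_cases i <;> rfl

lemma pair_smul (a : ℝ) (y z : Fin 2 → ℝ) : pair (a • y) (a • z) = a • pair y z := by
  ext ⟨i, j⟩
  fin_cases i <;> rfl

/-- The set of matrices `conv {X₀, X₁, X₂}` of the tensor system with shift `lam`. -/
def tensorSys (lam : ℝ) : Set (Matrix (Fin 2 × Fin 2) (Fin 2 × Fin 2) ℝ) :=
  convexHull ℝ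
    {!![0, 0; 0, -1] ⊗ₖ (1 : Matrix (Fin 2) (Fin 2) ℝ) +
        (1 : Matrix (Fin 2) (Fin 2) ℝ) ⊗ₖ !![-lam, -2; 1/2, -lam],
      !![0, 0; 0, -1] ⊗ₖ (1 : Matrix (Fin 2) (Fin 2) ℝ) +
        (1 : Matrix (Fin 2) (Fin 2) ℝ) ⊗ₖ !![-lam, -1/2; 2, -lam],
      !![-1, 1; -1, -1] ⊗ₖ (1 : Matrix (Fin 2) (Fin 2) ℝ)}

/-- Block form of the elements of the tensor system. The weight of the third generator is itself
a matrix entry, and so depends measurably on the matrix. -/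
lemma tensorSys_mulVec {lam : ℝ} {M : Matrix (Fin 2 × Fin 2) (Fin 2 × Fin 2) ℝ}
    (hM : M ∈ tensorSys lam) :
    ∃ w₀ w₁ : ℝ, 0 ≤ w₀ ∧ 0 ≤ w₁ ∧ 0 ≤ M (0, 0) (1, 0) ∧ w₀ + w₁ + M (0, 0) (1, 0) = 1 ∧
      ∀ v, blocks (M *ᵥ v) =
        (w₀ • (ellRot 2 (1/2) (blocks v).1 - lam • (blocks v).1) +
          w₁ • (ellRot (1/2) 2 (blocks v).1 - lam • (blocks v).1) +
          M (0, 0) (1, 0) • ((blocks v).2 - (blocks v).1),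
        w₀ • (ellRot 2 (1/2) (blocks v).2 - (lam + 1) • (blocks v).2) +
          w₁ • (ellRot (1/2) 2 (blocks v).2 - (lam + 1) • (blocks v).2) +
          M (0, 0) (1, 0) • (-(blocks v).1 - (blocks v).2)) := by
  rw [tensorSys, convexHull_insert (by simp), convexHull_pair] at hM
  simp only [convexJoin_singleton_left, mem_iUnion] at hM
  obtain ⟨P, ⟨a, b, ha, hb, hab, rfl⟩, ⟨c, d, hc, hd, hcd, rfl⟩⟩ := hM
  have hq : (c • (!![0, 0; 0, -1] ⊗ₖ (1 : Matrix (Fin 2) (Fin 2) ℝ) +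
      (1 : Matrix (Fin 2) (Fin 2) ℝ) ⊗ₖ !![-lam, -2; 1/2, -lam]) +
      d • (a • (!![0, 0; 0, -1] ⊗ₖ (1 : Matrix (Fin 2) (Fin 2) ℝ) +
        (1 : Matrix (Fin 2) (Fin 2) ℝ) ⊗ₖ !![-lam, -1/2; 2, -lam]) +
      b • (!![-1, 1; -1, -1] ⊗ₖ (1 : Matrix (Fin 2) (Fin 2) ℝ))) :
        Matrix (Fin 2 × Fin 2) (Fin 2 × Fin 2) ℝ) (0, 0) (1, 0) = d * b := by
    simp
  rw [hq]
  obtain rfl : a = 1 - b := by linarith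
  obtain rfl : c = 1 - d := by linarith
  refine ⟨1 - d, d * (1 - b), hc, by positivity, by positivity, by ring, fun v => ?_⟩
  refine Prod.ext ?_ ?_ <;> ext j <;> fin_cases j <;>
    simp [blocks, ellRot, Matrix.mulVec, dotProduct, Fintype.sum_prod_type, Fin.sum_univ_two,
      Matrix.kroneckerMap_apply, Matrix.one_apply, Matrix.vecHead, Matrix.vecTail] <;> ring

lemma tensorSys_bound (lam : ℝ) : ∃ K : ℝ, 0 ≤ K ∧ ∀ M ∈ tensorSys lam,
    ∀ v : Fin 2 × Fin 2 → ℝ, ‖M *ᵥ v‖ ≤ K * ‖v‖ :=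
  exists_bound_hull (by simp)

/-- The blocks `(y, z)` of a trajectory of the tensor system, together with the measurable weight
`q` of the third generator. -/
structure BlockFlow (lam : ℝ) (y z : ℝ → Fin 2 → ℝ) (q : ℝ → ℝ) : Prop where
  meas : Measurable q
  mem : ∀ s, 0 ≤ s → 0 ≤ q s ∧ q s ≤ 1
  lip : ∀ a b, 0 ≤ a → ∃ C : ℝ≥0, LipschitzOnWith C (fun t => (y t, z t)) (Icc a b)
  der : ∀ᵐ s, 0 < s → ∃ w₀ w₁ : ℝ, 0 ≤ w₀ ∧ 0 ≤ w₁ ∧ w₀ + w₁ + q s = 1 ∧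
    HasDerivAt y (w₀ • (ellRot 2 (1/2) (y s) - lam • y s) +
      w₁ • (ellRot (1/2) 2 (y s) - lam • y s) + q s • (z s - y s)) s ∧
    HasDerivAt z (w₀ • (ellRot 2 (1/2) (z s) - (lam + 1) • z s) +
      w₁ • (ellRot (1/2) 2 (z s) - (lam + 1) • z s) + q s • (-y s - z s)) s

lemma IsTrajectory.exists_blockFlow {lam : ℝ} {x : ℝ → Fin 2 × Fin 2 → ℝ}
    (hx : IsTrajectory (tensorSys lam) x) :
    ∃ q, BlockFlow lam (fun t => (blocks (x t)).1) (fun t => (blocks (x t)).2) q := by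
  obtain ⟨K, hK0, hK⟩ := tensorSys_bound lam
  obtain ⟨A, hmeas, hA, hlip, hder⟩ := hx.regular hK0 hK
  refine ⟨fun s => A s (0, 0) (1, 0), hmeas _ _, fun s hs => ?_, fun a b ha => ?_, ?_⟩
  · obtain ⟨w₀, w₁, h0, h1, hq, hsum, -⟩ := tensorSys_mulVec (hA s hs)
    exact ⟨hq, by linarith⟩
  · obtain ⟨C, hC⟩ := hlip a b ha
    refine ⟨C, LipschitzOnWith.of_dist_le_mul fun s hs t ht => ?_⟩
    have h1 := hC.dist_le_mul s hs t ht
    have h2 : (0 : ℝ) ≤ C * dist s t := by positivity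
    rw [Prod.dist_eq]
    refine max_le ?_ ?_ <;> rw [dist_pi_le_iff h2] <;> intro j
    · exact (dist_le_pi_dist (x s) (x t) (0, j)).trans h1
    · exact (dist_le_pi_dist (x s) (x t) (1, j)).trans h1
  · filter_upwards [hder] with s hs h0
    obtain ⟨w₀, w₁, hw0, hw1, hq, hsum, hv⟩ := tensorSys_mulVec (hA s h0.le)
    have hd := hasDerivAt_pi.1 (hs h0)
    have e := hv (x s)
    refine ⟨w₀, w₁, hw0, hw1, hsum, ?_, ?_⟩
    · have h1 : HasDerivAt (fun t => (blocks (x t)).1) (blocks (A s *ᵥ x s)).1 s :=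
        hasDerivAt_pi.2 fun j => hd (0, j)
      rw [e] at h1
      exact h1
    · have h1 : HasDerivAt (fun t => (blocks (x t)).2) (blocks (A s *ᵥ x s)).2 s :=
        hasDerivAt_pi.2 fun j => hd (1, j)
      rw [e] at h1
      exact h1

lemma IsNorm.comp_pair {N : (Fin 2 × Fin 2 → ℝ) → ℝ} (hN : IsNorm N) :
    IsNorm fun w => N (pair w 0) := by
  refine ⟨fun v => ?_, fun a v => ?_, fun v w => ?_⟩
  · rw [hN.eq_zero_iff]
    constructor
    · intro h
      ext j
      exact congrFun h (0, j)
    · rintro rfl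
      ext ⟨i, j⟩
      fin_cases i <;> rfl
  · rw [← hN.smul, ← pair_smul, smul_zero]
  · have := hN.triangle (pair v 0) (pair w 0)
    rwa [← pair_add, add_zero] at this

/-- An extremal norm restricts, on `e₀ ⊗ ℝ²`, to a norm of controlled growth for the unshifted
planar system. -/
lemma grows_of_extremal {lam : ℝ} {N : (Fin 2 × Fin 2 → ℝ) → ℝ}
    (hN : IsExtremalNorm (tensorSys lam) N) :
    Grows (fun w => N (pair w 0)) (lam + Lambda (tensorSys lam)) := by
  set μ := Lambda (tensorSys lam)
  have key : ∀ (a b : ℝ), a * b = 1 → !![0, 0; 0, -1] ⊗ₖ (1 : Matrix (Fin 2) (Fin 2) ℝ) +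
        (1 : Matrix (Fin 2) (Fin 2) ℝ) ⊗ₖ !![-lam, -a; b, -lam] ∈ tensorSys lam →
      ∀ w t, 0 ≤ t → N (pair (Real.cos t • w + Real.sin t • ellRot a b w) 0)
        ≤ Real.exp ((lam + μ) * t) * N (pair w 0) := by
    intro a b hab hM w t ht
    have htraj : IsTrajectory (tensorSys lam) fun t =>
        pair (Real.exp (-lam * t) • (Real.cos t • w + Real.sin t • ellRot a b w)) 0 := by
      refine isTrajectory_of_hasDerivAt hM fun t => hasDerivAt_pi.2 ?_
      have he : HasDerivAt (fun t => Real.exp (-lam * t)) (Real.exp (-lam * t) * -lam) t := by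
        simpa using ((hasDerivAt_id t).const_mul (-lam)).exp
      rintro ⟨i, j⟩
      have hcs : ∀ p r : ℝ, HasDerivAt (fun t => Real.exp (-lam * t) *
          (Real.cos t * p + Real.sin t * r)) (Real.exp (-lam * t) * -lam *
          (Real.cos t * p + Real.sin t * r) + Real.exp (-lam * t) *
          (-Real.sin t * p + Real.cos t * r)) t := fun p r =>
        he.mul (((Real.hasDerivAt_cos t).mul_const p).add ((Real.hasDerivAt_sin t).mul_const r))
      fin_cases i
      · fin_cases j
        · refine (hcs (w 0) (-a * w 1)).congr_deriv ?_
          simp [pair, ellRot, Matrix.mulVec, dotProduct, Fintype.sum_prod_type, Matrix.vecHead,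
            Matrix.vecTail, Fin.sum_univ_two, Matrix.kroneckerMap_apply, Matrix.one_apply]
          linear_combination (Real.exp (-(lam * t)) * Real.sin t * w 0) * hab
        · refine (hcs (w 1) (b * w 0)).congr_deriv ?_
          simp [pair, ellRot, Matrix.mulVec, dotProduct, Fintype.sum_prod_type, Matrix.vecHead,
            Matrix.vecTail, Fin.sum_univ_two, Matrix.kroneckerMap_apply, Matrix.one_apply]
          linear_combination (Real.exp (-(lam * t)) * Real.sin t * w 1) * hab
      · fin_cases j <;>
        · refine (hasDerivAt_const t (0 : ℝ)).congr_deriv ?_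
          simp [pair, Matrix.mulVec, dotProduct, Fintype.sum_prod_type,
            Fin.sum_univ_two, Matrix.kroneckerMap_apply, Matrix.one_apply]
    have h1 := hN.2 _ htraj 0 t le_rfl ht
    have hn := hN.1.comp_pair
    have h2 : N (pair (Real.exp (-lam * t) • (Real.cos t • w + Real.sin t • ellRot a b w)) 0) =
        Real.exp (-lam * t) * N (pair (Real.cos t • w + Real.sin t • ellRot a b w) 0) :=
      hn.smul_nonneg (Real.exp_pos (-lam * t)).le _
    rw [h2] at h1
    simp only [neg_zero, zero_mul, Real.exp_zero, one_mul, mul_zero, Real.cos_zero, one_smul,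
      Real.sin_zero, zero_smul, add_zero] at h1
    rw [← mul_assoc, ← Real.exp_add] at h1
    calc _ = Real.exp ((lam + μ) * t) * (Real.exp (-t * μ + -lam * t) *
          N (pair (Real.cos t • w + Real.sin t • ellRot a b w) 0)) := by
          rw [← mul_assoc, ← Real.exp_add]
          ring_nf
          simp
      _ ≤ _ := mul_le_mul_of_nonneg_left h1 (Real.exp_pos _).le
  refine grows_of_rotation hN.1.comp_pair (key 2 (1/2) (by norm_num) ?_)
    (key (1/2) 2 (by norm_num) ?_)
  · exact subset_convexHull ℝ _ (by simp)
  · refine subset_convexHull ℝ _ ?_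
    rw [neg_div]
    simp

/-- The growth of the shifted fields. -/
lemma Grows.shift_s18 {n : (Fin 2 → ℝ) → ℝ} (hn : IsNorm n) {κ : ℝ} (hg : Grows n κ) (σ : ℝ) :
    ∃ K δ : ℝ, 0 ≤ K ∧ 0 < δ ∧ ∀ w h, 0 ≤ h → h ≤ δ →
      n (w + h • (ellRot 2 (1/2) w - σ • w)) ≤ (1 + (κ - σ) * h + K * h ^ 2) * n w ∧
      n (w + h • (ellRot (1/2) 2 w - σ • w)) ≤ (1 + (κ - σ) * h + K * h ^ 2) * n w := by
  obtain ⟨K, δ, hK, hδ, hg⟩ := hg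
  refine ⟨2 * K, min (δ / 2) (1 / (2 * (|σ| + 1))), by positivity, by positivity,
    fun w h h0 hh => ?_⟩
  have hh1 : h ≤ δ / 2 := hh.trans (min_le_left _ _)
  have hh2 : h ≤ 1 / (2 * (|σ| + 1)) := hh.trans (min_le_right _ _)
  rw [le_div_iff₀ (by positivity)] at hh2
  have hσ : 0 ≤ 1 - 2 * h * σ := by nlinarith [le_abs_self σ]
  have key : ∀ r : Fin 2 → ℝ, n (w + (2 * h) • r) ≤ (1 + κ * (2 * h) + K * (2 * h) ^ 2) * n w →
      n (w + h • (r - σ • w)) ≤ (1 + (κ - σ) * h + 2 * K * h ^ 2) * n w := by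
    intro r hr
    have e : w + h • (r - σ • w) =
        ((1 / 2) * (1 - 2 * h * σ)) • w + (1 / 2 : ℝ) • (w + (2 * h) • r) := by module
    rw [e]
    have t1 := hn.triangle (((1 / 2) * (1 - 2 * h * σ)) • w) ((1 / 2 : ℝ) • (w + (2 * h) • r))
    rw [hn.smul_nonneg (by positivity), hn.smul_nonneg (by positivity)] at t1
    linarith
  exact ⟨key _ (hg w (2 * h) (by positivity) (by linarith)).1,
    key _ (hg w (2 * h) (by positivity) (by linarith)).2⟩

/-! ### The rotation-invariant majorant -/

/-- The supremum of `n (c y + s z)` over the unit disc of coefficients `(c, s)`. It is a norm on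
pairs which does not distinguish directions in the first tensor factor, so the third generator,
which rotates and contracts that factor, strictly decreases it. -/
noncomputable def discNorm (n : (Fin 2 → ℝ) → ℝ) (p : (Fin 2 → ℝ) × (Fin 2 → ℝ)) : ℝ :=
  sSup ((fun a : ℝ × ℝ => n (a.1 • p.1 + a.2 • p.2)) '' {a | a.1 ^ 2 + a.2 ^ 2 ≤ 1})

section Disc

variable {n : (Fin 2 → ℝ) → ℝ}

lemma IsNorm.le_discNorm (hn : IsNorm n) (p : (Fin 2 → ℝ) × (Fin 2 → ℝ)) {c s : ℝ}
    (h : c ^ 2 + s ^ 2 ≤ 1) : n (c • p.1 + s • p.2) ≤ discNorm n p := by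
  refine le_csSup ⟨n p.1 + n p.2, ?_⟩ ⟨(c, s), h, rfl⟩
  rintro _ ⟨⟨a, b⟩, hab, rfl⟩
  simp only [mem_ofPred_eq] at hab ⊢
  have t1 := hn.triangle (a • p.1) (b • p.2)
  rw [hn.smul, hn.smul] at t1
  have ha : |a| ≤ 1 := abs_le_one_iff_mul_self_le_one.2 (by nlinarith [sq_nonneg b])
  have hb : |b| ≤ 1 := abs_le_one_iff_mul_self_le_one.2 (by nlinarith [sq_nonneg a])
  have t2 := mul_le_of_le_one_left (hn.nonneg p.1) ha
  have t3 := mul_le_of_le_one_left (hn.nonneg p.2) hb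
  linarith

lemma discNorm_le {p : (Fin 2 → ℝ) × (Fin 2 → ℝ)} {M : ℝ}
    (h : ∀ c s : ℝ, c ^ 2 + s ^ 2 ≤ 1 → n (c • p.1 + s • p.2) ≤ M) : discNorm n p ≤ M := by
  refine csSup_le ⟨_, (0, 0), by simp, rfl⟩ ?_
  rintro _ ⟨⟨a, b⟩, hab, rfl⟩
  exact h a b hab

lemma IsNorm.fst_le_discNorm (hn : IsNorm n) (p : (Fin 2 → ℝ) × (Fin 2 → ℝ)) :
    n p.1 ≤ discNorm n p := by
  simpa using hn.le_discNorm p (c := 1) (s := 0) (by norm_num)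

lemma IsNorm.snd_le_discNorm (hn : IsNorm n) (p : (Fin 2 → ℝ) × (Fin 2 → ℝ)) :
    n p.2 ≤ discNorm n p := by
  simpa using hn.le_discNorm p (c := 0) (s := 1) (by norm_num)

lemma IsNorm.discNorm_nonneg (hn : IsNorm n) (p : (Fin 2 → ℝ) × (Fin 2 → ℝ)) :
    0 ≤ discNorm n p := (hn.nonneg _).trans (hn.fst_le_discNorm p)

lemma IsNorm.le_mul_discNorm (hn : IsNorm n) (p : (Fin 2 → ℝ) × (Fin 2 → ℝ)) {c s r : ℝ}
    (hr : 0 < r) (h : c ^ 2 + s ^ 2 ≤ r ^ 2) : n (c • p.1 + s • p.2) ≤ r * discNorm n p := by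
  have e : c • p.1 + s • p.2 = r • ((c / r) • p.1 + (s / r) • p.2) := by
    rw [smul_add, smul_smul, smul_smul, mul_div_cancel₀ _ hr.ne', mul_div_cancel₀ _ hr.ne']
  rw [e, hn.smul_nonneg hr.le]
  refine mul_le_mul_of_nonneg_left (hn.le_discNorm p ?_) hr.le
  rw [div_pow, div_pow, ← add_div]
  exact div_le_one_of_le₀ h (by positivity)

lemma IsNorm.discNorm_lipschitz (hn : IsNorm n) :
    ∃ L, ∀ u v, |discNorm n u - discNorm n v| ≤ L * ‖u - v‖ := by
  obtain ⟨L, hL0, hL⟩ := hn.exists_upper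
  have key : ∀ u v, discNorm n u ≤ discNorm n v + 2 * L * ‖u - v‖ := by
    intro u v
    refine discNorm_le fun c s h => ?_
    have e : c • u.1 + s • u.2 = (c • v.1 + s • v.2) + (c • (u - v).1 + s • (u - v).2) := by
      simp only [Prod.fst_sub, Prod.snd_sub]
      module
    have t1 := hn.triangle (c • v.1 + s • v.2) (c • (u - v).1 + s • (u - v).2)
    rw [← e] at t1
    have t2 := hn.le_discNorm v h
    have t3 : n (c • (u - v).1 + s • (u - v).2) ≤ n (u - v).1 + n (u - v).2 := by
      have t1 := hn.triangle (c • (u - v).1) (s • (u - v).2)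
      rw [hn.smul, hn.smul] at t1
      have ha : |c| ≤ 1 := abs_le_one_iff_mul_self_le_one.2 (by nlinarith [sq_nonneg s])
      have hb : |s| ≤ 1 := abs_le_one_iff_mul_self_le_one.2 (by nlinarith [sq_nonneg c])
      have t2 := mul_le_of_le_one_left (hn.nonneg (u - v).1) ha
      have t3 := mul_le_of_le_one_left (hn.nonneg (u - v).2) hb
      linarith
    have t4 := (hL (u - v).1).trans (mul_le_mul_of_nonneg_left (norm_fst_le (u - v)) hL0)
    have t5 := (hL (u - v).2).trans (mul_le_mul_of_nonneg_left (norm_snd_le (u - v)) hL0)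
    linarith
  refine ⟨2 * L, fun u v => abs_sub_le_iff.2 ⟨?_, ?_⟩⟩
  · linarith [key u v]
  · rw [norm_sub_rev]
    linarith [key v u]

lemma ellRot_comb (a b c s : ℝ) (y z : Fin 2 → ℝ) :
    ellRot a b (c • y + s • z) = c • ellRot a b y + s • ellRot a b z := by
  ext i
  fin_cases i <;> simp [ellRot] <;> ring

/-- Along the tensor system the majorant grows at rate at most `μ - q`, where `q` is the weight of
the third generator. -/
lemma IsNorm.upperDer_discNorm (hn : IsNorm n) {lam μ : ℝ} (hμ : 0 ≤ μ) (hg : Grows n (lam + μ))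
    (y z : Fin 2 → ℝ) {w₀ w₁ q : ℝ} (hw0 : 0 ≤ w₀) (hw1 : 0 ≤ w₁) (hq : 0 ≤ q)
    (hw : w₀ + w₁ + q = 1) :
    UpperDer (discNorm n) (y, z)
      (w₀ • (ellRot 2 (1/2) y - lam • y) + w₁ • (ellRot (1/2) 2 y - lam • y) + q • (z - y),
        w₀ • (ellRot 2 (1/2) z - (lam + 1) • z) + w₁ • (ellRot (1/2) 2 z - (lam + 1) • z) +
          q • (-y - z)) ((μ - q) * discNorm n (y, z)) := by
  obtain ⟨K, δ, hK, hδ, hsh⟩ := hg.shift_s18 hn lam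
  set F := discNorm n (y, z) with hF
  have hF0 : 0 ≤ F := hn.discNorm_nonneg _
  refine ⟨(2 * K + 1) * F, min (δ / 2) 1, by positivity, fun h h0 hh => discNorm_le fun c s hcs => ?_⟩
  have hh1 : h ≤ δ / 2 := hh.trans (min_le_left _ _)
  have hh2 : h ≤ 1 := hh.trans (min_le_right _ _)
  set w := c • y + s • z with hwdef
  have hwF : n w ≤ F := hn.le_discNorm (y, z) hcs
  have e : c • ((y, z) + h • (w₀ • (ellRot 2 (1/2) y - lam • y) +
        w₁ • (ellRot (1/2) 2 y - lam • y) + q • (z - y),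
        w₀ • (ellRot 2 (1/2) z - (lam + 1) • z) + w₁ • (ellRot (1/2) 2 z - (lam + 1) • z) +
          q • (-y - z))).1 + s • ((y, z) + h • (w₀ • (ellRot 2 (1/2) y - lam • y) +
        w₁ • (ellRot (1/2) 2 y - lam • y) + q • (z - y),
        w₀ • (ellRot 2 (1/2) z - (lam + 1) • z) + w₁ • (ellRot (1/2) 2 z - (lam + 1) • z) +
          q • (-y - z))).2 =
      (w₀ • ((1 / 2 : ℝ) • (c • y + (s * (1 - 2 * h)) • z) +
        (1 / 2 : ℝ) • (w + (2 * h) • (ellRot 2 (1/2) w - lam • w))) +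
      w₁ • ((1 / 2 : ℝ) • (c • y + (s * (1 - 2 * h)) • z) +
        (1 / 2 : ℝ) • (w + (2 * h) • (ellRot (1/2) 2 w - lam • w)))) +
      q • ((c - h * c - h * s) • y + (s + h * c - h * s) • z) := by
    obtain rfl : w₀ = 1 - w₁ - q := by linarith
    rw [hwdef, ellRot_comb, ellRot_comb]
    simp only [Prod.fst_add, Prod.snd_add, Prod.smul_fst, Prod.smul_snd]
    module
  rw [e]
  have half : ∀ r, n (w + (2 * h) • (r - lam • w)) ≤
      (1 + (lam + μ - lam) * (2 * h) + K * (2 * h) ^ 2) * n w →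
      n ((1 / 2 : ℝ) • (c • y + (s * (1 - 2 * h)) • z) +
        (1 / 2 : ℝ) • (w + (2 * h) • (r - lam • w))) ≤ (1 + μ * h + 2 * K * h ^ 2) * F := by
    intro r hr
    have t1 := hn.triangle ((1 / 2 : ℝ) • (c • y + (s * (1 - 2 * h)) • z))
      ((1 / 2 : ℝ) • (w + (2 * h) • (r - lam • w)))
    rw [hn.smul_nonneg (by norm_num), hn.smul_nonneg (by norm_num)] at t1
    have t2 : n (c • y + (s * (1 - 2 * h)) • z) ≤ F := hn.le_discNorm (y, z) (by
      have : (1 - 2 * h) ^ 2 ≤ 1 := by nlinarith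
      have := mul_le_mul_of_nonneg_left this (sq_nonneg s)
      rw [mul_pow]
      linarith)
    have t3 : (1 + (lam + μ - lam) * (2 * h) + K * (2 * h) ^ 2) * n w ≤
        (1 + (lam + μ - lam) * (2 * h) + K * (2 * h) ^ 2) * F := by
      refine mul_le_mul_of_nonneg_left hwF ?_
      rw [add_sub_cancel_left]
      positivity
    linarith
  have t0 := hsh w (2 * h) (by positivity) (by linarith)
  have a0 := mul_le_mul_of_nonneg_left (half _ t0.1) hw0
  have a1 := mul_le_mul_of_nonneg_left (half _ t0.2) hw1
  have a2 : n ((c - h * c - h * s) • y + (s + h * c - h * s) • z) ≤ (1 - h + h ^ 2) * F := by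
    refine hn.le_mul_discNorm (y, z) (by nlinarith [sq_nonneg (h - 1)]) ?_
    have e1 : (c - h * c - h * s) ^ 2 + (s + h * c - h * s) ^ 2 =
        (c ^ 2 + s ^ 2) * ((1 - h) ^ 2 + h ^ 2) := by ring
    rw [e1]
    have := mul_le_mul_of_nonneg_right hcs (by positivity : 0 ≤ (1 - h) ^ 2 + h ^ 2)
    nlinarith [mul_nonneg (sq_nonneg h) (sq_nonneg (1 - h))]
  have a3 := mul_le_mul_of_nonneg_left a2 hq
  have b1 := hn.triangle (w₀ • ((1 / 2 : ℝ) • (c • y + (s * (1 - 2 * h)) • z) +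
        (1 / 2 : ℝ) • (w + (2 * h) • (ellRot 2 (1/2) w - lam • w))) +
      w₁ • ((1 / 2 : ℝ) • (c • y + (s * (1 - 2 * h)) • z) +
        (1 / 2 : ℝ) • (w + (2 * h) • (ellRot (1/2) 2 w - lam • w))))
      (q • ((c - h * c - h * s) • y + (s + h * c - h * s) • z))
  have b2 := hn.triangle (w₀ • ((1 / 2 : ℝ) • (c • y + (s * (1 - 2 * h)) • z) +
        (1 / 2 : ℝ) • (w + (2 * h) • (ellRot 2 (1/2) w - lam • w))))
      (w₁ • ((1 / 2 : ℝ) • (c • y + (s * (1 - 2 * h)) • z) +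
        (1 / 2 : ℝ) • (w + (2 * h) • (ellRot (1/2) 2 w - lam • w))))
  rw [hn.smul_nonneg hq] at b1
  rw [hn.smul_nonneg hw0, hn.smul_nonneg hw1] at b2
  refine (b1.trans (add_le_add (b2.trans (add_le_add a0 a1)) a3)).trans ?_
  obtain rfl : w₀ = 1 - w₁ - q := by linarith
  have c1 : 0 ≤ q * (h * (μ * F)) := by positivity
  have c2 : 0 ≤ q * (h ^ 2 * (K * F)) := by positivity
  have c3 : 0 ≤ (1 - q) * (h ^ 2 * F) := mul_nonneg (by linarith) (by positivity)
  linarith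

/-- The second block decays, up to the forcing `q n(y)` by the first one. -/
lemma IsNorm.upperDer_snd (hn : IsNorm n) {lam μ : ℝ} (hg : Grows n (lam + μ)) (y z : Fin 2 → ℝ)
    {w₀ w₁ q : ℝ} (hw0 : 0 ≤ w₀) (hw1 : 0 ≤ w₁) (hq : 0 ≤ q) (hμ : 0 ≤ μ)
    (hw : w₀ + w₁ + q = 1) :
    UpperDer n z (w₀ • (ellRot 2 (1/2) z - (lam + 1) • z) +
      w₁ • (ellRot (1/2) 2 z - (lam + 1) • z) + q • (-y - z)) ((μ - 1) * n z + q * n y) := by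
  obtain ⟨K, δ, hK, hδ, hsh⟩ := hg.shift_s18 hn (lam + 1)
  refine ⟨K * n z, min δ 1, by positivity, fun h h0 hh => ?_⟩
  have hh1 : h ≤ δ := hh.trans (min_le_left _ _)
  have hh2 : h ≤ 1 := hh.trans (min_le_right _ _)
  have hz := hn.nonneg z
  have e : z + h • (w₀ • (ellRot 2 (1/2) z - (lam + 1) • z) +
      w₁ • (ellRot (1/2) 2 z - (lam + 1) • z) + q • (-y - z)) =
      (w₀ • (z + h • (ellRot 2 (1/2) z - (lam + 1) • z)) +
      w₁ • (z + h • (ellRot (1/2) 2 z - (lam + 1) • z))) +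
      q • ((1 - h) • z + h • (-y)) := by
    obtain rfl : w₀ = 1 - w₁ - q := by linarith
    module
  rw [e]
  have b1 := hn.triangle (w₀ • (z + h • (ellRot 2 (1/2) z - (lam + 1) • z)) +
      w₁ • (z + h • (ellRot (1/2) 2 z - (lam + 1) • z))) (q • ((1 - h) • z + h • (-y)))
  have b2 := hn.triangle (w₀ • (z + h • (ellRot 2 (1/2) z - (lam + 1) • z)))
      (w₁ • (z + h • (ellRot (1/2) 2 z - (lam + 1) • z)))
  have b3 := hn.triangle ((1 - h) • z) (h • (-y))
  rw [hn.smul_nonneg hq] at b1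
  rw [hn.smul_nonneg hw0, hn.smul_nonneg hw1] at b2
  rw [hn.smul_nonneg (by linarith), hn.smul_nonneg h0, hn.neg] at b3
  have a0 := mul_le_mul_of_nonneg_left (hsh z h h0 hh1).1 hw0
  have a1 := mul_le_mul_of_nonneg_left (hsh z h h0 hh1).2 hw1
  have a3 := mul_le_mul_of_nonneg_left b3 hq
  refine (b1.trans (add_le_add (b2.trans (add_le_add a0 a1)) a3)).trans ?_
  obtain rfl : w₀ = 1 - w₁ - q := by linarith
  have c1 : 0 ≤ q * (h * (μ * n z)) := by positivity
  have c2 : 0 ≤ q * (h ^ 2 * (K * n z)) := by positivity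
  linarith

end Disc

/-! ### Dissipation along the block flow -/

section Flow

variable {n : (Fin 2 → ℝ) → ℝ} {lam μ : ℝ} {y z : ℝ → Fin 2 → ℝ} {q : ℝ → ℝ}

lemma BlockFlow.intervalIntegrable (hf : BlockFlow lam y z q) {a b : ℝ} (ha : 0 ≤ a)
    (hb : 0 ≤ b) : IntervalIntegrable q volume a b := by
  have h1 : IntervalIntegrable (fun _ : ℝ => (1 : ℝ)) volume a b := intervalIntegrable_const
  refine h1.mono_fun hf.meas.aestronglyMeasurable ?_
  refine (ae_restrict_iff' measurableSet_uIoc).2 (Eventually.of_forall fun s hs => ?_)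
  have hs0 : 0 ≤ s := (le_min ha hb).trans hs.1.le
  simpa [abs_of_nonneg (hf.mem s hs0).1] using (hf.mem s hs0).2

lemma BlockFlow.integral_nonneg (hf : BlockFlow lam y z q) {a b : ℝ} (ha : 0 ≤ a) (hab : a ≤ b) :
    0 ≤ ∫ s in a..b, q s :=
  intervalIntegral.integral_nonneg hab fun s hs => (hf.mem s (ha.trans hs.1)).1

/-- A lower bound for the normalised majorant turns its dissipation into a bound on the total
weight of the third generator. -/
lemma BlockFlow.discNorm_add_le (hf : BlockFlow lam y z q) (hn : IsNorm n) (hμ : 0 ≤ μ)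
    (hg : Grows n (lam + μ)) {c t : ℝ} (ht : 0 ≤ t)
    (hc : ∀ s, 0 ≤ s → c ≤ Real.exp (-μ * s) * discNorm n (y s, z s)) :
    Real.exp (-μ * t) * discNorm n (y t, z t) + c * ∫ s in (0 : ℝ)..t, q s ≤
      discNorm n (y 0, z 0) := by
  obtain ⟨L, hL⟩ := hn.discNorm_lipschitz
  have := weighted_flow_le (κ := -μ) (R := fun s => -c * q s) hL ht (hf.lip 0 t le_rfl)
    ((hf.intervalIntegrable le_rfl ht).const_mul _) (by
      filter_upwards [hf.der] with s hs h0 _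
      obtain ⟨w₀, w₁, hw0, hw1, hw, hy, hz⟩ := hs h0
      have hq := (hf.mem s h0.le).1
      refine ⟨_, _, hy.prodMk hz, hn.upperDer_discNorm hμ hg (y s) (z s) hw0 hw1 hq hw, ?_⟩
      have := mul_le_mul_of_nonneg_left (hc s h0.le) hq
      linarith)
  rw [intervalIntegral.integral_const_mul, mul_zero, Real.exp_zero, one_mul] at this
  linarith

lemma BlockFlow.discNorm_le (hf : BlockFlow lam y z q) (hn : IsNorm n) (hμ : 0 ≤ μ)
    (hg : Grows n (lam + μ)) {t : ℝ} (ht : 0 ≤ t) :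
    Real.exp (-μ * t) * discNorm n (y t, z t) ≤ discNorm n (y 0, z 0) := by
  have := hf.discNorm_add_le hn hμ hg (c := 0) ht fun s _ =>
    mul_nonneg (Real.exp_pos _).le (hn.discNorm_nonneg _)
  linarith

/-- If the total weight of the third generator is finite, then the normalised second block tends
to zero. -/
lemma BlockFlow.snd_tendsto (hf : BlockFlow lam y z q) (hn : IsNorm n) (hμ : 0 ≤ μ)
    (hg : Grows n (lam + μ)) {Q : ℝ} (hQ : ∀ t, 0 ≤ t → ∫ s in (0 : ℝ)..t, q s ≤ Q) {ε : ℝ}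
    (hε : 0 < ε) : ∃ T, 0 ≤ T ∧ ∀ t, T ≤ t → Real.exp (-μ * t) * n (z t) ≤ ε := by
  set C := discNorm n (y 0, z 0) with hC
  have hC0 : 0 ≤ C := hn.discNorm_nonneg _
  set η := ε / (2 * (C + 1)) with hη
  have hη0 : 0 < η := by positivity
  have hηC : 2 * (η * C) ≤ ε := by
    have : η * (2 * (C + 1)) = ε := div_mul_cancel₀ _ (by positivity)
    linarith
  -- beyond `T` the third generator carries total weight at most `η`
  obtain ⟨T, hT0, hT⟩ : ∃ T, 0 ≤ T ∧ ∀ t, T ≤ t → ∫ s in T..t, q s ≤ η := by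
    set S := (fun t => ∫ s in (0 : ℝ)..t, q s) '' Ici 0 with hS
    have hbdd : BddAbove S := ⟨Q, by rintro _ ⟨t, ht, rfl⟩; exact hQ t ht⟩
    have hne : S.Nonempty := ⟨_, 0, self_mem_Ici, rfl⟩
    obtain ⟨_, ⟨T, hT0, rfl⟩, hT⟩ := exists_lt_of_lt_csSup hne (sub_lt_self (sSup S) hη0)
    have hT0' : (0 : ℝ) ≤ T := hT0
    refine ⟨T, hT0', fun t ht => ?_⟩
    have h1 := le_csSup hbdd ⟨t, hT0'.trans ht, rfl⟩
    have h2 := intervalIntegral.integral_add_adjacent_intervals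
      (hf.intervalIntegrable le_rfl hT0') (hf.intervalIntegrable hT0' (hT0'.trans ht))
    simp only at h1 hT
    linarith
  have hbd : ∀ t, 0 ≤ t → Real.exp (-μ * t) * n (y t) ≤ C ∧ Real.exp (-μ * t) * n (z t) ≤ C :=
    fun t ht => ⟨(mul_le_mul_of_nonneg_left (hn.fst_le_discNorm (y t, z t))
      (Real.exp_pos _).le).trans (hf.discNorm_le hn hμ hg ht),
      (mul_le_mul_of_nonneg_left (hn.snd_le_discNorm (y t, z t))
      (Real.exp_pos _).le).trans (hf.discNorm_le hn hμ hg ht)⟩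
  refine ⟨T + 1 / η, by positivity, fun t ht => ?_⟩
  have hTt : T ≤ t := by
    have : 0 < 1 / η := by positivity
    linarith
  obtain ⟨L, -, hL⟩ := hn.exists_lipschitz
  obtain ⟨K, hK⟩ := hf.lip T t hT0
  have key := weighted_flow_le (x := z) (κ := 1 - μ) (R := fun s => Real.exp t * C * q s) hL hTt
    ⟨K, LipschitzOnWith.of_dist_le_mul fun s hs r hr =>
      (le_max_right _ _).trans (hK.dist_le_mul s hs r hr)⟩
    ((hf.intervalIntegrable hT0 (hT0.trans hTt)).const_mul _) (by
      filter_upwards [hf.der] with s hs h0 h1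
      have hs0 : 0 < s := hT0.trans_lt h0
      obtain ⟨w₀, w₁, hw0, hw1, hw, hy, hz⟩ := hs hs0
      have hq := (hf.mem s hs0.le).1
      refine ⟨_, _, hz, hn.upperDer_snd hg (y s) (z s) hw0 hw1 hq hμ hw, ?_⟩
      have e : Real.exp ((1 - μ) * s) = Real.exp s * Real.exp (-μ * s) := by
        rw [← Real.exp_add]; ring_nf
      have h2 : Real.exp s * (Real.exp (-μ * s) * n (y s)) ≤ Real.exp t * C :=
        mul_le_mul (Real.exp_le_exp.2 h1.le) (hbd s hs0.le).1
          (mul_nonneg (Real.exp_pos _).le (hn.nonneg _)) (Real.exp_pos _).le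
      have h3 := mul_le_mul_of_nonneg_right h2 hq
      rw [e]
      linarith)
  rw [intervalIntegral.integral_const_mul] at key
  have e1 : Real.exp ((1 - μ) * t) = Real.exp t * Real.exp (-μ * t) := by
    rw [← Real.exp_add]; ring_nf
  have e2 : Real.exp ((1 - μ) * T) = Real.exp t * (Real.exp (T - t) * Real.exp (-μ * T)) := by
    rw [← Real.exp_add, ← Real.exp_add]; ring_nf
  rw [e1, e2] at key
  have h1 : Real.exp (-μ * t) * n (z t) ≤
      Real.exp (T - t) * (Real.exp (-μ * T) * n (z T)) + C * ∫ s in T..t, q s := by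
    refine le_of_mul_le_mul_left ?_ (Real.exp_pos t)
    linarith
  have h2 : Real.exp (T - t) ≤ η := by
    have h3 : Real.exp (T - t) * Real.exp (t - T) = 1 := by rw [← Real.exp_add]; simp
    have h4 : 1 / η ≤ Real.exp (t - T) := by linarith [Real.add_one_le_exp (t - T)]
    rw [div_le_iff₀ hη0] at h4
    nlinarith [Real.exp_pos (T - t), Real.exp_pos (t - T)]
  have h5 : Real.exp (T - t) * (Real.exp (-μ * T) * n (z T)) ≤ η * C :=
    mul_le_mul h2 (hbd T hT0).2 (mul_nonneg (Real.exp_pos _).le (hn.nonneg _)) hη0.le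
  have h6 := mul_le_mul_of_nonneg_left (hT t hTt) hC0
  linarith

/-! ### Recurrence of directions -/

/-- Since the third generator has finite total weight, the direction of the dominant block turns
indefinitely, at average speed at least `1/2`; so it cannot stay on one side of a line. -/
lemma BlockFlow.exists_det_nonpos (hf : BlockFlow lam y z q) {Q : ℝ}
    (hQ : ∀ t, 0 ≤ t → ∫ s in (0 : ℝ)..t, q s ≤ Q) {T : ℝ} (hT0 : 0 ≤ T)
    (hyz : ∀ t, T ≤ t → z t 0 ^ 2 + z t 1 ^ 2 ≤ y t 0 ^ 2 + y t 1 ^ 2) (v : Fin 2 → ℝ) :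
    ∃ t, T ≤ t ∧ v 0 * y t 1 - v 1 * y t 0 ≤ 0 := by
  by_contra! hpos
  set b := T + 2 * (Real.pi + 3 / 2 * Q + 1) with hb
  have hQ0 : 0 ≤ Q := by simpa using hQ 0 le_rfl
  have hTb : T ≤ b := by have := Real.pi_pos; linarith
  have hlip : ∃ C : ℝ≥0, LipschitzOnWith C y (Icc T b) := by
    obtain ⟨C, hC⟩ := hf.lip T b hT0
    exact ⟨C, LipschitzOnWith.of_dist_le_mul fun s hs r hr =>
      (le_max_left _ _).trans (hC.dist_le_mul s hs r hr)⟩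
  obtain ⟨C, hC⟩ := hlip
  -- `Ψ` is the angle of `w`, measured from the normal direction to the line `ℝ v`
  set Ψ : (Fin 2 → ℝ) → ℝ := fun w =>
    Real.arctan ((v 0 * w 0 + v 1 * w 1) / (v 0 * w 1 - v 1 * w 0)) with hΨ
  have hac : AbsolutelyContinuousOnInterval (fun t => Ψ (y t)) T b := by
    set U : Set (Fin 2 → ℝ) := {w | 0 < v 0 * w 1 - v 1 * w 0} with hU
    have hconv : Convex ℝ U := by
      intro p hp r hr α β hα hβ hαβ
      simp only [hU, mem_ofPred_eq, Pi.add_apply, Pi.smul_apply, smul_eq_mul] at hp hr ⊢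
      rcases hα.eq_or_lt with rfl | hα
      · obtain rfl : β = 1 := by linarith
        linarith
      · nlinarith [mul_pos hα hp, mul_nonneg hβ hr.le]
    have hcd : ContDiffOn ℝ 1 Ψ U := by
      refine Real.contDiff_arctan.comp_contDiffOn (ContDiffOn.div ?_ ?_ fun w hw => ne_of_gt hw)
      · fun_prop
      · fun_prop
    have hsub : y '' Icc T b ⊆ U := by
      rintro _ ⟨t, ht, rfl⟩
      exact hpos t ht.1
    obtain ⟨K, hK⟩ := ((hcd.locallyLipschitzOn hconv).mono hsub).exists_lipschitzOnWith_of_compact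
      (isCompact_Icc.image_of_continuousOn hC.continuousOn)
    refine LipschitzOnWith.absolutelyContinuousOnInterval (K := K * C) ?_
    rw [uIcc_of_le hTb]
    exact hK.comp hC (mapsTo_image _ _)
  have hint := hf.intervalIntegrable hT0 (hT0.trans hTb)
  have key := sub_le_integral_of_deriv_le (R := fun s => -(1 / 2) + 3 / 2 * q s) hTb hac
    (intervalIntegrable_const.add (hint.const_mul _)) (by
      filter_upwards [hf.der] with s hs h0 _ d hd
      have hs0 : 0 < s := hT0.trans_lt h0
      obtain ⟨w₀, w₁, hw0, hw1, hw, hy, -⟩ := hs hs0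
      have hq := (hf.mem s hs0.le).1
      have hp := hpos s h0.le
      have hz := hyz s h0.le
      have hy' := hasDerivAt_pi.1 hy
      have hy0 := hy' 0
      have hy1 := hy' 1
      have hA := (hy0.const_mul (v 0)).add (hy1.const_mul (v 1))
      have hD := (hy1.const_mul (v 0)).sub (hy0.const_mul (v 1))
      have hd2 := (hA.div hD hp.ne').arctan
      rw [hd.unique hd2]
      -- the angular velocity of `y` is at least `1/2 - (3/2) q`
      have hdet : (1 / 2 - 3 / 2 * q s) * (y s 0 ^ 2 + y s 1 ^ 2) ≤
          y s 0 * (w₀ • (ellRot 2 (1/2) (y s) - lam • y s) +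
            w₁ • (ellRot (1/2) 2 (y s) - lam • y s) + q s • (z s - y s)) 1 -
          y s 1 * (w₀ • (ellRot 2 (1/2) (y s) - lam • y s) +
            w₁ • (ellRot (1/2) 2 (y s) - lam • y s) + q s • (z s - y s)) 0 := by
        simp only [ellRot, Pi.add_apply, Pi.sub_apply, Pi.smul_apply, smul_eq_mul, cons_val_zero,
          cons_val_one, cons_val_fin_one]
        have c1 : 0 ≤ q s * ((y s 0 + z s 1) ^ 2 + (y s 1 - z s 0) ^ 2 +
            (y s 0 ^ 2 + y s 1 ^ 2 - (z s 0 ^ 2 + z s 1 ^ 2))) :=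
          mul_nonneg hq (by nlinarith [sq_nonneg (y s 0 + z s 1), sq_nonneg (y s 1 - z s 0)])
        have c2 : 0 ≤ w₀ * y s 1 ^ 2 := by positivity
        have c3 : 0 ≤ w₁ * y s 0 ^ 2 := by positivity
        obtain rfl : w₀ = 1 - w₁ - q s := by linarith
        linarith
      generalize (w₀ • (ellRot 2 (1/2) (y s) - lam • y s) +
            w₁ • (ellRot (1/2) 2 (y s) - lam • y s) + q s • (z s - y s)) = Y at hdet ⊢
      set D := v 0 * y s 1 - v 1 * y s 0 with hDdef
      set A := v 0 * y s 0 + v 1 * y s 1 with hAdef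
      have e : 1 / (1 + (A / D) ^ 2) * (((v 0 * Y 0 + v 1 * Y 1) * D -
          A * (v 0 * Y 1 - v 1 * Y 0)) / D ^ 2) = ((v 0 * Y 0 + v 1 * Y 1) * D -
          A * (v 0 * Y 1 - v 1 * Y 0)) / (D ^ 2 + A ^ 2) := by
        have : D ≠ 0 := hp.ne'
        have : D ^ 2 + A ^ 2 ≠ 0 := by positivity
        field_simp
      refine e.trans_le ?_
      rw [div_le_iff₀ (by positivity)]
      have := mul_le_mul_of_nonneg_left hdet (by positivity : 0 ≤ v 0 ^ 2 + v 1 ^ 2)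
      rw [hDdef, hAdef]
      linarith)
  rw [intervalIntegral.integral_add intervalIntegrable_const (hint.const_mul _),
    intervalIntegral.integral_const_mul, intervalIntegral.integral_const] at key
  have h1 := intervalIntegral.integral_add_adjacent_intervals
    (hf.intervalIntegrable le_rfl hT0) hint
  have h2 := hf.integral_nonneg le_rfl hT0
  have h3 := hQ b (hT0.trans hTb)
  have h4 := Real.neg_pi_div_two_lt_arctan
    ((v 0 * y b 0 + v 1 * y b 1) / (v 0 * y b 1 - v 1 * y b 0))
  have h5 := Real.arctan_lt_pi_div_two
    ((v 0 * y T 0 + v 1 * y T 1) / (v 0 * y T 1 - v 1 * y T 0))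
  simp only [hΨ, smul_eq_mul] at key
  have h6 : b - T = 2 * (Real.pi + 3 / 2 * Q + 1) := by rw [hb]; ring
  rw [h6] at key
  linarith

end Flow

lemma BlockFlow.exists_det_zero {lam : ℝ} {y z : ℝ → Fin 2 → ℝ} {q : ℝ → ℝ}
    (hf : BlockFlow lam y z q) {Q : ℝ}
    (hQ : ∀ t, 0 ≤ t → ∫ s in (0 : ℝ)..t, q s ≤ Q) {T : ℝ} (hT0 : 0 ≤ T)
    (hyz : ∀ t, T ≤ t → z t 0 ^ 2 + z t 1 ^ 2 ≤ y t 0 ^ 2 + y t 1 ^ 2) (v : Fin 2 → ℝ) :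
    ∃ t, T ≤ t ∧ v 0 * y t 1 - v 1 * y t 0 = 0 := by
  obtain ⟨t₁, ht₁, h1⟩ := hf.exists_det_nonpos hQ hT0 hyz v
  obtain ⟨t₂, ht₂, h2⟩ := hf.exists_det_nonpos hQ hT0 hyz (-v)
  simp only [Pi.neg_apply] at h2
  have hTm : T ≤ min t₁ t₂ := le_min ht₁ ht₂
  obtain ⟨C, hC⟩ := hf.lip (min t₁ t₂) (max t₁ t₂) (hT0.trans hTm)
  have hy : ContinuousOn y (uIcc t₁ t₂) := continuous_fst.comp_continuousOn hC.continuousOn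
  have hc : ContinuousOn (fun t => v 0 * y t 1 - v 1 * y t 0) (uIcc t₁ t₂) := by
    have := continuousOn_pi.1 hy
    exact (continuousOn_const.mul (this 1)).sub (continuousOn_const.mul (this 0))
  obtain ⟨t, ht, h⟩ := intermediate_value_uIcc hc
    (show (0 : ℝ) ∈ _ from mem_uIcc.2 (Or.inl ⟨h1, by linarith⟩))
  exact ⟨t, hTm.trans ht.1, h⟩

/-! ### Uniqueness -/

lemma IsNorm.comp_pair_right {N : (Fin 2 × Fin 2 → ℝ) → ℝ} (hN : IsNorm N) :
    IsNorm fun w => N (pair 0 w) := by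
  refine ⟨fun v => ?_, fun a v => ?_, fun v w => ?_⟩
  · rw [hN.eq_zero_iff]
    constructor
    · intro h
      ext j
      exact congrFun h (1, j)
    · rintro rfl
      ext ⟨i, j⟩
      fin_cases i <;> rfl
  · rw [← hN.smul, ← pair_smul, smul_zero]
  · have := hN.triangle (pair 0 v) (pair 0 w)
    rwa [← pair_add, add_zero] at this

lemma pair_eq_add (y z : Fin 2 → ℝ) : pair y z = pair y 0 + pair 0 z := by
  rw [← pair_add, add_zero, zero_add]

/-- A trajectory along which an extremal norm grows at the maximal rate uses the third generator
for a finite total time only, and its second block becomes negligible. -/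
lemma exists_asymptotics {lam : ℝ} (hlam : lam = Lambda planeSys)
    {N : (Fin 2 × Fin 2 → ℝ) → ℝ} (hN : IsExtremalNorm (tensorSys lam) N)
    {x : ℝ → Fin 2 × Fin 2 → ℝ} (hx : IsTrajectory (tensorSys lam) x) {u : Fin 2 × Fin 2 → ℝ}
    (hu : u ≠ 0) (hmax : ∀ t, 0 ≤ t → Real.exp (-t * Lambda (tensorSys lam)) * N (x t) = N u) :
    ∃ q Q, BlockFlow lam (fun t => (blocks (x t)).1) (fun t => (blocks (x t)).2) q ∧
      (∀ t, 0 ≤ t → ∫ s in (0 : ℝ)..t, q s ≤ Q) ∧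
      ∀ ε > 0, ∃ T, 0 ≤ T ∧ ∀ t, T ≤ t →
        N (pair (blocks (x t)).2 0) ≤ ε * N (pair (blocks (x t)).1 0) := by
  have hg := grows_of_extremal hN
  have hn := hN.1.comp_pair
  set μ := Lambda (tensorSys lam) with hμdef
  set n : (Fin 2 → ℝ) → ℝ := fun w => N (pair w 0) with hndef
  have hμ : 0 ≤ μ := by
    have := Lambda_planeSys_le hn hg
    linarith
  obtain ⟨q, hf⟩ := hx.exists_blockFlow
  set y := fun t => (blocks (x t)).1 with hy
  set z := fun t => (blocks (x t)).2 with hz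
  have hNu := hN.1.pos hu
  obtain ⟨C, hC, -, -, -, hCle⟩ := hN.1.comp_pair_right.exists_max_ratio hn
  have hxyz : ∀ t, N (x t) ≤ n (y t) + C * n (z t) := fun t => by
    rw [← pair_blocks (x t), pair_eq_add]
    exact (hN.1.triangle _ _).trans (add_le_add le_rfl (hCle _))
  have hmax' : ∀ t, 0 ≤ t →
      N u ≤ Real.exp (-μ * t) * n (y t) + C * (Real.exp (-μ * t) * n (z t)) := fun t ht => by
    have h1 := hmax t ht
    have h2 := mul_le_mul_of_nonneg_left (hxyz t) (Real.exp_pos (-μ * t)).le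
    have e : -t * μ = -μ * t := by ring
    rw [e] at h1
    linarith
  have hlow : ∀ t, 0 ≤ t → N u / (1 + C) ≤ Real.exp (-μ * t) * discNorm n (y t, z t) :=
    fun t ht => by
    rw [div_le_iff₀ (by positivity)]
    have h1 := mul_le_mul_of_nonneg_left (hn.fst_le_discNorm (y t, z t)) (Real.exp_pos (-μ * t)).le
    have h2 := mul_le_mul_of_nonneg_left (hn.snd_le_discNorm (y t, z t)) (Real.exp_pos (-μ * t)).le
    have h3 := mul_le_mul_of_nonneg_left h2 hC.le
    have h4 := hmax' t ht
    simp only at h1 h3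
    linarith
  have hQ : ∀ t, 0 ≤ t →
      ∫ s in (0 : ℝ)..t, q s ≤ discNorm n (y 0, z 0) / (N u / (1 + C)) := fun t ht => by
    rw [le_div_iff₀ (by positivity)]
    have h1 := hf.discNorm_add_le hn hμ hg ht hlow
    have h2 := mul_nonneg (Real.exp_pos (-μ * t)).le (hn.discNorm_nonneg (y t, z t))
    linarith
  refine ⟨q, _, hf, hQ, fun ε hε => ?_⟩
  -- the second block drops below `η`, while the first one stays above `N u - C η`
  set η := ε * N u / (1 + C * ε) with hη
  have hη0 : 0 < η := by positivity
  obtain ⟨T, hT0, hT⟩ := hf.snd_tendsto hn hμ hg hQ hη0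
  refine ⟨T, hT0, fun t ht => ?_⟩
  have h1 := hT t ht
  have h2 := hmax' t (hT0.trans ht)
  have h3 : η * (1 + C * ε) = ε * N u := div_mul_cancel₀ _ (by positivity)
  have h4 := mul_le_mul_of_nonneg_left h2 hε.le
  have h5 := mul_le_mul_of_nonneg_left h1 (mul_pos hC hε).le
  refine le_of_mul_le_mul_left (a := Real.exp (-μ * t)) ?_ (Real.exp_pos _)
  change Real.exp (-μ * t) * n (z t) ≤ Real.exp (-μ * t) * (ε * n (y t))
  linarith

/-- If `N₁ ≤ c N₂` with equality at some nonzero vector, then equality propagates along a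
trajectory on which the Barabanov norm `N₁` is maximal, and thereby to all of `e₀ ⊗ ℝ²`, whose
directions are all approached by the trajectory. -/
lemma eq_on_first_block {lam : ℝ} (hlam : lam = Lambda planeSys)
    {N₁ N₂ : (Fin 2 × Fin 2 → ℝ) → ℝ} (h₁ : IsBarabanovNorm (tensorSys lam) N₁)
    (h₂ : IsExtremalNorm (tensorSys lam) N₂) {c : ℝ} (hc : 0 < c)
    (hle : ∀ v, N₁ v ≤ c * N₂ v) {u : Fin 2 × Fin 2 → ℝ} (hu : u ≠ 0) (hueq : N₁ u = c * N₂ u)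
    (v : Fin 2 → ℝ) : N₁ (pair v 0) = c * N₂ (pair v 0) := by
  refine (hle _).antisymm (not_lt.1 fun hlt => ?_)
  have hN₁ := h₁.1.1
  have hN₂ := h₂.1
  have hn := hN₁.comp_pair
  have hv : v ≠ 0 := by
    rintro rfl
    have e : pair 0 0 = 0 := by simpa using pair_smul 0 0 0
    simp [e, hN₁.zero, hN₂.zero] at hlt
  obtain ⟨x, hx, hx0, hmax⟩ := h₁.2 u
  have heq : ∀ t, 0 ≤ t → c * N₂ (x t) ≤ N₁ (x t) := fun t ht => by
    have a1 := hmax t ht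
    have a2 := h₂.2 x hx 0 t le_rfl ht
    rw [neg_zero, zero_mul, Real.exp_zero, one_mul, hx0] at a2
    refine le_of_mul_le_mul_left ?_ (Real.exp_pos (-t * Lambda (tensorSys lam)))
    rw [a1, hueq]
    have := mul_le_mul_of_nonneg_left a2 hc.le
    linarith
  have hxne : ∀ t, 0 ≤ t → x t ≠ 0 := fun t ht h => by
    have a1 := hmax t ht
    rw [h, hN₁.zero, mul_zero] at a1
    exact (hN₁.pos hu).ne a1
  obtain ⟨q, Q, hf, hQ, hasym⟩ := exists_asymptotics hlam h₁.1 hx hu hmax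
  obtain ⟨C₁, hC₁, -, -, -, hC₁le⟩ := hN₁.comp_pair_right.exists_max_ratio hn
  obtain ⟨C₂, hC₂, -, -, -, hC₂le⟩ := hN₂.comp_pair_right.exists_max_ratio hn
  obtain ⟨c₁, hc₁, -, -, -, hc₁le⟩ := (eNorm_isNorm (n := Fin 2)).exists_max_ratio hn
  obtain ⟨c₂, hc₂, -, -, -, hc₂le⟩ := hn.exists_max_ratio (eNorm_isNorm (n := Fin 2))
  set d := c * N₂ (pair v 0) - N₁ (pair v 0) with hd
  have hd0 : 0 < d := sub_pos.2 hlt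
  have hnv : 0 < N₁ (pair v 0) := hn.pos hv
  set ε := d / ((C₁ + c * C₂) * N₁ (pair v 0) + 1) with hε
  have hε0 : 0 < ε := by positivity
  have hεd : (C₁ + c * C₂) * N₁ (pair v 0) * ε < d := by
    have : ε * ((C₁ + c * C₂) * N₁ (pair v 0) + 1) = d := div_mul_cancel₀ _ (by positivity)
    linarith
  obtain ⟨T₁, hT₁0, hT₁⟩ := hasym ε hε0
  obtain ⟨T₂, hT₂0, hT₂⟩ := hasym (1 / (c₁ * c₂)) (by positivity)
  obtain ⟨t, ht, hdet⟩ := hf.exists_det_zero hQ (T := max T₁ T₂) (hT₁0.trans (le_max_left _ _))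
    (fun t ht => by
      have a1 := hT₂ t ((le_max_right _ _).trans ht)
      have a2 := hc₁le (blocks (x t)).2
      have a3 := hc₂le (blocks (x t)).1
      rw [one_div_mul_eq_div, le_div_iff₀ (by positivity)] at a1
      have a4 : eNorm (blocks (x t)).2 ≤ eNorm (blocks (x t)).1 := by
        refine le_of_mul_le_mul_right ?_ hc₂
        have := mul_le_mul_of_nonneg_right a2 hc₂.le
        linarith
      rw [eNorm, eNorm, Real.sqrt_le_sqrt_iff (Finset.sum_nonneg fun i _ => sq_nonneg _),
        Fin.sum_univ_two, Fin.sum_univ_two] at a4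
      exact a4) v
  have ht0 : 0 ≤ t := (hT₁0.trans (le_max_left _ _)).trans ht
  have hz := hT₁ t ((le_max_left _ _).trans ht)
  set y := (blocks (x t)).1 with hy
  set z := (blocks (x t)).2 with hzdef
  have hxt : x t = pair y 0 + pair 0 z := by rw [← pair_eq_add, hy, hzdef, pair_blocks]
  obtain ⟨α, hα⟩ : ∃ α : ℝ, y = α • v := by
    by_cases h0 : v 0 = 0
    · have h1 : v 1 ≠ 0 := fun h1 => hv (by ext i; fin_cases i <;> assumption)
      have hy0 : y 0 = 0 := by
        rw [h0, zero_mul, zero_sub, neg_eq_zero] at hdet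
        exact (mul_eq_zero.1 hdet).resolve_left h1
      refine ⟨y 1 / v 1, ?_⟩
      ext i
      fin_cases i
      · simp [hy0, h0]
      · simp [h1]
    · refine ⟨y 0 / v 0, ?_⟩
      ext i
      fin_cases i
      · simp [h0]
      · change y 1 = y 0 / v 0 * v 1
        field_simp
        linarith
  have hα0 : α ≠ 0 := by
    rintro rfl
    rw [zero_smul] at hα
    have e : pair 0 0 = 0 := by simpa using pair_smul 0 0 0
    rw [hα, e, hN₁.zero, mul_zero] at hz
    have hz0 : z = 0 := (hn.eq_zero_iff z).1 (hz.antisymm (hn.nonneg z))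
    exact hxne t ht0 (by rw [hxt, hα, hz0, e, add_zero])
  have hpy : pair y 0 = α • pair v 0 := by rw [← pair_smul, smul_zero, hα]
  have b1 : N₂ (pair y 0) ≤ N₂ (x t) + N₂ (pair 0 z) := by
    have := hN₂.triangle (x t) (-pair 0 z)
    rwa [hN₂.neg, hxt, add_neg_cancel_right, ← hxt] at this
  have b2 : N₁ (x t) ≤ N₁ (pair y 0) + N₁ (pair 0 z) := by
    rw [hxt]
    exact hN₁.triangle _ _
  have b3 := heq t ht0
  have b4 : N₁ (pair 0 z) ≤ C₁ * N₁ (pair z 0) := hC₁le z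
  have b5 : N₂ (pair 0 z) ≤ C₂ * N₁ (pair z 0) := hC₂le z
  rw [hpy, hN₁.smul] at hz b2
  rw [hpy, hN₂.smul] at b1
  have b6 := mul_le_mul_of_nonneg_left b1 hc.le
  have b7 := mul_le_mul_of_nonneg_left b5 hc.le
  have b8 := mul_le_mul_of_nonneg_left hz (by positivity : 0 ≤ C₁ + c * C₂)
  have b9 : |α| * d ≤ |α| * ((C₁ + c * C₂) * N₁ (pair v 0) * ε) := by
    rw [hd]
    linarith
  have b10 := le_of_mul_le_mul_left b9 (abs_pos.2 hα0)
  linarith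

/-- Uniqueness of the Barabanov norm up to scaling. -/
lemma barabanov_unique {lam : ℝ} (hlam : lam = Lambda planeSys)
    {N₁ N₂ : (Fin 2 × Fin 2 → ℝ) → ℝ} (h₁ : IsBarabanovNorm (tensorSys lam) N₁)
    (h₂ : IsBarabanovNorm (tensorSys lam) N₂) : ∃ c > (0 : ℝ), ∀ v, N₁ v = c * N₂ v := by
  obtain ⟨c, hc, u, hu, hueq, hle⟩ := h₁.1.1.exists_max_ratio h₂.1.1
  obtain ⟨c', hc', u', hu', hueq', hle'⟩ := h₂.1.1.exists_max_ratio h₁.1.1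
  have e1 := eq_on_first_block hlam h₁ h₂.1 hc hle hu hueq ![1, 0]
  have e2 := eq_on_first_block hlam h₂ h₁.1 hc' hle' hu' hueq' ![1, 0]
  have hpos : 0 < N₁ (pair ![1, 0] 0) := h₁.1.1.comp_pair.pos (v := ![1, 0]) fun h => by
    simpa using congrFun h 0
  have hcc : c * c' = 1 := by
    rw [e2, ← mul_assoc] at e1
    exact mul_right_cancel₀ hpos.ne' (by linarith)
  refine ⟨c, hc, fun v => (hle v).antisymm ?_⟩
  have := mul_le_mul_of_nonneg_left (hle' v) hc.le
  rwa [← mul_assoc, hcc, one_mul] at this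

end

theorem stmt_18 (lam : ℝ)
    (hlam : lam = Lambda (convexHull ℝ
      ({!![0, -2; 1/2, 0], !![0, -1/2; 2, 0]} : Set (Matrix (Fin 2) (Fin 2) ℝ))))
    (A₀ A₁ B₀ B₁ : Matrix (Fin 2) (Fin 2) ℝ)
    (hA₀ : A₀ = !![0, 0; 0, -1]) (hA₁ : A₁ = !![-1, 1; -1, -1])
    (hB₀ : B₀ = !![-lam, -2; 1/2, -lam]) (hB₁ : B₁ = !![-lam, -1/2; 2, -lam])
    (X₀ X₁ X₂ : Matrix (Fin 2 × Fin 2) (Fin 2 × Fin 2) ℝ)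
    (hX₀ : X₀ = A₀ ⊗ₖ (1 : Matrix (Fin 2) (Fin 2) ℝ) + (1 : Matrix (Fin 2) (Fin 2) ℝ) ⊗ₖ B₀)
    (hX₁ : X₁ = A₀ ⊗ₖ (1 : Matrix (Fin 2) (Fin 2) ℝ) + (1 : Matrix (Fin 2) (Fin 2) ℝ) ⊗ₖ B₁)
    (hX₂ : X₂ = A₁ ⊗ₖ (1 : Matrix (Fin 2) (Fin 2) ℝ))
    (N₁ N₂ : (Fin 2 × Fin 2 → ℝ) → ℝ)
    (h₁ : IsBarabanovNorm (convexHull ℝ {X₀, X₁, X₂}) N₁)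
    (h₂ : IsBarabanovNorm (convexHull ℝ {X₀, X₁, X₂}) N₂) :
    ∃ c > (0:ℝ), ∀ v : Fin 2 × Fin 2 → ℝ, N₁ v = c * N₂ v := by
  subst hA₀ hA₁ hB₀ hB₁ hX₀ hX₁ hX₂
  exact barabanov_unique hlam h₁ h₂
end
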